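/- Let f : ℝ² → ℝ be a smooth function whose 3-jet at the origin is j³f(0) = y² + x³. Then the asymptotic BDE of f, namely f_yy dy² + 2 f_xy dxdy + f_xx dx² = 0, is smoothly equivalent at 0 to the BDE dy² + x dx² = 0, i.e. the BDE with coefficients (a,b,c) = (1, 0, x). -/

import Mathlib

open Asymptotics Filter Set

noncomputable section

/-- Partial derivative in the first variable (∂/∂x). -/
def pdx (f : ℝ × ℝ → ℝ) (p : ℝ × ℝ) : ℝ := deriv (fun s => f (s, p.2)) p.1

/-- Partial derivative in the second variable (∂/∂y). -/
def pdy (f : ℝ × ℝ → ℝ) (p : ℝ × ℝ) : ℝ := deriv (fun s => f (p.1, s)) p.2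

/-- f_xx -/
def fxx (f : ℝ × ℝ → ℝ) : ℝ × ℝ → ℝ := pdx (pdx f)
/-- f_xy -/
def fxy (f : ℝ × ℝ → ℝ) : ℝ × ℝ → ℝ := pdy (pdx f)
/-- f_yy -/
def fyy (f : ℝ × ℝ → ℝ) : ℝ × ℝ → ℝ := pdy (pdy f)

/-- The discriminant δ = f_xy² − f_xx·f_yy of the asymptotic BDE of `f`. -/
def bdeDiscr (f : ℝ × ℝ → ℝ) : ℝ × ℝ → ℝ := fun p => (fxy f p) ^ 2 - fxx f p * fyy f p

/-- The BDE `a dy² + 2b dxdy + c dx² = 0`, regarded as the family of quadratic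
forms `ω_p(v) = a(p)v₂² + 2b(p)v₁v₂ + c(p)v₁²`. -/
def BDE (a b c : ℝ × ℝ → ℝ) : (ℝ × ℝ) → (ℝ × ℝ) → ℝ :=
  fun p v => a p * v.2 ^ 2 + 2 * b p * v.1 * v.2 + c p * v.1 ^ 2

/-- The asymptotic BDE `f_yy dy² + 2 f_xy dxdy + f_xx dx² = 0` of the surface `z = f(x,y)`. -/
def asymBDE (f : ℝ × ℝ → ℝ) : (ℝ × ℝ) → (ℝ × ℝ) → ℝ := BDE (fyy f) (fxy f) (fxx f)

/-- `j^k f(0) = P` : the degree-k Taylor polynomial of `f` at the origin is `P`,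
i.e. `f − P = o(‖(x,y)‖^k)` as `(x,y) → 0`. -/
def HasJetAt0 (f P : ℝ × ℝ → ℝ) (k : ℕ) : Prop :=
  (fun p => f p - P p) =o[nhds (0 : ℝ × ℝ)] fun p => ‖p‖ ^ k

/-- `γ` is an integral curve of the BDE `ω` on the open interval `I`:
`γ` is C¹ on `I` with nowhere-vanishing derivative annihilating `ω`. -/
def IsIntegralCurveOnBDE (ω : (ℝ × ℝ) → (ℝ × ℝ) → ℝ) (γ : ℝ → ℝ × ℝ) (I : Set ℝ) : Prop :=
  (∃ a b : ℝ, I = Set.Ioo a b) ∧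
  ∃ dγ : ℝ → ℝ × ℝ, ContinuousOn dγ I ∧
    ∀ t ∈ I, HasDerivAt γ (dγ t) t ∧ dγ t ≠ 0 ∧ ω (γ t) (dγ t) = 0

/-- Topological equivalence of two BDEs at the origin: a local homeomorphism
fixing `0` sending integral curves of one to integral curves of the other. -/
def TopEquivAt0 (ω Ω : (ℝ × ℝ) → (ℝ × ℝ) → ℝ) : Prop :=
  ∃ (U V : Set (ℝ × ℝ)) (h hinv : ℝ × ℝ → ℝ × ℝ),
    IsOpen U ∧ IsOpen V ∧ (0 : ℝ × ℝ) ∈ U ∧ (0 : ℝ × ℝ) ∈ V ∧ h 0 = 0 ∧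
    ContinuousOn h U ∧ ContinuousOn hinv V ∧
    Set.BijOn h U V ∧ Set.InvOn hinv h U V ∧
    (∀ γ I, IsIntegralCurveOnBDE ω γ I → Set.MapsTo γ I U →
      ∃ σ J, IsIntegralCurveOnBDE Ω σ J ∧ h '' (γ '' I) = σ '' J) ∧
    (∀ σ J, IsIntegralCurveOnBDE Ω σ J → Set.MapsTo σ J V →
      ∃ γ I, IsIntegralCurveOnBDE ω γ I ∧ hinv '' (σ '' J) = γ '' I)

/-- Smooth equivalence of two BDEs at the origin: a local C^∞ diffeomorphism `h`
fixing `0` pulling one family of quadratic forms back to a nonvanishing multiple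
of the other. -/
def SmoothEquivAt0 (ω Ω : (ℝ × ℝ) → (ℝ × ℝ) → ℝ) : Prop :=
  ∃ (U V : Set (ℝ × ℝ)) (h hinv : ℝ × ℝ → ℝ × ℝ) (ρ : ℝ × ℝ → ℝ),
    IsOpen U ∧ IsOpen V ∧ (0 : ℝ × ℝ) ∈ U ∧ (0 : ℝ × ℝ) ∈ V ∧ h 0 = 0 ∧
    ContDiffOn ℝ (⊤ : ℕ∞) h U ∧ ContDiffOn ℝ (⊤ : ℕ∞) hinv V ∧
    Set.BijOn h U V ∧ Set.InvOn hinv h U V ∧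
    ContDiffOn ℝ (⊤ : ℕ∞) ρ U ∧ (∀ p ∈ U, ρ p ≠ 0) ∧
    (∀ p ∈ U, ∀ v : ℝ × ℝ, Ω (h p) (fderiv ℝ h p v) = ρ p * ω p v)

/-- Fiber topological equivalence at `0` of two 2-parameter families of BDEs:
a homeomorphism `φ` of parameter spaces (onto its image), fixing `0`, such that
corresponding members of the families are topologically equivalent at `0`. -/
def FiberTopEquivAt0 (ω Ω : (ℝ × ℝ) → (ℝ × ℝ) → (ℝ × ℝ) → ℝ) : Prop :=
  ∃ (W : Set (ℝ × ℝ)) (φ ψ : ℝ × ℝ → ℝ × ℝ),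
    W ∈ nhds (0 : ℝ × ℝ) ∧ φ 0 = 0 ∧
    ContinuousOn φ W ∧ ContinuousOn ψ (φ '' W) ∧
    Set.InvOn ψ φ W (φ '' W) ∧
    ∀ q ∈ W, TopEquivAt0 (ω q) (Ω (φ q))

/-!
Since the discriminant has nonzero differential at the origin, it can be taken as the first
coordinate, which brings the equation to the reduced form `(dy + b dx)² + x m² dx² = 0`.

On the hyperbolic side `x < 0`, put `x = -s²`. The two families of integral curves become the
orbits of one smooth field in the `(s, y)`-plane. A first integral of that field is
`G₀(s², y) + s G₁(s², y)` with `G₀` and `G₁` smooth, and these provide the normalizing coordinates.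
They extend smoothly across `x = 0`, so after the change of coordinates `b` and `m - 1` vanish for
`x < 0`, and are therefore flat along `x = 0`.

On the elliptic side `x > 0`, put `(4 / 9) x³ = s²`. Flatness makes the remaining coefficients
smooth in `s² = r`, and the normalizing system becomes a Beltrami equation in the `(s, y)`-plane
whose coefficient vanishes at the origin. After rescaling it is small, and the equation is solved on
the torus by a Neumann series of Fourier coefficients. The solution is split in the same way
into smooth functions of `(r, y)`. For `r < 0` the coefficients vanish and the system is
solved explicitly from the boundary values at `r = 0`. On both sides the system determines all
derivatives along `r = 0` from these boundary values by the same recursion, so the two solutions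
glue to a smooth one.
-/

namespace Cibrario

open Topology ContDiff

/-! ### Partial derivatives in the plane -/

section PartialDerivatives

variable {F : Type*} [NormedAddCommGroup F] [NormedSpace ℝ F] {f g : ℝ × ℝ → F} {p : ℝ × ℝ}

/-- The partial derivative `∂f/∂x`, read off the Fréchet derivative so that it makes sense for
vector-valued functions. -/
def Dx (f : ℝ × ℝ → F) (p : ℝ × ℝ) : F := fderiv ℝ f p (1, 0)

/-- The partial derivative `∂f/∂y`, read off the Fréchet derivative. -/
def Dy (f : ℝ × ℝ → F) (p : ℝ × ℝ) : F := fderiv ℝ f p (0, 1)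

/-- The covector `a dx + b dy`, i.e. the linear map on the plane with values `a`, `b` on the
standard basis. -/
def dxdy (a b : F) : ℝ × ℝ →L[ℝ] F :=
  (ContinuousLinearMap.fst ℝ ℝ ℝ).smulRight a + (ContinuousLinearMap.snd ℝ ℝ ℝ).smulRight b

@[simp] lemma dxdy_apply (a b : F) (v : ℝ × ℝ) : dxdy a b v = v.1 • a + v.2 • b := by
  simp [dxdy]

lemma eq_dxdy (L : ℝ × ℝ →L[ℝ] F) : L = dxdy (L (1, 0)) (L (0, 1)) := by
  ext <;> simp

lemma fderiv_eq_dxdy (f : ℝ × ℝ → F) (p : ℝ × ℝ) : fderiv ℝ f p = dxdy (Dx f p) (Dy f p) :=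
  eq_dxdy _

lemma fderiv_apply_eq (f : ℝ × ℝ → F) (p v : ℝ × ℝ) :
    fderiv ℝ f p v = v.1 • Dx f p + v.2 • Dy f p := by
  rw [fderiv_eq_dxdy, dxdy_apply]

lemma Dx_eq_of_hasFDerivAt {a b : F} (h : HasFDerivAt f (dxdy a b) p) : Dx f p = a := by
  simp [Dx, h.fderiv]

lemma Dy_eq_of_hasFDerivAt {a b : F} (h : HasFDerivAt f (dxdy a b) p) : Dy f p = b := by
  simp [Dy, h.fderiv]

lemma hasFDerivAt_dxdy (hf : ContDiff ℝ ∞ f) (p : ℝ × ℝ) :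
    HasFDerivAt f (dxdy (Dx f p) (Dy f p)) p := by
  rw [← fderiv_eq_dxdy]
  exact (hf.differentiable (by simp) p).hasFDerivAt

@[fun_prop]
lemma contDiff_Dx (hf : ContDiff ℝ ∞ f) : ContDiff ℝ ∞ (Dx f) :=
  (hf.fderiv_right (by simp)).clm_apply contDiff_const

@[fun_prop]
lemma contDiff_Dy (hf : ContDiff ℝ ∞ f) : ContDiff ℝ ∞ (Dy f) :=
  (hf.fderiv_right (by simp)).clm_apply contDiff_const

lemma Dx_congr (h : f =ᶠ[𝓝 p] g) : Dx f p = Dx g p := by simp [Dx, h.fderiv_eq]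

lemma Dy_congr (h : f =ᶠ[𝓝 p] g) : Dy f p = Dy g p := by simp [Dy, h.fderiv_eq]

lemma hasDerivAt_Dx (hf : ContDiff ℝ ∞ f) (x y : ℝ) :
    HasDerivAt (fun s => f (s, y)) (Dx f (x, y)) x := by
  simpa [Function.comp_def] using (hasFDerivAt_dxdy hf (x, y)).comp_hasDerivAt x
    ((hasDerivAt_id x).prodMk (hasDerivAt_const x y))

lemma hasDerivAt_Dy (hf : ContDiff ℝ ∞ f) (x y : ℝ) :
    HasDerivAt (fun s => f (x, s)) (Dy f (x, y)) y := by
  simpa [Function.comp_def] using (hasFDerivAt_dxdy hf (x, y)).comp_hasDerivAt y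
    ((hasDerivAt_const y x).prodMk (hasDerivAt_id y))

lemma Dx_Dy_comm (hf : ContDiff ℝ ∞ f) (p : ℝ × ℝ) : Dx (Dy f) p = Dy (Dx f) p := by
  have hdiff : DifferentiableAt ℝ (fderiv ℝ f) p :=
    (hf.fderiv_right (m := ∞) (by simp)).differentiable (by simp) p
  have hsnd (v w : ℝ × ℝ) :
      fderiv ℝ (fun q => fderiv ℝ f q v) p w = fderiv ℝ (fderiv ℝ f) p w v := by
    rw [fderiv_clm_apply hdiff (differentiableAt_const v)]
    simp
  have hsymm : IsSymmSndFDerivAt ℝ f p := hf.contDiffAt.isSymmSndFDerivAt (by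
    rw [minSmoothness_of_isRCLikeNormedField]
    exact WithTop.coe_le_coe.2 (le_top : (2 : ℕ∞) ≤ ⊤))
  unfold Dx Dy
  rw [hsnd, hsnd]
  exact hsymm _ _

lemma contDiff_dxdy {n : WithTop ℕ∞} {E : Type*} [NormedAddCommGroup E] [NormedSpace ℝ E]
    {a b : E → F} (ha : ContDiff ℝ n a) (hb : ContDiff ℝ n b) :
    ContDiff ℝ n fun p => dxdy (a p) (b p) :=
  (contDiff_const.smulRight ha).add (contDiff_const.smulRight hb)

/-- Smoothness is coinductive: to show that `f` is `C^∞` it suffices to exhibit a class of functions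
containing `f` and closed under partial derivatives. -/
lemma contDiff_of_closed_under_partials (P : (ℝ × ℝ → F) → Prop)
    (hP : ∀ f, P f → ∃ fx fy, P fx ∧ P fy ∧ ∀ p, HasFDerivAt f (dxdy (fx p) (fy p)) p)
    (hf : P f) : ContDiff ℝ ∞ f := by
  rw [contDiff_infty]
  intro n
  induction n generalizing f with
  | zero =>
    obtain ⟨fx, fy, -, -, hderiv⟩ := hP f hf
    exact contDiff_zero.2 (continuous_iff_continuousAt.2 fun p => (hderiv p).continuousAt)
  | succ n ih =>
    obtain ⟨fx, fy, hfx, hfy, hderiv⟩ := hP f hf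
    push_cast
    exact contDiff_succ_iff_hasFDerivAt.2 ⟨_, contDiff_dxdy (ih hfx) (ih hfy), hderiv⟩

end PartialDerivatives

/-! ### Smooth germs and local diffeomorphisms -/

lemma exists_contDiff_eventuallyEq {E F : Type*} [NormedAddCommGroup E] [NormedSpace ℝ E]
    [FiniteDimensional ℝ E] [NormedAddCommGroup F] [NormedSpace ℝ F] {f : E → F} {a : E}
    (hf : ∀ᶠ p in 𝓝 a, ContDiffAt ℝ ∞ f p) : ∃ g : E → F, ContDiff ℝ ∞ g ∧ g =ᶠ[𝓝 a] f := by
  obtain ⟨ε, hε, hball⟩ := Metric.eventually_nhds_iff_ball.1 hf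
  let φ : ContDiffBump a := ⟨ε / 4, ε / 2, by positivity, by linarith⟩
  have hφsupp : tsupport φ ⊆ Metric.ball a ε := by
    rw [φ.tsupport_eq]
    exact Metric.closedBall_subset_ball (half_lt_self hε)
  refine ⟨fun x => φ x • f x, contDiff_iff_contDiffAt.2 fun x => ?_, ?_⟩
  · by_cases hx : x ∈ tsupport φ
    · exact φ.contDiff.contDiffAt.smul (hball x (hφsupp hx))
    · refine contDiffAt_const (c := (0 : F)) |>.congr_of_eventuallyEq ?_
      filter_upwards [notMem_tsupport_iff_eventuallyEq.1 hx] with z hz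
      simp [hz]
  · filter_upwards [φ.eventuallyEq_one] with x hx
    simp [hx]

lemma det_dxdy_prod (a b c d : ℝ) : ((dxdy a b).prod (dxdy c d)).det = a * d - b * c := by
  rw [ContinuousLinearMap.det, ← LinearMap.det_toMatrix (Module.Basis.finTwoProd ℝ),
    Matrix.det_fin_two]
  simp [LinearMap.toMatrix_apply]

lemma det_fderiv_eq {h : ℝ × ℝ → ℝ × ℝ} (p : ℝ × ℝ) :
    (fderiv ℝ h p).det = (Dx h p).1 * (Dy h p).2 - (Dy h p).1 * (Dx h p).2 := by
  have hprod : fderiv ℝ h p =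
      (dxdy (Dx h p).1 (Dy h p).1).prod (dxdy (Dx h p).2 (Dy h p).2) := by
    rw [fderiv_eq_dxdy]
    ext <;> simp
  rw [hprod, det_dxdy_prod]

lemma det_comp (L M : ℝ × ℝ →L[ℝ] ℝ × ℝ) : (L.comp M).det = L.det * M.det := by
  simp only [ContinuousLinearMap.det, ContinuousLinearMap.toLinearMap_comp, LinearMap.det_comp]

/-- A globally defined smooth map of the plane whose germ at the origin is a diffeomorphism fixing
the origin. -/
structure IsLocalDiffeo (h : ℝ × ℝ → ℝ × ℝ) : Prop where
  contDiff : ContDiff ℝ ∞ h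
  map_zero : h 0 = 0
  det_ne_zero : (fderiv ℝ h 0).det ≠ 0

namespace IsLocalDiffeo

variable {g h : ℝ × ℝ → ℝ × ℝ}

lemma tendsto_zero (hh : IsLocalDiffeo h) : Tendsto h (𝓝 0) (𝓝 0) :=
  hh.contDiff.continuous.tendsto' 0 0 hh.map_zero

lemma comp (hg : IsLocalDiffeo g) (hh : IsLocalDiffeo h) : IsLocalDiffeo (g ∘ h) where
  contDiff := hg.contDiff.comp hh.contDiff
  map_zero := by simp [hh.map_zero, hg.map_zero]
  det_ne_zero := by
    rw [fderiv_comp 0 (hg.contDiff.differentiable (by simp) _)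
      (hh.contDiff.differentiable (by simp) _), det_comp, hh.map_zero]
    exact mul_ne_zero hg.det_ne_zero hh.det_ne_zero

lemma exists_openPartialHomeomorph (hh : IsLocalDiffeo h) :
    ∃ e : OpenPartialHomeomorph (ℝ × ℝ) (ℝ × ℝ), ⇑e = h ∧ 0 ∈ e.source ∧
      ContDiffOn ℝ ∞ e.symm e.target := by
  let h' := (fderiv ℝ h 0).toContinuousLinearEquivOfDetNeZero hh.det_ne_zero
  have hderiv : HasFDerivAt h (h' : ℝ × ℝ →L[ℝ] ℝ × ℝ) 0 := by
    simpa [h'] using (hh.contDiff.differentiable (by simp) 0).hasFDerivAt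
  let e₀ := hh.contDiff.contDiffAt.toOpenPartialHomeomorph h hderiv (by simp)
  let s : Set (ℝ × ℝ) := fderiv ℝ h ⁻¹' range ((↑) : ((ℝ × ℝ) ≃L[ℝ] ℝ × ℝ) → _)
  have hs : IsOpen s :=
    ContinuousLinearEquiv.isOpen.preimage (hh.contDiff.continuous_fderiv (by simp))
  refine ⟨e₀.restrOpen s hs, rfl, ?_, fun y hy => ?_⟩
  · rw [OpenPartialHomeomorph.restrOpen_source]
    exact ⟨hh.contDiff.contDiffAt.mem_toOpenPartialHomeomorph_source hderiv (by simp),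
      h', hderiv.fderiv.symm⟩
  · obtain ⟨g', hg'⟩ := ((e₀.restrOpen s hs).map_target hy).2
    refine ((e₀.restrOpen s hs).contDiffAt_symm (f₀' := g') hy ?_
      hh.contDiff.contDiffAt).contDiffWithinAt
    rw [hg']
    exact (hh.contDiff.differentiable (by simp) _).hasFDerivAt

lemma fderiv_comp_eq_id_of_leftInverse (hg : ContDiff ℝ ∞ g) (hh : ContDiff ℝ ∞ h) {p : ℝ × ℝ}
    (hgh : ∀ᶠ q in 𝓝 p, g (h q) = q) :
    (fderiv ℝ g (h p)).comp (fderiv ℝ h p) = ContinuousLinearMap.id ℝ (ℝ × ℝ) := by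
  rw [← fderiv_comp p (hg.differentiable (by simp) _) (hh.differentiable (by simp) _)]
  exact ((hasFDerivAt_id p).congr_of_eventuallyEq hgh).fderiv

lemma exists_inverse (hh : IsLocalDiffeo h) :
    ∃ g, IsLocalDiffeo g ∧ (∀ᶠ p in 𝓝 0, g (h p) = p) ∧ ∀ᶠ p in 𝓝 0, h (g p) = p := by
  obtain ⟨e, rfl, hsource, hsymm⟩ := hh.exists_openPartialHomeomorph
  have htarget : (0 : ℝ × ℝ) ∈ e.target := hh.map_zero ▸ e.map_source hsource
  have hsymm_zero : e.symm 0 = 0 := by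
    simpa only [hh.map_zero] using e.left_inv hsource
  obtain ⟨g, hg, hge⟩ := exists_contDiff_eventuallyEq (a := 0) (f := e.symm) <| by
    filter_upwards [e.open_target.mem_nhds htarget] with p hp
    exact hsymm.contDiffAt (e.open_target.mem_nhds hp)
  have hgh : ∀ᶠ p in 𝓝 0, g (e p) = p := by
    filter_upwards [hh.tendsto_zero.eventually hge, e.open_source.mem_nhds hsource] with p hp hps
    rw [hp, e.left_inv hps]
  refine ⟨g, ⟨hg, by rw [hge.self_of_nhds, hsymm_zero], fun hdet => ?_⟩, hgh, ?_⟩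
  · have hid := congrArg ContinuousLinearMap.det
      (fderiv_comp_eq_id_of_leftInverse hg hh.contDiff hgh)
    rw [det_comp, hh.map_zero, hdet, zero_mul] at hid
    simp [ContinuousLinearMap.det] at hid
  · filter_upwards [hge, e.open_target.mem_nhds htarget] with p hp hpt
    rw [hp, e.right_inv hpt]

end IsLocalDiffeo

/-! ### Germ equivalence of binary differential equations -/

/-- At the point `p`, the map `h` pulls the family of quadratic forms `ω₂` back to `ρ` times
`ω₁`. -/
def PullsBackAt (h : ℝ × ℝ → ℝ × ℝ) (ρ : ℝ × ℝ → ℝ) (ω₁ ω₂ : ℝ × ℝ → ℝ × ℝ → ℝ)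
    (p : ℝ × ℝ) : Prop :=
  ∀ v, ω₂ (h p) (fderiv ℝ h p v) = ρ p * ω₁ p v

/-- Smooth equivalence at the origin, phrased with globally defined smooth data whose relations
hold near the origin; it is easier to compose than `SmoothEquivAt0`. -/
def GermEquiv (ω₁ ω₂ : ℝ × ℝ → ℝ × ℝ → ℝ) : Prop :=
  ∃ h ρ, IsLocalDiffeo h ∧ ContDiff ℝ ∞ ρ ∧ ρ 0 ≠ 0 ∧ ∀ᶠ p in 𝓝 0, PullsBackAt h ρ ω₁ ω₂ p

lemma GermEquiv.trans {ω₁ ω₂ ω₃ : ℝ × ℝ → ℝ × ℝ → ℝ} (h₁₂ : GermEquiv ω₁ ω₂)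
    (h₂₃ : GermEquiv ω₂ ω₃) : GermEquiv ω₁ ω₃ := by
  obtain ⟨h, ρ, hh, hρ, hρ0, hpull⟩ := h₁₂
  obtain ⟨k, σ, hk, hσ, hσ0, hpull'⟩ := h₂₃
  refine ⟨k ∘ h, fun p => σ (h p) * ρ p, hk.comp hh, (hσ.comp hh.contDiff).mul hρ,
    by simp [hh.map_zero, hρ0, hσ0], ?_⟩
  filter_upwards [hpull, hh.tendsto_zero.eventually hpull'] with p hp hp' v
  rw [fderiv_comp p (hk.contDiff.differentiable (by simp) _)
    (hh.contDiff.differentiable (by simp) _), Function.comp_apply,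
    ContinuousLinearMap.comp_apply, hp', hp, mul_assoc]

lemma GermEquiv.smoothEquivAt0 {ω₁ ω₂ : ℝ × ℝ → ℝ × ℝ → ℝ} (h : GermEquiv ω₁ ω₂) :
    SmoothEquivAt0 ω₁ ω₂ := by
  obtain ⟨h, ρ, hh, hρ, hρ0, hpull⟩ := h
  obtain ⟨e, rfl, hsource, hsymm⟩ := hh.exists_openPartialHomeomorph
  obtain ⟨U, hU, hUopen, hU0⟩ := eventually_nhds_iff.1 ((e.open_source.eventually_mem hsource).and
    ((hρ.continuous.continuousAt.eventually_ne hρ0).and hpull))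
  have hUs : U ⊆ e.source := fun p hp => (hU p hp).1
  have hbij : BijOn e U (e '' U) := (e.injOn.mono hUs).bijOn_image
  have hleft : LeftInvOn e.symm e U := fun p hp => e.left_inv (hUs hp)
  refine ⟨U, e '' U, e, e.symm, ρ, hUopen, e.isOpen_image_of_subset_source hUopen hUs, hU0,
    ⟨0, hU0, hh.map_zero⟩, hh.map_zero, hh.contDiff.contDiffOn, hsymm.mono ?_, hbij,
    ⟨hleft, hleft.rightInvOn_image⟩, hρ.contDiffOn, fun p hp => (hU p hp).2.1,
    fun p hp => (hU p hp).2.2⟩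
  rintro _ ⟨p, hp, rfl⟩
  exact e.map_source (hUs hp)

/-! ### Reduced forms -/

/-- The polar form of `BDE a b c`. -/
def polarBDE (a b c : ℝ × ℝ → ℝ) (p v w : ℝ × ℝ) : ℝ :=
  a p * (v.2 * w.2) + b p * (v.1 * w.2 + v.2 * w.1) + c p * (v.1 * w.1)

lemma BDE_smul_add_smul (a b c : ℝ × ℝ → ℝ) (p v w : ℝ × ℝ) (s t : ℝ) :
    BDE a b c p (s • v + t • w) =
      BDE a b c p w * t ^ 2 + 2 * polarBDE a b c p v w * s * t + BDE a b c p v * s ^ 2 := by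
  simp only [BDE, polarBDE, Prod.fst_add, Prod.snd_add, Prod.smul_fst, Prod.smul_snd, smul_eq_mul]
  ring

lemma gram_det_BDE (a b c : ℝ × ℝ → ℝ) (p v w : ℝ × ℝ) :
    BDE a b c p w * BDE a b c p v - polarBDE a b c p v w ^ 2 =
      (a p * c p - b p ^ 2) * (v.1 * w.2 - w.1 * v.2) ^ 2 := by
  simp only [BDE, polarBDE]
  ring

/-- The binary form `(dy + b dx)² + x m² dx²`. -/
def reducedForm (b m : ℝ × ℝ → ℝ) (p v : ℝ × ℝ) : ℝ :=
  (v.2 + b p * v.1) ^ 2 + p.1 * m p ^ 2 * v.1 ^ 2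

lemma reducedForm_eq_BDE (b m : ℝ × ℝ → ℝ) :
    reducedForm b m = BDE (fun _ => 1) b (fun p => b p ^ 2 + p.1 * m p ^ 2) := by
  ext p v
  simp only [reducedForm, BDE]
  ring

lemma reducedForm_zero_one :
    reducedForm (fun _ => 0) (fun _ => 1) = BDE (fun _ => 1) (fun _ => 0) (fun p => p.1) := by
  simp [reducedForm_eq_BDE]

lemma eq_of_reducedForm_proportional {b m b' m' : ℝ × ℝ → ℝ} {p : ℝ × ℝ} {r r' : ℝ}
    (hp : p.1 ≠ 0) (hm : 0 < m p) (hm' : 0 < m' p) (hr : r ≠ 0)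
    (h : ∀ v, r' * reducedForm b m p v = r * reducedForm b' m' p v) :
    b' p = b p ∧ m' p = m p := by
  have hrr : r' = r := by simpa [reducedForm] using h (0, 1)
  subst hrr
  have hform (v : ℝ × ℝ) : reducedForm b m p v = reducedForm b' m' p v := mul_left_cancel₀ hr (h v)
  have hplus := hform (1, 1)
  have hminus := hform (1, -1)
  simp only [reducedForm] at hplus hminus
  have hb : b' p = b p := by linarith
  have hsq : m' p ^ 2 = m p ^ 2 := mul_left_cancel₀ hp (by rw [hb] at hplus; linarith)
  exact ⟨hb, (sq_eq_sq₀ hm'.le hm.le).1 hsq⟩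

lemma exists_reducedForm_of_discriminant {a b c k : ℝ × ℝ → ℝ} (ha : ContDiff ℝ ∞ a)
    (hb : ContDiff ℝ ∞ b) (hk : ContDiff ℝ ∞ k) (ha0 : 0 < a 0) (hk0 : k 0 ≠ 0)
    (hdisc : ∀ᶠ p in 𝓝 (0 : ℝ × ℝ), a p * c p - b p ^ 2 = p.1 * k p ^ 2) :
    ∃ b' m ρ : ℝ × ℝ → ℝ, ContDiff ℝ ∞ b' ∧ ContDiff ℝ ∞ m ∧ ContDiff ℝ ∞ ρ ∧ 0 < m 0 ∧ ρ 0 ≠ 0 ∧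
      ∀ᶠ p in 𝓝 0, ∀ v, reducedForm b' m p v = ρ p * BDE a b c p v := by
  wlog hkpos : 0 < k 0 generalizing k
  · exact this hk.neg (by simpa using hk0) (by simpa using hdisc)
      (neg_pos.2 (hk0.lt_of_le (not_lt.1 hkpos)))
  have hane : ∀ᶠ p in 𝓝 0, a p ≠ 0 := ha.continuous.continuousAt.eventually_ne ha0.ne'
  have hquot {f : ℝ × ℝ → ℝ} (hf : ContDiff ℝ ∞ f) :
      ∃ g, ContDiff ℝ ∞ g ∧ g =ᶠ[𝓝 0] fun p => f p / a p :=
    exists_contDiff_eventuallyEq (hane.mono fun p hp => hf.contDiffAt.div ha.contDiffAt hp)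
  obtain ⟨b', hb', hb'eq⟩ := hquot hb
  obtain ⟨m, hm, hmeq⟩ := hquot hk
  obtain ⟨ρ, hρ, hρeq⟩ := hquot (contDiff_const (c := 1))
  refine ⟨b', m, ρ, hb', hm, hρ, ?_, ?_, ?_⟩
  · rw [hmeq.self_of_nhds]
    exact div_pos hkpos ha0
  · rw [hρeq.self_of_nhds]
    exact one_div_ne_zero ha0.ne'
  · filter_upwards [hb'eq, hmeq, hρeq, hane, hdisc] with p hpb hpm hpρ hpa hpd v
    rw [reducedForm, BDE, hpb, hpm, hpρ]
    field_simp
    linear_combination (-v.1 ^ 2) * hpd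

lemma exists_pullsBackAt_reducedForm {a b c k : ℝ × ℝ → ℝ} {h : ℝ × ℝ → ℝ × ℝ}
    (ha : ContDiff ℝ ∞ a) (hb : ContDiff ℝ ∞ b) (hc : ContDiff ℝ ∞ c) (hk : ContDiff ℝ ∞ k)
    (hh : IsLocalDiffeo h) (hk0 : k 0 ≠ 0)
    (hdisc : ∀ᶠ p in 𝓝 0, a p * c p - b p ^ 2 = (h p).1 * k p ^ 2)
    (hpos : ∀ v, v ≠ 0 → (fderiv ℝ h 0 v).1 = 0 → 0 < BDE a b c 0 v) :
    ∃ b' m ρ : ℝ × ℝ → ℝ, ContDiff ℝ ∞ b' ∧ ContDiff ℝ ∞ m ∧ ContDiff ℝ ∞ ρ ∧ 0 < m 0 ∧ ρ 0 ≠ 0 ∧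
      ∀ᶠ p in 𝓝 0, PullsBackAt h ρ (BDE a b c) (reducedForm b' m) p := by
  obtain ⟨g, hg, hgh, hhg⟩ := hh.exists_inverse
  have hg_smooth := hg.contDiff
  let A q := BDE a b c (g q) (Dy g q)
  let B q := polarBDE a b c (g q) (Dx g q) (Dy g q)
  let C q := BDE a b c (g q) (Dx g q)
  let J q := (Dx g q).1 * (Dy g q).2 - (Dy g q).1 * (Dx g q).2
  have hA : ContDiff ℝ ∞ A := by simp only [A, BDE]; fun_prop
  have hB : ContDiff ℝ ∞ B := by simp only [B, polarBDE]; fun_prop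
  have hJ : ContDiff ℝ ∞ J := by simp only [J]; fun_prop
  have hJ0 : J 0 ≠ 0 := by simpa only [J, det_fderiv_eq] using hg.det_ne_zero
  have hform (q w : ℝ × ℝ) : BDE A B C q w = BDE a b c (g q) (fderiv ℝ g q w) := by
    rw [fderiv_apply_eq, BDE_smul_add_smul, BDE]
  have hA0 : 0 < A 0 := by
    have hDh : fderiv ℝ h 0 (Dy g 0) = (0, 1) := by
      simpa [hg.map_zero, Dy] using DFunLike.congr_fun
        (IsLocalDiffeo.fderiv_comp_eq_id_of_leftInverse hh.contDiff hg_smooth hhg) (0, 1)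
    simp only [A, hg.map_zero]
    refine hpos _ (fun h0 => ?_) (by rw [hDh])
    simp [h0, Prod.ext_iff] at hDh
  obtain ⟨b', m, r, hb', hm, hr, hm0, hr0, hred⟩ := exists_reducedForm_of_discriminant hA hB
    (c := C) (k := fun q => J q * k (g q)) (by fun_prop) hA0 (by simp [hg.map_zero, hJ0, hk0]) <| by
      filter_upwards [hg.tendsto_zero.eventually hdisc, hhg] with q hq hq'
      rw [gram_det_BDE, hq, hq']
      ring
  refine ⟨b', m, fun p => r (h p), hb', hm, hr.comp hh.contDiff, hm0, by simpa [hh.map_zero], ?_⟩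
  filter_upwards [hh.tendsto_zero.eventually hred, hgh.eventually_nhds] with p hp hgp v
  have hDg : fderiv ℝ g (h p) (fderiv ℝ h p v) = v := DFunLike.congr_fun
    (IsLocalDiffeo.fderiv_comp_eq_id_of_leftInverse hg_smooth hh.contDiff hgp) v
  rw [hp, hform, hDg, hgp.self_of_nhds]

/-! ### The first-order system of normalising coordinates -/

/-- The system satisfied by `Y` and `Z` at `p` when `(x, y) ↦ (x Z^(2/3), Y)` pulls
`dy² + x dx²` back to a multiple of `(dy + b dx)² + x m² dx²`. Where `x < 0`, it says that
`Y ± (2/3) (-x)^(3/2) Z` are first integrals of the two direction fields of the latter form. -/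
def NormalizingSystem (b m Y Z : ℝ × ℝ → ℝ) (p : ℝ × ℝ) : Prop :=
  Dx Y p = b p * Dy Y p - p.1 * m p * (2 / 3 * p.1 * Dy Z p) ∧
  Z p + 2 / 3 * p.1 * Dx Z p = m p * Dy Y p + b p * (2 / 3 * p.1 * Dy Z p)

lemma exists_cube_root {Z : ℝ × ℝ → ℝ} (hZ : ContDiff ℝ ∞ Z) (hZ0 : 0 < Z 0) :
    ∃ u : ℝ × ℝ → ℝ, ContDiff ℝ ∞ u ∧ 0 < u 0 ∧ ∀ᶠ p in 𝓝 0, u p ^ 3 = Z p := by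
  have hZpos : ∀ᶠ q in 𝓝 0, 0 < Z q := hZ.continuous.continuousAt.eventually (lt_mem_nhds hZ0)
  obtain ⟨u, hu, hueq⟩ := exists_contDiff_eventuallyEq (f := fun q => Z q ^ (1 / 3 : ℝ)) (a := 0)
    (hZpos.mono fun q hq => hZ.contDiffAt.rpow_const_of_ne hq.ne')
  refine ⟨u, hu, by rw [hueq.self_of_nhds]; positivity, ?_⟩
  filter_upwards [hueq, hZpos] with q hq hpos
  rw [hq, ← Real.rpow_natCast, ← Real.rpow_mul hpos.le]
  norm_num

/-- The change of coordinates `(x, y) ↦ (x u², Y)`. -/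
def normalizingMap (u Y : ℝ × ℝ → ℝ) (p : ℝ × ℝ) : ℝ × ℝ := (p.1 * u p ^ 2, Y p)

section NormalizingMap

variable {u Y : ℝ × ℝ → ℝ}

lemma hasFDerivAt_normalizingMap (hu : ContDiff ℝ ∞ u) (hY : ContDiff ℝ ∞ Y) (p : ℝ × ℝ) :
    HasFDerivAt (normalizingMap u Y)
      ((dxdy (u p ^ 2 + p.1 * (2 * u p * Dx u p)) (p.1 * (2 * u p * Dy u p))).prod
        (dxdy (Dx Y p) (Dy Y p))) p := by
  refine HasFDerivAt.prodMk ?_ (hasFDerivAt_dxdy hY p)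
  refine (hasFDerivAt_fst.mul ((hasFDerivAt_dxdy hu p).pow 2)).congr_fderiv ?_
  ext
  · simp
    ring
  · simp [mul_assoc]

lemma isLocalDiffeo_normalizingMap (hu : ContDiff ℝ ∞ u) (hY : ContDiff ℝ ∞ Y) (hu0 : u 0 ≠ 0)
    (hY0 : Y 0 = 0) (hYy : Dy Y 0 ≠ 0) : IsLocalDiffeo (normalizingMap u Y) where
  contDiff := by unfold normalizingMap; fun_prop
  map_zero := by simp [normalizingMap, hY0]
  det_ne_zero := by
    rw [(hasFDerivAt_normalizingMap hu hY 0).fderiv, det_dxdy_prod]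
    simp [hu0, hYy]

lemma pullsBackAt_normalizingMap {b m Z : ℝ × ℝ → ℝ} {p : ℝ × ℝ} (hu : ContDiff ℝ ∞ u)
    (hY : ContDiff ℝ ∞ Y) (huZ : ∀ᶠ q in 𝓝 p, u q ^ 3 = Z q) (hsys : NormalizingSystem b m Y Z p) :
    PullsBackAt (normalizingMap u Y) (fun p => Dy Y p ^ 2 + p.1 * (2 / 3 * p.1 * Dy Z p) ^ 2)
      (reducedForm b m) (reducedForm (fun _ => 0) (fun _ => 1)) p := by
  have hZ : HasFDerivAt Z (dxdy (3 * u p ^ 2 * Dx u p) (3 * u p ^ 2 * Dy u p)) p := by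
    refine (((hasFDerivAt_dxdy hu p).pow 3).congr_of_eventuallyEq
      (huZ.mono fun q hq => hq.symm)).congr_fderiv ?_
    ext <;> simp [mul_assoc]
  have hZx := Dx_eq_of_hasFDerivAt hZ
  have hZy := Dy_eq_of_hasFDerivAt hZ
  obtain ⟨hsysY, hsysZ⟩ := hsys
  have hX : u p * (u p ^ 2 + p.1 * (2 * u p * Dx u p)) =
      m p * Dy Y p + b p * (2 / 3 * p.1 * Dy Z p) := by
    rw [← hsysZ, hZx, ← huZ.self_of_nhds]
    ring
  have hXy : u p * (p.1 * (2 * u p * Dy u p)) = 2 / 3 * p.1 * Dy Z p := by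
    rw [hZy]
    ring
  intro v
  rw [(hasFDerivAt_normalizingMap hu hY p).fderiv]
  simp only [reducedForm, normalizingMap, ContinuousLinearMap.prod_apply, dxdy_apply, smul_eq_mul]
  set Q := 2 / 3 * p.1 * Dy Z p
  calc _ = (v.1 * Dx Y p + v.2 * Dy Y p) ^ 2 + p.1 *
        (v.1 * (u p * (u p ^ 2 + p.1 * (2 * u p * Dx u p))) +
          v.2 * (u p * (p.1 * (2 * u p * Dy u p)))) ^ 2 := by ring
    _ = _ := by
      rw [hX, hXy, hsysY]
      ring

end NormalizingMap

/-! ### Flows of planar fields -/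

section Primitive

variable {f fy : ℝ × ℝ → ℝ}

lemma hasFDerivAt_of_partials {fx : ℝ × ℝ → ℝ} (hfx : Continuous fx) (hfy : Continuous fy)
    (hx : ∀ x y, HasDerivAt (fun s => f (s, y)) (fx (x, y)) x)
    (hy : ∀ x y, HasDerivAt (fun t => f (x, t)) (fy (x, y)) y) (p : ℝ × ℝ) :
    HasFDerivAt f (dxdy (fx p) (fy p)) p := by
  have hcont {g : ℝ × ℝ → ℝ} (hg : Continuous g) :
      Continuous fun q => ContinuousLinearMap.toSpanSingleton ℝ (g q) :=
    (ContinuousLinearMap.toSpanSingletonCLE (𝕜 := ℝ)).continuous.comp hg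
  have h := hasStrictFDerivAt_uncurry_coprod (𝕜 := ℝ) (u := p) (f := fun x y => f (x, y))
    (f₁ := fun x y => ContinuousLinearMap.toSpanSingleton ℝ (fx (x, y)))
    (f₂ := fun x y => ContinuousLinearMap.toSpanSingleton ℝ (fy (x, y)))
    (.of_forall fun q => hx q.1 q.2) (.of_forall fun q => hy q.1 q.2)
    (hcont hfx).continuousAt (hcont hfy).continuousAt
  exact h.hasFDerivAt.congr_fderiv (by ext <;> simp [Function.HasUncurry.uncurry])

lemma continuous_primitive (hf : Continuous f) :
    Continuous fun p : ℝ × ℝ => ∫ t in (0 : ℝ)..p.1, f (t, p.2) := by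
  fun_prop

lemma hasDerivAt_integral_param (hf : Continuous f) (hfy : Continuous fy)
    (hy : ∀ x y, HasDerivAt (fun t => f (x, t)) (fy (x, y)) y) (x y : ℝ) :
    HasDerivAt (fun y => ∫ t in (0 : ℝ)..x, f (t, y)) (∫ t in (0 : ℝ)..x, fy (t, y)) y := by
  obtain ⟨C, hC⟩ := ((isCompact_uIcc (a := (0 : ℝ)) (b := x)).prod
    (isCompact_closedBall y 1)).exists_bound_of_continuousOn hfy.continuousOn
  refine (intervalIntegral.hasDerivAt_integral_of_dominated_loc_of_deriv_le (bound := fun _ => C)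
    (F := fun y t => f (t, y)) (F' := fun y t => fy (t, y))
    (Metric.ball_mem_nhds y one_pos) (.of_forall fun z => ?_) ?_ ?_ ?_ ?_ ?_).2
  · exact (show Continuous fun t => f (t, z) by fun_prop).aestronglyMeasurable
  · exact (show Continuous fun t => f (t, y) by fun_prop).intervalIntegrable _ _
  · exact (show Continuous fun t => fy (t, y) by fun_prop).aestronglyMeasurable
  · exact .of_forall fun t ht z hz =>
      hC (t, z) ⟨uIoc_subset_uIcc ht, Metric.ball_subset_closedBall hz⟩
  · exact intervalIntegrable_const
  · exact .of_forall fun t _ z _ => hy t z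

lemma hasFDerivAt_primitive (hf : Continuous f) (hfy : Continuous fy)
    (hy : ∀ x y, HasDerivAt (fun t => f (x, t)) (fy (x, y)) y) (p : ℝ × ℝ) :
    HasFDerivAt (fun p : ℝ × ℝ => ∫ t in (0 : ℝ)..p.1, f (t, p.2))
      (dxdy (f p) (∫ t in (0 : ℝ)..p.1, fy (t, p.2))) p := by
  refine hasFDerivAt_of_partials hf (continuous_primitive hfy) (fun x y => ?_)
    (hasDerivAt_integral_param hf hfy hy) p
  exact (show Continuous fun t => f (t, y) by fun_prop).integral_hasStrictDerivAt 0 x |>.hasDerivAt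

lemma hasDerivAt_y_of_hasFDerivAt {fx : ℝ × ℝ → ℝ}
    (h : ∀ p, HasFDerivAt f (dxdy (fx p) (fy p)) p) (x y : ℝ) :
    HasDerivAt (fun t => f (x, t)) (fy (x, y)) y := by
  simpa [Function.comp_def] using
    (h (x, y)).comp_hasDerivAt y ((hasDerivAt_const y x).prodMk (hasDerivAt_id y))

end Primitive

lemma eq_mul_exp_of_hasDerivAt {u k : ℝ → ℝ} (hk : Continuous k)
    (hu : ∀ s, HasDerivAt u (k s * u s) s) (s : ℝ) :
    u s = u 0 * Real.exp (∫ t in (0 : ℝ)..s, k t) := by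
  have hprim (t : ℝ) : HasDerivAt (fun s => ∫ τ in (0 : ℝ)..s, k τ) (k t) t :=
    (hk.integral_hasStrictDerivAt 0 t).hasDerivAt
  have hconst : u s * Real.exp (-∫ t in (0 : ℝ)..s, k t) = u 0 := by
    have hderiv (t : ℝ) :
        HasDerivAt (fun s => u s * Real.exp (-∫ τ in (0 : ℝ)..s, k τ)) 0 t :=
      ((hu t).mul (hprim t).neg.exp).congr_deriv (by ring)
    simpa using is_const_of_deriv_eq_zero (fun t => (hderiv t).differentiableAt)
      (fun t => (hderiv t).deriv) s 0
  rw [← hconst, mul_assoc, ← Real.exp_add]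
  simp

/-- `φ (s, y)` is the value at time `s` of the integral curve of the time-dependent field `B` that
starts at `y` at time `0`. -/
structure IsFlow (B φ : ℝ × ℝ → ℝ) : Prop where
  initial : ∀ y, φ (0, y) = y
  hasDerivAt : ∀ s y, HasDerivAt (fun t => φ (t, y)) (B (s, φ (s, y))) s

/-- The mean value of `∂B/∂y (t, ·)` over the segment from `a` to `b`, which is the slope of the
chord of `B (t, ·)` and, unlike the difference quotient, is visibly continuous up to `a = b`. -/
def chordSlope (B : ℝ × ℝ → ℝ) (t a b : ℝ) : ℝ :=
  ∫ θ in (0 : ℝ)..1, Dy B (t, a + θ * (b - a))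

section ChordSlope

variable {B : ℝ × ℝ → ℝ}

lemma chordSlope_self (t a : ℝ) : chordSlope B t a a = Dy B (t, a) := by simp [chordSlope]

lemma sub_eq_chordSlope_mul (hB : ContDiff ℝ ∞ B) (t a b : ℝ) :
    B (t, b) - B (t, a) = chordSlope B t a b * (b - a) := by
  have hderiv (θ : ℝ) : HasDerivAt (fun θ => B (t, a + θ * (b - a)))
      (Dy B (t, a + θ * (b - a)) * (b - a)) θ := by
    have hline : HasDerivAt (fun θ : ℝ => a + θ * (b - a)) (b - a) θ := by
      simpa using ((hasDerivAt_id θ).mul_const (b - a)).const_add a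
    exact (hasDerivAt_Dy hB t _).comp θ hline
  have hcont : Continuous fun θ => Dy B (t, a + θ * (b - a)) * (b - a) := by
    have := (contDiff_Dy hB).continuous
    fun_prop
  have h := intervalIntegral.integral_eq_sub_of_hasDerivAt (fun θ _ => hderiv θ)
    (hcont.intervalIntegrable 0 1)
  rw [intervalIntegral.integral_mul_const] at h
  simpa [chordSlope] using h.symm

lemma continuous_chordSlope {X : Type*} [TopologicalSpace X] (hB : ContDiff ℝ ∞ B) {t a b : X → ℝ}
    (ht : Continuous t) (ha : Continuous a) (hb : Continuous b) :
    Continuous fun x => chordSlope B (t x) (a x) (b x) := by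
  have := (contDiff_Dy hB).continuous
  unfold chordSlope
  fun_prop

lemma abs_chordSlope_le {L : ℝ} (hL : ∀ p, |Dy B p| ≤ L) (t a b : ℝ) :
    |chordSlope B t a b| ≤ L := by
  simpa [chordSlope] using intervalIntegral.norm_integral_le_of_norm_le_const
    (a := (0 : ℝ)) (b := 1) (f := fun θ => Dy B (t, a + θ * (b - a))) (fun θ _ => hL _)

end ChordSlope

namespace IsFlow

variable {B φ : ℝ × ℝ → ℝ}

lemma continuous_left (hφ : IsFlow B φ) (y : ℝ) : Continuous fun s => φ (s, y) :=
  continuous_iff_continuousAt.2 fun s => (hφ.hasDerivAt s y).continuousAt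

lemma sub_eq (hB : ContDiff ℝ ∞ B) (hφ : IsFlow B φ) (s y₁ y₂ : ℝ) :
    φ (s, y₂) - φ (s, y₁) =
      (y₂ - y₁) * Real.exp (∫ t in (0 : ℝ)..s, chordSlope B t (φ (t, y₁)) (φ (t, y₂))) := by
  have h := eq_mul_exp_of_hasDerivAt (u := fun s => φ (s, y₂) - φ (s, y₁))
    (continuous_chordSlope hB continuous_id (hφ.continuous_left y₁) (hφ.continuous_left y₂))
    (fun t => ((hφ.hasDerivAt t y₂).sub (hφ.hasDerivAt t y₁)).congr_deriv
      (sub_eq_chordSlope_mul hB t _ _)) s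
  simpa [hφ.initial] using h

lemma lipschitzWith_right {L : NNReal} (hB : ContDiff ℝ ∞ B) (hL : ∀ p, |Dy B p| ≤ L)
    (hφ : IsFlow B φ) {s R : ℝ} (hs : |s| ≤ R) :
    LipschitzWith (Real.exp (L * R)).toNNReal fun y => φ (s, y) := by
  refine LipschitzWith.of_dist_le_mul fun y₂ y₁ => ?_
  have hint : ∫ t in (0 : ℝ)..s, chordSlope B t (φ (t, y₁)) (φ (t, y₂)) ≤ L * R :=
    calc _ ≤ ‖∫ t in (0 : ℝ)..s, chordSlope B t (φ (t, y₁)) (φ (t, y₂))‖ := le_abs_self _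
      _ ≤ L * |s - 0| := intervalIntegral.norm_integral_le_of_norm_le_const
          fun t _ => abs_chordSlope_le hL _ _ _
      _ ≤ L * R := by rw [sub_zero]; gcongr
  rw [Real.dist_eq, hφ.sub_eq hB, abs_mul, Real.abs_exp, Real.coe_toNNReal _ (Real.exp_nonneg _),
    mul_comm, Real.dist_eq]
  gcongr

lemma continuous {L : NNReal} (hB : ContDiff ℝ ∞ B) (hL : ∀ p, |Dy B p| ≤ L)
    (hφ : IsFlow B φ) : Continuous φ := by
  refine continuous_iff_continuousAt.2 fun p => ?_
  have hcont : ContinuousOn φ (Metric.closedBall 0 (|p.1| + 1) ×ˢ univ) :=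
    continuousOn_prod_of_continuousOn_lipschitzOnWith' _ _
      (fun s hs => (hφ.lipschitzWith_right hB hL (by simpa using hs)).lipschitzOnWith)
      (fun y _ => (hφ.continuous_left y).continuousOn)
  refine hcont.continuousAt (prod_mem_nhds (Metric.closedBall_mem_nhds_of_mem ?_) univ_mem)
  simp

lemma hasDerivAt_right (hB : ContDiff ℝ ∞ B) (hφ : IsFlow B φ) (hcont : Continuous φ) (s y : ℝ) :
    HasDerivAt (fun y => φ (s, y)) (Real.exp (∫ t in (0 : ℝ)..s, Dy B (t, φ (t, y)))) y := by
  have hslope : Continuous fun y₂ : ℝ =>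
      Real.exp (∫ t in (0 : ℝ)..s, chordSlope B t (φ (t, y)) (φ (t, y₂))) := by
    have : Continuous fun q : ℝ × ℝ => chordSlope B q.2 (φ (q.2, y)) (φ (q.2, q.1)) :=
      continuous_chordSlope hB (by fun_prop) (by fun_prop) (by fun_prop)
    fun_prop
  have hlim := (hslope.tendsto y).mono_left (nhdsWithin_le_nhds (s := {y}ᶜ))
  simp only [chordSlope_self] at hlim
  refine hasDerivAt_iff_tendsto_slope.2 (hlim.congr' ?_)
  filter_upwards [self_mem_nhdsWithin] with y₂ hy₂
  rw [slope_def_field, hφ.sub_eq hB, mul_div_cancel_left₀ _ (sub_ne_zero.2 hy₂)]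

end IsFlow

/-- The algebra of functions in which the partial derivatives of a flow `φ` with variational
factor `E = ∂φ/∂y` live. It is closed under differentiation, which is how `φ` is seen to be
smooth. -/
inductive FlowAlgebra (φ E : ℝ × ℝ → ℝ) : (ℝ × ℝ → ℝ) → Prop
  | along {G : ℝ × ℝ → ℝ} (hG : ContDiff ℝ ∞ G) : FlowAlgebra φ E fun p => G (p.1, φ p)
  | variation : FlowAlgebra φ E E
  | add {f g : ℝ × ℝ → ℝ} : FlowAlgebra φ E f → FlowAlgebra φ E g →
      FlowAlgebra φ E fun p => f p + g p
  | mul {f g : ℝ × ℝ → ℝ} : FlowAlgebra φ E f → FlowAlgebra φ E g →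
      FlowAlgebra φ E fun p => f p * g p
  | primitive {f : ℝ × ℝ → ℝ} : FlowAlgebra φ E f →
      FlowAlgebra φ E fun p => ∫ t in (0 : ℝ)..p.1, f (t, p.2)

namespace FlowAlgebra

variable {B φ E f : ℝ × ℝ → ℝ}

lemma continuous (hφ : Continuous φ) (hE : Continuous E) (hf : FlowAlgebra φ E f) :
    Continuous f := by
  induction hf with
  | along hG => exact hG.continuous.comp (continuous_fst.prodMk hφ)
  | variation => exact hE
  | add _ _ hf hg => exact hf.add hg
  | mul _ _ hf hg => exact hf.mul hg
  | primitive _ hf => exact continuous_primitive hf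

lemma hasFDerivAt_along {G : ℝ × ℝ → ℝ} (hG : ContDiff ℝ ∞ G) {p : ℝ × ℝ}
    (hφ : HasFDerivAt φ (dxdy (B (p.1, φ p)) (E p)) p) :
    HasFDerivAt (fun p => G (p.1, φ p)) (dxdy
      (Dx G (p.1, φ p) + Dy G (p.1, φ p) * B (p.1, φ p)) (Dy G (p.1, φ p) * E p)) p := by
  refine ((hasFDerivAt_dxdy hG _).comp p (hasFDerivAt_fst.prodMk hφ)).congr_fderiv ?_
  ext <;> simp [mul_comm]

lemma exists_partials (hB : ContDiff ℝ ∞ B)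
    (hφ : ∀ p, HasFDerivAt φ (dxdy (B (p.1, φ p)) (E p)) p)
    (hE : ∀ p, E p = Real.exp (∫ t in (0 : ℝ)..p.1, Dy B (t, φ (t, p.2)))) (hEc : Continuous E)
    (hf : FlowAlgebra φ E f) :
    ∃ fx fy, FlowAlgebra φ E fx ∧ FlowAlgebra φ E fy ∧
      ∀ p, HasFDerivAt f (dxdy (fx p) (fy p)) p := by
  have hφc : Continuous φ := continuous_iff_continuousAt.2 fun p => (hφ p).continuousAt
  induction hf with
  | along hG =>
    exact ⟨_, _, (along (contDiff_Dx hG)).add ((along (contDiff_Dy hG)).mul (along hB)),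
      (along (contDiff_Dy hG)).mul variation, fun p => hasFDerivAt_along hG (hφ p)⟩
  | variation =>
    have hBy := contDiff_Dy hB
    have hByy : FlowAlgebra φ E fun p => Dy (Dy B) (p.1, φ p) * E p :=
      (along (contDiff_Dy hBy)).mul variation
    refine ⟨_, _, (along hBy).mul variation, hByy.primitive.mul variation, fun p => ?_⟩
    have hprim := (hasFDerivAt_primitive ((along hBy).continuous hφc hEc)
      (hByy.continuous hφc hEc)
      (hasDerivAt_y_of_hasFDerivAt fun p => hasFDerivAt_along hBy (hφ p)) p).exp
    rw [← funext hE, ← hE p] at hprim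
    exact hprim.congr_fderiv (by ext <;> simp [mul_comm])
  | add _ _ hf hg =>
    obtain ⟨fx, fy, hfx, hfy, hf'⟩ := hf
    obtain ⟨gx, gy, hgx, hgy, hg'⟩ := hg
    exact ⟨_, _, hfx.add hgx, hfy.add hgy, fun p =>
      ((hf' p).add (hg' p)).congr_fderiv (by ext <;> simp)⟩
  | @mul f g hf₀ hg₀ hf hg =>
    obtain ⟨fx, fy, hfx, hfy, hf'⟩ := hf
    obtain ⟨gx, gy, hgx, hgy, hg'⟩ := hg
    exact ⟨_, _, (hf₀.mul hgx).add (hg₀.mul hfx), (hf₀.mul hgy).add (hg₀.mul hfy), fun p =>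
      ((hf' p).mul (hg' p)).congr_fderiv (by ext <;> simp)⟩
  | primitive hf₀ hf =>
    obtain ⟨fx, fy, -, hfy, hf'⟩ := hf
    exact ⟨_, _, hf₀, hfy.primitive, hasFDerivAt_primitive (hf₀.continuous hφc hEc)
      (hfy.continuous hφc hEc) (hasDerivAt_y_of_hasFDerivAt hf')⟩

end FlowAlgebra

lemma exists_forall_abs_le_of_hasCompactSupport {f : ℝ × ℝ → ℝ} (hf : Continuous f)
    (hsupp : HasCompactSupport f) : ∃ M : NNReal, ∀ p, |f p| ≤ M := by
  obtain ⟨M, hM⟩ := hsupp.exists_bound_of_continuous hf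
  exact ⟨M.toNNReal, fun p => (hM p).trans (Real.le_coe_toNNReal M)⟩

lemma hasCompactSupport_Dy {f : ℝ × ℝ → ℝ} (hsupp : HasCompactSupport f) :
    HasCompactSupport (Dy f) :=
  hsupp.fderiv_apply ℝ (0, 1)

lemma IsFlow.contDiff {B φ : ℝ × ℝ → ℝ} (hB : ContDiff ℝ ∞ B) (hsupp : HasCompactSupport B)
    (hφ : IsFlow B φ) : ContDiff ℝ ∞ φ := by
  obtain ⟨L, hL⟩ := exists_forall_abs_le_of_hasCompactSupport (contDiff_Dy hB).continuous
    (hasCompactSupport_Dy hsupp)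
  have hcont := hφ.continuous hB hL
  let E : ℝ × ℝ → ℝ := fun p => Real.exp (∫ t in (0 : ℝ)..p.1, Dy B (t, φ (t, p.2)))
  have hE : Continuous E := by
    have := (contDiff_Dy hB).continuous
    fun_prop
  have hderiv (p : ℝ × ℝ) : HasFDerivAt φ (dxdy (B (p.1, φ p)) (E p)) p :=
    hasFDerivAt_of_partials (fx := fun p => B (p.1, φ p))
      (hB.continuous.comp (continuous_fst.prodMk hcont)) hE hφ.hasDerivAt
      (hφ.hasDerivAt_right hB hcont) p
  exact contDiff_of_closed_under_partials (FlowAlgebra φ E)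
    (fun f hf => hf.exists_partials hB hderiv (fun _ => rfl) hE)
    (FlowAlgebra.along (G := Prod.snd) contDiff_snd)

/-- The Picard–Lindelöf solution is extended beyond the time-support of `B` by its integral
equation, with the solution frozen inside the integrand. -/
lemma exists_integralCurve_of_hasCompactSupport {B : ℝ × ℝ → ℝ} {L : NNReal}
    (hsupp : HasCompactSupport B) (hlip : LipschitzWith L B) (y : ℝ) :
    ∃ γ : ℝ → ℝ, γ 0 = y ∧ ∀ s, HasDerivAt γ (B (s, γ s)) s := by
  obtain ⟨M, hM⟩ := exists_forall_abs_le_of_hasCompactSupport hlip.continuous hsupp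
  obtain ⟨T, hT, hBT⟩ : ∃ T > 0, ∀ p : ℝ × ℝ, p.1 ∉ Icc (-T) T → B p = 0 := by
    obtain ⟨T, hT, hball⟩ := hsupp.isCompact.isBounded.subset_closedBall_lt 0 0
    refine ⟨T, hT, fun p hp => image_eq_zero_of_notMem_tsupport fun hpB => hp ?_⟩
    have : |p.1| ≤ T := (norm_fst_le p).trans (by simpa using hball hpB)
    exact abs_le.1 this
  have hPL : IsPicardLindelof (fun s z => B (s, z)) (tmin := -T) (tmax := T)
      ⟨0, by constructor <;> linarith⟩ y (M * T.toNNReal) 0 M L := by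
    refine ⟨fun s _ => ?_, fun z _ => ?_, fun s _ z _ => hM (s, z), ?_⟩
    · exact LipschitzWith.lipschitzOnWith
        (by simpa [Function.comp_def] using hlip.comp (LipschitzWith.prodMk_left s))
    · exact (hlip.continuous.comp (by fun_prop)).continuousOn
    · simp [hT.le]
  obtain ⟨α, hα₀, hα⟩ := hPL.exists_eq_forall_mem_Icc_hasDerivWithinAt₀
  have hneg : -T ≤ T := by linarith
  let β : ℝ → ℝ := IccExtend hneg ((Icc (-T) T).domRestrict α)
  have hβ : Continuous β := (continuousOn_iff_continuous_domRestrict.1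
    fun t ht => (hα t ht).continuousWithinAt).Icc_extend'
  have hint : Continuous fun t => B (t, β t) := hlip.continuous.comp (continuous_id.prodMk hβ)
  let γ : ℝ → ℝ := fun s => y + ∫ t in (0 : ℝ)..s, B (t, β t)
  have hγβ {s : ℝ} (hs : s ∈ Icc (-T) T) : γ s = β s := by
    have hsub : uIcc 0 s ⊆ Icc (-T) T := uIcc_subset_Icc ⟨by linarith, hT.le⟩ hs
    have hβα {t : ℝ} (ht : t ∈ Icc (-T) T) : β t = α t := IccExtend_of_mem hneg _ ht
    have hpicard := ODE.picard_eq_of_hasDerivAt (f := fun s z => B (s, z)) (u := univ)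
      hlip.continuous.continuousOn (fun t ht => (hα t (hsub ht)).mono hsub) (mapsTo_univ _ _)
    rw [hβα hs, ← hpicard, ODE.picard_apply, hα₀]
    exact congrArg (y + ·)
      (intervalIntegral.integral_congr fun t ht => by simp only [hβα (hsub ht)])
  refine ⟨γ, by simp [γ], fun s => ?_⟩
  have hfrozen : B (s, γ s) = B (s, β s) := by
    by_cases hs : s ∈ Icc (-T) T
    · rw [hγβ hs]
    · rw [hBT _ hs, hBT _ hs]
  rw [hfrozen]
  exact (hint.integral_hasStrictDerivAt 0 s).hasDerivAt.const_add y

lemma exists_isFlow {B : ℝ × ℝ → ℝ} (hB : ContDiff ℝ ∞ B) (hsupp : HasCompactSupport B) :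
    ∃ φ, IsFlow B φ ∧ ContDiff ℝ ∞ φ := by
  obtain ⟨L, hL⟩ := hB.lipschitzWith_of_hasCompactSupport hsupp (by simp)
  choose γ hγ₀ hγ using exists_integralCurve_of_hasCompactSupport hsupp hL
  have hflow : IsFlow B fun p => γ p.2 p.1 := ⟨hγ₀, fun s y => hγ y s⟩
  exact ⟨_, hflow, hflow.contDiff hB hsupp⟩

lemma exists_hasCompactSupport_eventuallyEq {f : ℝ × ℝ → ℝ} (hf : ContDiff ℝ ∞ f) :
    ∃ g, ContDiff ℝ ∞ g ∧ HasCompactSupport g ∧ g =ᶠ[𝓝 0] f := by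
  let χ : ContDiffBump (0 : ℝ × ℝ) := ⟨1, 2, one_pos, one_lt_two⟩
  refine ⟨fun p => χ p * f p, χ.contDiff.mul hf, χ.hasCompactSupport.mul_right, ?_⟩
  filter_upwards [χ.eventuallyEq_one] with p hp
  simp [hp]

lemma IsFlow.isLocalDiffeo {B φ : ℝ × ℝ → ℝ} (hφ : IsFlow B φ) (hsmooth : ContDiff ℝ ∞ φ) :
    IsLocalDiffeo fun p => (p.1, φ p) where
  contDiff := contDiff_fst.prodMk hsmooth
  map_zero := Prod.ext rfl (hφ.initial 0)
  det_ne_zero := by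
    have hDy : Dy φ 0 = 1 :=
      (hasDerivAt_Dy hsmooth 0 0).unique (by simpa only [hφ.initial] using hasDerivAt_id' (0 : ℝ))
    have hderiv : HasFDerivAt (fun p : ℝ × ℝ => (p.1, φ p))
        ((dxdy 1 0).prod (dxdy (Dx φ 0) (Dy φ 0))) 0 :=
      (hasFDerivAt_fst.prodMk (hasFDerivAt_dxdy hsmooth 0)).congr_fderiv (by ext <;> simp)
    rw [hderiv.fderiv, det_dxdy_prod, hDy]
    norm_num

lemma exists_first_integral {B : ℝ × ℝ → ℝ} (hB : ContDiff ℝ ∞ B) :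
    ∃ I : ℝ × ℝ → ℝ, ContDiff ℝ ∞ I ∧ (∀ᶠ y in 𝓝 (0 : ℝ), I (0, y) = y) ∧
      ∀ᶠ p in 𝓝 (0 : ℝ × ℝ), Dx I p + B p * Dy I p = 0 := by
  obtain ⟨B', hB', hsupp, hBB'⟩ := exists_hasCompactSupport_eventuallyEq hB
  obtain ⟨φ, hφ, hsmooth⟩ := exists_isFlow hB' hsupp
  obtain ⟨g, hg, hgφ, hφg⟩ := (hφ.isLocalDiffeo hsmooth).exists_inverse
  have hI : ContDiff ℝ ∞ fun p => (g p).2 := hg.contDiff.snd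
  have hconst : ∀ᶠ q in 𝓝 (0 : ℝ × ℝ), Dx (fun p => (g p).2) (q.1, φ q) +
      B' (q.1, φ q) * Dy (fun p => (g p).2) (q.1, φ q) = 0 := by
    filter_upwards [hgφ.eventually_nhds] with q hq
    have halong := (hasFDerivAt_dxdy hI (q.1, φ q)).comp_hasDerivAt q.1
        ((hasDerivAt_id q.1).prodMk (hφ.hasDerivAt q.1 q.2))
    have hline : Tendsto (fun s : ℝ => (s, q.2)) (𝓝 q.1) (𝓝 q) :=
      (Continuous.prodMk_left q.2).tendsto q.1
    have hlevel : (fun s => (g (s, φ (s, q.2))).2) =ᶠ[𝓝 q.1] fun _ => q.2 :=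
      (hline.eventually hq).mono fun s hs => by simpa using congrArg Prod.snd hs
    simpa using halong.unique ((hasDerivAt_const q.1 q.2).congr_of_eventuallyEq hlevel)
  refine ⟨_, hI, ?_, ?_⟩
  · have haxis : Tendsto (fun y : ℝ => ((0 : ℝ), y)) (𝓝 0) (𝓝 0) :=
      (Continuous.prodMk_right (0 : ℝ)).tendsto 0
    filter_upwards [haxis.eventually hgφ] with y hy
    simpa [hφ.initial] using congrArg Prod.snd hy
  · filter_upwards [hg.tendsto_zero.eventually hconst, hφg, hBB'] with p hp hφgp hBp
    rw [hφgp, hBp] at hp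
    exact hp

/-! ### Rapidly decreasing coefficients and trigonometric series -/

section Series

/-- The weight `(1 + |k₁|)(1 + |k₂|)` on `ℤ²`, against which decay of coefficients is measured. -/
def weight (k : ℤ × ℤ) : ℝ := (1 + |(k.1 : ℝ)|) * (1 + |(k.2 : ℝ)|)

lemma weight_pos (k : ℤ × ℤ) : 0 < weight k := by unfold weight; positivity

lemma one_add_abs_fst_le_weight (k : ℤ × ℤ) : 1 + |(k.1 : ℝ)| ≤ weight k :=
  le_mul_of_one_le_right (by positivity) (le_add_of_nonneg_right (abs_nonneg _))

lemma one_add_abs_snd_le_weight (k : ℤ × ℤ) : 1 + |(k.2 : ℝ)| ≤ weight k :=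
  le_mul_of_one_le_left (by positivity) (le_add_of_nonneg_right (abs_nonneg _))

lemma summable_inv_one_add_abs_sq : Summable fun k : ℤ => ((1 + |(k : ℝ)|) ^ 2)⁻¹ := by
  have hinv : Summable fun k : ℤ => 1 / (k : ℝ) ^ 2 :=
    Real.summable_one_div_int_pow.mpr one_lt_two
  refine Summable.of_norm_bounded_eventually hinv ?_
  filter_upwards [(finite_singleton (0 : ℤ)).compl_mem_cofinite] with k hk
  have hk' : 0 < |(k : ℝ)| := abs_pos.mpr (by exact_mod_cast hk)
  rw [Real.norm_of_nonneg (by positivity), one_div, ← sq_abs (k : ℝ)]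
  gcongr
  linarith

lemma summable_inv_weight_sq : Summable fun k : ℤ × ℤ => (weight k ^ 2)⁻¹ := by
  refine (summable_inv_one_add_abs_sq.mul_of_nonneg summable_inv_one_add_abs_sq
    (fun _ => by positivity) (fun _ => by positivity)).congr fun k => ?_
  rw [weight, mul_pow, mul_inv]

/-- Rapidly decreasing families on `ℤ²`: the Fourier coefficients of smooth functions. -/
def RapidDecay (a : ℤ × ℤ → ℂ) : Prop := ∀ N : ℕ, ∃ C : ℝ, ∀ k, weight k ^ N * ‖a k‖ ≤ C

variable {a b : ℤ × ℤ → ℂ}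

lemma RapidDecay.of_le (ha : RapidDecay a) (C : ℝ) (M : ℕ)
    (h : ∀ k, ‖b k‖ ≤ C * weight k ^ M * ‖a k‖) : RapidDecay b := by
  intro N
  obtain ⟨K, hK⟩ := ha (N + M)
  refine ⟨|C| * K, fun k => ?_⟩
  have hw := weight_pos k
  calc weight k ^ N * ‖b k‖ ≤ weight k ^ N * (C * weight k ^ M * ‖a k‖) := by gcongr; exact h k
    _ = C * (weight k ^ (N + M) * ‖a k‖) := by rw [pow_add]; ring
    _ ≤ |C| * (weight k ^ (N + M) * ‖a k‖) := by gcongr; exact le_abs_self C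
    _ ≤ |C| * K := by gcongr; exact hK k

lemma RapidDecay.mul_of_norm_le_one (ha : RapidDecay a) (hb : ∀ k, ‖b k‖ ≤ 1) :
    RapidDecay fun k => b k * a k :=
  ha.of_le 1 0 fun k => by
    rw [norm_mul, pow_zero, mul_one]
    gcongr
    exact hb k

lemma summable_of_weight_sq_mul_le {C : ℝ} (h : ∀ k, weight k ^ 2 * ‖a k‖ ≤ C) :
    Summable fun k => ‖a k‖ :=
  Summable.of_nonneg_of_le (fun _ => norm_nonneg _)
    (fun k => by
      have hw := weight_pos k
      rw [← div_eq_mul_inv, le_div_iff₀ (by positivity), mul_comm]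
      exact h k)
    (summable_inv_weight_sq.mul_left C)

lemma tsum_norm_le_of_weight_sq_mul_le {C : ℝ} (h : ∀ k, weight k ^ 2 * ‖a k‖ ≤ C) :
    ∑' k, ‖a k‖ ≤ C * ∑' k, (weight k ^ 2)⁻¹ := by
  rw [← tsum_mul_left]
  refine (summable_of_weight_sq_mul_le h).tsum_le_tsum (fun k => ?_)
    (summable_inv_weight_sq.mul_left C)
  have hw := weight_pos k
  rw [← div_eq_mul_inv, le_div_iff₀ (by positivity), mul_comm]
  exact h k

lemma RapidDecay.summable (ha : RapidDecay a) : Summable fun k => ‖a k‖ :=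
  (ha 2).elim fun _ => summable_of_weight_sq_mul_le

/-- A multiplier sequence of polynomial growth. -/
def PolynomialGrowth (s : ℤ → ℝ) : Prop :=
  ∃ (C : ℝ) (M : ℕ), ∀ k, |s k| ≤ C * (1 + |(k : ℝ)|) ^ M

lemma polynomialGrowth_const_mul_pow (c : ℝ) (M : ℕ) :
    PolynomialGrowth fun k => (c * k) ^ M := by
  refine ⟨|c| ^ M, M, fun k => ?_⟩
  rw [abs_pow, abs_mul, mul_pow]
  gcongr
  linarith

lemma RapidDecay.mul_fst (ha : RapidDecay a) {s : ℤ → ℝ} (hs : PolynomialGrowth s) :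
    RapidDecay fun k => s k.1 * a k := by
  obtain ⟨C, M, hs⟩ := hs
  have hC : 0 ≤ C := by simpa using (abs_nonneg _).trans (hs 0)
  refine ha.of_le C M fun k => ?_
  rw [norm_mul, Complex.norm_real, Real.norm_eq_abs]
  gcongr
  refine (hs k.1).trans ?_
  gcongr
  exact one_add_abs_fst_le_weight k

lemma RapidDecay.const_mul_fst (ha : RapidDecay a) (c : ℂ) :
    RapidDecay fun k => c * k.1 * a k := by
  refine ha.of_le ‖c‖ 1 fun k => ?_
  rw [norm_mul, norm_mul, pow_one]
  gcongr
  simpa using (le_add_of_nonneg_left zero_le_one).trans (one_add_abs_fst_le_weight k)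

lemma RapidDecay.const_mul_snd (ha : RapidDecay a) (c : ℂ) :
    RapidDecay fun k => c * k.2 * a k := by
  refine ha.of_le ‖c‖ 1 fun k => ?_
  rw [norm_mul, norm_mul, pow_one]
  gcongr
  simpa using (le_add_of_nonneg_left zero_le_one).trans (one_add_abs_snd_le_weight k)

/-- The character `t ↦ exp (2πikt)` of `ℝ / ℤ`, as a function on `ℝ`. -/
def character (k : ℤ) (t : ℝ) : ℂ := Complex.exp (2 * Real.pi * Complex.I * k * t)

lemma character_eq (k : ℤ) (t : ℝ) :
    character k t = Complex.exp ((2 * Real.pi * k * t : ℝ) * Complex.I) := by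
  rw [character]
  congr 1
  push_cast
  ring

lemma norm_character (k : ℤ) (t : ℝ) : ‖character k t‖ = 1 := by
  rw [character_eq, Complex.norm_exp_ofReal_mul_I]

lemma contDiff_character (k : ℤ) : ContDiff ℝ ∞ (character k) :=
  (contDiff_const.mul Complex.ofRealCLM.contDiff).cexp

@[fun_prop]
lemma continuous_character (k : ℤ) : Continuous (character k) := (contDiff_character k).continuous

lemma hasDerivAt_character (k : ℤ) (t : ℝ) :
    HasDerivAt (character k) (2 * Real.pi * Complex.I * k * character k t) t := by
  have hlin : HasDerivAt (fun t : ℝ => (2 * Real.pi * Complex.I * k * t : ℂ))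
      (2 * Real.pi * Complex.I * k) t := by
    simpa using (Complex.ofRealCLM.hasDerivAt (x := t)).const_mul (2 * Real.pi * Complex.I * k : ℂ)
  rw [mul_comm]
  exact hlin.cexp

lemma character_add (k l : ℤ) (t : ℝ) : character (k + l) t = character k t * character l t := by
  rw [character, character, character, ← Complex.exp_add]
  congr 1
  push_cast
  ring

@[simp] lemma character_zero_left (t : ℝ) : character 0 t = 1 := by simp [character]

@[simp] lemma character_zero_right (k : ℤ) : character k 0 = 1 := by simp [character]

lemma character_one_right (k : ℤ) : character k 1 = 1 := by
  rw [character, ← Complex.exp_int_mul_two_pi_mul_I k]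
  congr 1
  push_cast
  ring

/-- A tower of bounded functions on the line, each the derivative of the previous one. -/
structure BoundedDerivTower (D : ℕ → ℝ → ℂ) : Prop where
  bounded : ∀ j, ∃ C, ∀ t, ‖D j t‖ ≤ C
  hasDerivAt : ∀ j t, HasDerivAt (D j) (D (j + 1) t) t

/-- The `k`-th term of `waveSeries`. -/
def waveTerm (D : ℕ → ℝ → ℂ) (s : ℤ → ℝ) (a : ℤ × ℤ → ℂ) (j : ℕ) (k : ℤ × ℤ) (p : ℝ × ℝ) : ℂ :=
  a k * D j (s k.1 * p.1) * character k.2 p.2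

/-- The series `∑ aₖ D⁽ʲ⁾(s(k₁) x) exp (2πi k₂ y)`. A Fourier series is the case `D t = exp (it)`,
`s k = 2πk`; the profile `D (t²) = cos t` separates even and odd parts in `x`. -/
def waveSeries (D : ℕ → ℝ → ℂ) (s : ℤ → ℝ) (a : ℤ × ℤ → ℂ) (j : ℕ) (p : ℝ × ℝ) : ℂ :=
  ∑' k : ℤ × ℤ, waveTerm D s a j k p

variable {D : ℕ → ℝ → ℂ} {s : ℤ → ℝ}

lemma norm_waveTerm_le {C : ℝ} {j : ℕ} (hC : ∀ t, ‖D j t‖ ≤ C) (s : ℤ → ℝ) (a : ℤ × ℤ → ℂ)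
    (k : ℤ × ℤ) (p : ℝ × ℝ) : ‖waveTerm D s a j k p‖ ≤ ‖a k‖ * C := by
  rw [waveTerm, norm_mul, norm_mul, norm_character, mul_one]
  gcongr
  exact hC _

lemma summable_waveTerm (hD : BoundedDerivTower D) (s : ℤ → ℝ) (ha : RapidDecay a) (j : ℕ)
    (p : ℝ × ℝ) : Summable fun k => waveTerm D s a j k p := by
  obtain ⟨C, hC⟩ := hD.bounded j
  exact Summable.of_norm_bounded (ha.summable.mul_right C) fun k => norm_waveTerm_le hC s a k p

lemma hasFDerivAt_waveTerm (hD : BoundedDerivTower D) (s : ℤ → ℝ) (a : ℤ × ℤ → ℂ) (j : ℕ)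
    (k : ℤ × ℤ) (p : ℝ × ℝ) :
    HasFDerivAt (waveTerm D s a j k) (dxdy (waveTerm D s (fun k => s k.1 * a k) (j + 1) k p)
      (waveTerm D s (fun k => 2 * Real.pi * Complex.I * k.2 * a k) j k p)) p := by
  have hprofile : HasFDerivAt (fun q : ℝ × ℝ => D j (s k.1 * q.1)) _ p :=
    (hD.hasDerivAt j (s k.1 * p.1)).hasFDerivAt.comp p (hasFDerivAt_fst.const_mul (s k.1))
  have hcharacter : HasFDerivAt (fun q : ℝ × ℝ => character k.2 q.2) _ p :=
    (hasDerivAt_character k.2 p.2).hasFDerivAt.comp p hasFDerivAt_snd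
  refine ((hprofile.const_mul (a k)).mul hcharacter).congr_fderiv ?_
  ext <;> simp [waveTerm] <;> ring

lemma norm_dxdy_le (u v : ℂ) : ‖dxdy u v‖ ≤ ‖u‖ + ‖v‖ := by
  refine ContinuousLinearMap.opNorm_le_bound _ (by positivity) fun w => ?_
  rw [dxdy_apply]
  refine (norm_add_le _ _).trans ?_
  rw [norm_smul, norm_smul, add_mul, mul_comm _ ‖u‖, mul_comm _ ‖v‖]
  gcongr
  · exact norm_fst_le w
  · exact norm_snd_le w

lemma tsum_dxdy {ι : Type*} {u v : ι → ℂ} (hu : Summable u) (hv : Summable v) :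
    ∑' i, dxdy (u i) (v i) = dxdy (∑' i, u i) (∑' i, v i) := by
  let dx := ContinuousLinearMap.smulRightL ℝ (ℝ × ℝ) ℂ (ContinuousLinearMap.fst ℝ ℝ ℝ)
  let dy := ContinuousLinearMap.smulRightL ℝ (ℝ × ℝ) ℂ (ContinuousLinearMap.snd ℝ ℝ ℝ)
  change ∑' i, (dx (u i) + dy (v i)) = dx (∑' i, u i) + dy (∑' i, v i)
  rw [(dx.summable hu).tsum_add (dy.summable hv), dx.map_tsum hu, dy.map_tsum hv]

lemma hasFDerivAt_waveSeries (hD : BoundedDerivTower D) (hs : PolynomialGrowth s)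
    (ha : RapidDecay a) (j : ℕ) (p : ℝ × ℝ) :
    HasFDerivAt (waveSeries D s a j) (dxdy (waveSeries D s (fun k => s k.1 * a k) (j + 1) p)
      (waveSeries D s (fun k => 2 * Real.pi * Complex.I * k.2 * a k) j p)) p := by
  have hax := ha.mul_fst hs
  have hay := ha.const_mul_snd (2 * Real.pi * Complex.I)
  obtain ⟨C₀, hC₀⟩ := hD.bounded j
  obtain ⟨C₁, hC₁⟩ := hD.bounded (j + 1)
  have hsum := hasFDerivAt_tsum (𝕜 := ℝ) (x₀ := p) (x := p)
    ((hax.summable.mul_right C₁).add (hay.summable.mul_right C₀))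
    (fun k q => hasFDerivAt_waveTerm hD s a j k q)
    (fun k q => (norm_dxdy_le _ _).trans
      (add_le_add (norm_waveTerm_le hC₁ s _ k q) (norm_waveTerm_le hC₀ s _ k q)))
    (summable_waveTerm hD s ha j p)
  rwa [tsum_dxdy (summable_waveTerm hD s hax (j + 1) p) (summable_waveTerm hD s hay j p)] at hsum

lemma contDiff_waveSeries (hD : BoundedDerivTower D) (hs : PolynomialGrowth s)
    (ha : RapidDecay a) (j : ℕ) : ContDiff ℝ ∞ (waveSeries D s a j) := by
  refine contDiff_of_closed_under_partials
    (fun f => ∃ a j, RapidDecay a ∧ f = waveSeries D s a j) ?_ ⟨a, j, ha, rfl⟩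
  rintro _ ⟨a, j, ha, rfl⟩
  exact ⟨_, _, ⟨_, _, ha.mul_fst hs, rfl⟩, ⟨_, _, ha.const_mul_snd _, rfl⟩,
    hasFDerivAt_waveSeries hD hs ha j⟩

/-- The function on the plane with Fourier coefficients `a` over `ℤ²`. -/
def fourierSeries (a : ℤ × ℤ → ℂ) (p : ℝ × ℝ) : ℂ :=
  ∑' k : ℤ × ℤ, a k * character k.1 p.1 * character k.2 p.2

lemma norm_fourierSeries_term (a : ℤ × ℤ → ℂ) (p : ℝ × ℝ) (k : ℤ × ℤ) :
    ‖a k * character k.1 p.1 * character k.2 p.2‖ = ‖a k‖ := by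
  rw [norm_mul, norm_mul, norm_character, norm_character, mul_one, mul_one]

lemma summable_fourierSeries (ha : Summable fun k => ‖a k‖) (p : ℝ × ℝ) :
    Summable fun k : ℤ × ℤ => a k * character k.1 p.1 * character k.2 p.2 :=
  Summable.of_norm (by simpa only [norm_fourierSeries_term] using ha)

/-- The successive derivatives of `t ↦ exp (it)`. -/
def expTower (j : ℕ) (t : ℝ) : ℂ := Complex.I ^ j * Complex.exp (t * Complex.I)

lemma boundedDerivTower_expTower : BoundedDerivTower expTower where
  bounded j := ⟨1, fun t => by rw [expTower, norm_mul, Complex.norm_exp_ofReal_mul_I]; simp⟩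
  hasDerivAt j t := by
    have hlin : HasDerivAt (fun t : ℝ => (t * Complex.I : ℂ)) Complex.I t := by
      simpa using (Complex.ofRealCLM.hasDerivAt (x := t)).mul_const Complex.I
    refine (hlin.cexp.const_mul (Complex.I ^ j)).congr_deriv ?_
    rw [expTower, pow_succ]
    ring

lemma waveTerm_expTower (a : ℤ × ℤ → ℂ) (j : ℕ) (k : ℤ × ℤ) (p : ℝ × ℝ) :
    waveTerm expTower (fun k => (2 * Real.pi * k) ^ 1) a j k p =
      Complex.I ^ j * a k * character k.1 p.1 * character k.2 p.2 := by
  rw [waveTerm, expTower, pow_one, ← character_eq]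
  ring

lemma fourierSeries_eq_waveSeries (a : ℤ × ℤ → ℂ) :
    fourierSeries a = waveSeries expTower (fun k => (2 * Real.pi * k) ^ 1) a 0 := by
  ext p
  simp only [fourierSeries, waveSeries, waveTerm_expTower, pow_zero, one_mul]

lemma contDiff_fourierSeries (ha : RapidDecay a) : ContDiff ℝ ∞ (fourierSeries a) := by
  rw [fourierSeries_eq_waveSeries]
  exact contDiff_waveSeries boundedDerivTower_expTower (polynomialGrowth_const_mul_pow _ 1) ha 0

lemma hasFDerivAt_fourierSeries (ha : RapidDecay a) (p : ℝ × ℝ) :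
    HasFDerivAt (fourierSeries a)
      (dxdy (fourierSeries (fun k => 2 * Real.pi * Complex.I * k.1 * a k) p)
        (fourierSeries (fun k => 2 * Real.pi * Complex.I * k.2 * a k) p)) p := by
  have h := hasFDerivAt_waveSeries boundedDerivTower_expTower
    (polynomialGrowth_const_mul_pow (2 * Real.pi) 1) ha 0 p
  rw [← fourierSeries_eq_waveSeries, ← fourierSeries_eq_waveSeries] at h
  convert! h using 2
  simp only [fourierSeries, waveSeries, waveTerm_expTower]
  refine tsum_congr fun k => ?_
  push_cast
  ring

end Series

/-! ### Fourier coefficients of smooth periodic functions -/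

section Coefficients

/-- The `k`-th Fourier coefficient of a function of period `1` on the line. -/
def circleCoeff (φ : ℝ → ℂ) (k : ℤ) : ℂ := ∫ x in (0 : ℝ)..1, φ x * character (-k) x

lemma norm_circleCoeff_le {φ : ℝ → ℂ} {C : ℝ} (h : ∀ x ∈ Icc (0 : ℝ) 1, ‖φ x‖ ≤ C) (k : ℤ) :
    ‖circleCoeff φ k‖ ≤ C := by
  have hbound : ∀ x ∈ uIoc (0 : ℝ) 1, ‖φ x * character (-k) x‖ ≤ C := by
    intro x hx
    rw [uIoc_of_le zero_le_one] at hx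
    rw [norm_mul, norm_character, mul_one]
    exact h x ⟨hx.1.le, hx.2⟩
  simpa [circleCoeff] using intervalIntegral.norm_integral_le_of_norm_le_const hbound

lemma circleCoeff_const_mul (c : ℂ) (φ : ℝ → ℂ) (k : ℤ) :
    circleCoeff (fun x => c * φ x) k = c * circleCoeff φ k := by
  simp only [circleCoeff, mul_assoc, intervalIntegral.integral_const_mul]

lemma circleCoeff_deriv {φ φ' : ℝ → ℂ} (h : ∀ x, HasDerivAt φ (φ' x) x) (hc : Continuous φ')
    (hp : φ 1 = φ 0) (k : ℤ) :
    circleCoeff φ' k = 2 * Real.pi * Complex.I * k * circleCoeff φ k := by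
  have hparts := intervalIntegral.integral_mul_deriv_eq_deriv_mul (a := 0) (b := 1)
    (fun x _ => hasDerivAt_character (-k) x) (fun x _ => h x)
    ((continuous_const.mul (continuous_character _)).intervalIntegrable _ _)
    (hc.intervalIntegrable _ _)
  rw [character_one_right, hp, character_zero_right, sub_self, zero_sub] at hparts
  simp only [circleCoeff, mul_comm (φ' _)]
  rw [hparts, ← intervalIntegral.integral_neg, ← intervalIntegral.integral_const_mul]
  congr 1
  ext x
  push_cast
  ring

lemma hasSum_circleCoeff {φ : ℝ → ℂ} (hc : Continuous φ) (hp : Function.Periodic φ 1)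
    (hs : Summable (circleCoeff φ)) (x : ℝ) :
    HasSum (fun k => circleCoeff φ k * character k x) (φ x) := by
  have : Fact ((0 : ℝ) < 1) := ⟨one_pos⟩
  let g : C(AddCircle (1 : ℝ), ℂ) := ⟨hp.lift, continuous_coinduced_dom.mpr hc⟩
  have hg : ∀ x : ℝ, g x = φ x := hp.lift_coe
  have hfourier : ∀ n (x : ℝ), (fourier n (x : AddCircle (1 : ℝ)) : ℂ) = character n x := by
    intro n x
    rw [fourier_coe_apply, character]
    simp
  have hcoeff : fourierCoeff g = circleCoeff φ := by
    ext k
    rw [fourierCoeff_eq_intervalIntegral g k 0, circleCoeff]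
    simp only [zero_add, div_one, one_smul, smul_eq_mul, hfourier, hg, mul_comm (φ _)]
  have hsum := has_pointwise_sum_fourier_series_of_summable (f := g) (by rwa [hcoeff])
    (x : AddCircle (1 : ℝ))
  simpa only [hcoeff, hfourier, hg, smul_eq_mul] using hsum

/-- Smooth functions on the plane that are `ℤ²`-periodic, i.e. smooth functions on the torus. -/
structure SmoothPeriodic (g : ℝ × ℝ → ℂ) : Prop where
  contDiff : ContDiff ℝ ∞ g
  periodic_fst : ∀ x y, g (x + 1, y) = g (x, y)
  periodic_snd : ∀ x y, g (x, y + 1) = g (x, y)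

/-- The Fourier coefficient of a function on the torus, as an iterated integral. -/
def torusCoeff (g : ℝ × ℝ → ℂ) (k : ℤ × ℤ) : ℂ :=
  circleCoeff (fun y => circleCoeff (fun x => g (x, y)) k.1) k.2

lemma norm_torusCoeff_le {g : ℝ × ℝ → ℂ} {C : ℝ}
    (h : ∀ p ∈ Icc (0 : ℝ) 1 ×ˢ Icc (0 : ℝ) 1, ‖g p‖ ≤ C) (k : ℤ × ℤ) : ‖torusCoeff g k‖ ≤ C :=
  norm_circleCoeff_le (fun y hy => norm_circleCoeff_le (fun x hx => h (x, y) ⟨hx, hy⟩) _) _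

lemma circleCoeff_swap {g : ℝ × ℝ → ℂ} (hg : Continuous g) (k l : ℤ) :
    circleCoeff (fun y => circleCoeff (fun x => g (x, y)) k) l =
      circleCoeff (fun x => circleCoeff (fun y => g (x, y)) l) k := by
  simp only [circleCoeff, ← intervalIntegral.integral_mul_const]
  rw [MeasureTheory.intervalIntegral_intervalIntegral_swap]
  · simp only [mul_right_comm]
  · have hint : Continuous (Function.uncurry fun y x =>
        g (x, y) * character (-k) x * character (-l) y) := by
      unfold Function.uncurry
      fun_prop
    exact (hint.continuousOn.integrableOn_compact (isCompact_uIcc.prod isCompact_uIcc)).mono_set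
      (prod_mono uIoc_subset_uIcc uIoc_subset_uIcc)

lemma abs_mul_norm_le_norm_two_pi_I_mul (n : ℤ) (z : ℂ) :
    |(n : ℝ)| * ‖z‖ ≤ ‖2 * Real.pi * Complex.I * n * z‖ := by
  have hpi : (1 : ℝ) ≤ 2 * Real.pi := by linarith [Real.pi_gt_three]
  have hnorm : ‖2 * Real.pi * Complex.I * n * z‖ = 2 * Real.pi * (|(n : ℝ)| * ‖z‖) := by
    simp [abs_of_pos Real.pi_pos]
    ring
  rw [hnorm]
  exact le_mul_of_one_le_left (by positivity) hpi

namespace SmoothPeriodic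

variable {g : ℝ × ℝ → ℂ}

lemma dx (hg : SmoothPeriodic g) : SmoothPeriodic (Dx g) where
  contDiff := contDiff_Dx hg.contDiff
  periodic_fst x y := by
    have h := (hasDerivAt_Dx hg.contDiff (x + 1) y).comp_add_const x 1
    simp only [hg.periodic_fst] at h
    exact h.unique (hasDerivAt_Dx hg.contDiff x y)
  periodic_snd x y := by
    have h := hasDerivAt_Dx hg.contDiff x (y + 1)
    simp only [hg.periodic_snd] at h
    exact h.unique (hasDerivAt_Dx hg.contDiff x y)

lemma dy (hg : SmoothPeriodic g) : SmoothPeriodic (Dy g) where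
  contDiff := contDiff_Dy hg.contDiff
  periodic_fst x y := by
    have h := hasDerivAt_Dy hg.contDiff (x + 1) y
    simp only [hg.periodic_fst] at h
    exact h.unique (hasDerivAt_Dy hg.contDiff x y)
  periodic_snd x y := by
    have h := (hasDerivAt_Dy hg.contDiff x (y + 1)).comp_add_const y 1
    simp only [hg.periodic_snd] at h
    exact h.unique (hasDerivAt_Dy hg.contDiff x y)

lemma torusCoeff_Dx (hg : SmoothPeriodic g) (k : ℤ × ℤ) :
    torusCoeff (Dx g) k = 2 * Real.pi * Complex.I * k.1 * torusCoeff g k := by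
  rw [torusCoeff, torusCoeff, ← circleCoeff_const_mul]
  congr 1
  ext y
  exact circleCoeff_deriv (fun x => hasDerivAt_Dx hg.contDiff x y)
    (hg.dx.contDiff.continuous.comp (Continuous.prodMk_left y))
    (by simpa using hg.periodic_fst 0 y) k.1

lemma torusCoeff_Dy (hg : SmoothPeriodic g) (k : ℤ × ℤ) :
    torusCoeff (Dy g) k = 2 * Real.pi * Complex.I * k.2 * torusCoeff g k := by
  rw [torusCoeff, torusCoeff, circleCoeff_swap hg.contDiff.continuous,
    circleCoeff_swap hg.dy.contDiff.continuous, ← circleCoeff_const_mul]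
  congr 1
  ext x
  exact circleCoeff_deriv (fun y => hasDerivAt_Dy hg.contDiff x y)
    (hg.dy.contDiff.continuous.comp (Continuous.prodMk_right x))
    (by simpa using hg.periodic_snd x 0) k.2

lemma weight_mul_norm_torusCoeff_le (hg : SmoothPeriodic g) (k : ℤ × ℤ) :
    weight k * ‖torusCoeff g k‖ ≤ ‖torusCoeff g k‖ + ‖torusCoeff (Dx g) k‖ +
      ‖torusCoeff (Dy g) k‖ + ‖torusCoeff (Dx (Dy g)) k‖ := by
  have hx : |(k.1 : ℝ)| * ‖torusCoeff g k‖ ≤ ‖torusCoeff (Dx g) k‖ := by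
    rw [hg.torusCoeff_Dx]
    exact abs_mul_norm_le_norm_two_pi_I_mul _ _
  have hy : |(k.2 : ℝ)| * ‖torusCoeff g k‖ ≤ ‖torusCoeff (Dy g) k‖ := by
    rw [hg.torusCoeff_Dy]
    exact abs_mul_norm_le_norm_two_pi_I_mul _ _
  have hxy : |(k.1 : ℝ)| * ‖torusCoeff (Dy g) k‖ ≤
      ‖torusCoeff (Dx (Dy g)) k‖ := by
    rw [hg.dy.torusCoeff_Dx]
    exact abs_mul_norm_le_norm_two_pi_I_mul _ _
  have hxy' := mul_le_mul_of_nonneg_left hy (abs_nonneg (k.1 : ℝ))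
  rw [weight]
  linarith

end SmoothPeriodic

/-- A smooth family of functions on the torus that vanishes at the parameter `0`. -/
structure VanishingFamily (H : ℝ → ℝ × ℝ → ℂ) : Prop where
  contDiff : ContDiff ℝ ∞ (Function.uncurry H)
  periodic : ∀ ε, SmoothPeriodic (H ε)
  zero : ∀ p, H 0 p = 0

namespace VanishingFamily

variable {H : ℝ → ℝ × ℝ → ℂ}

lemma contDiff_fderiv_apply (h : VanishingFamily H) (v : ℝ × ℝ) :
    ContDiff ℝ ∞ (Function.uncurry fun ε p => fderiv ℝ (H ε) p v) := by
  have hfst : ContDiff ℝ ∞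
      (Function.uncurry fun (z : ℝ × (ℝ × ℝ)) (p : ℝ × ℝ) => H z.1 p) :=
    h.contDiff.comp (by fun_prop : ContDiff ℝ ∞ fun z : (ℝ × (ℝ × ℝ)) × (ℝ × ℝ) => (z.1.1, z.2))
  exact (hfst.fderiv (g := Prod.snd) contDiff_snd (by simp)).clm_apply contDiff_const

lemma dx (h : VanishingFamily H) : VanishingFamily fun ε => Dx (H ε) where
  contDiff := h.contDiff_fderiv_apply (1, 0)
  periodic ε := (h.periodic ε).dx
  zero p := by simp [Dx, funext h.zero]

lemma dy (h : VanishingFamily H) : VanishingFamily fun ε => Dy (H ε) where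
  contDiff := h.contDiff_fderiv_apply (0, 1)
  periodic ε := (h.periodic ε).dy
  zero p := by simp [Dy, funext h.zero]

lemma eventually_norm_torusCoeff_le (h : VanishingFamily H) {δ : ℝ} (hδ : 0 < δ) :
    ∀ᶠ ε in 𝓝 (0 : ℝ), ∀ k, ‖torusCoeff (H ε) k‖ ≤ δ := by
  have hsmall : ∀ᶠ ε in 𝓝 (0 : ℝ), ∀ p ∈ Icc (0 : ℝ) 1 ×ˢ Icc (0 : ℝ) 1, ‖H ε p‖ ≤ δ := by
    refine (isCompact_Icc.prod isCompact_Icc).eventually_forall_of_forall_eventually fun p _ => ?_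
    have htendsto := h.contDiff.continuous.norm.tendsto (0, p)
    simp only [Function.uncurry_apply_pair, h.zero, norm_zero] at htendsto
    exact htendsto.eventually (ge_mem_nhds hδ)
  exact hsmall.mono fun ε hε => norm_torusCoeff_le hε

lemma eventually_weight_pow_mul_le (h : VanishingFamily H) (N : ℕ) {δ : ℝ} (hδ : 0 < δ) :
    ∀ᶠ ε in 𝓝 (0 : ℝ), ∀ k, weight k ^ N * ‖torusCoeff (H ε) k‖ ≤ δ := by
  induction N generalizing H δ with
  | zero => simpa using h.eventually_norm_torusCoeff_le hδ
  | succ N ih =>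
    have hδ' : 0 < δ / 4 := by positivity
    filter_upwards [ih h hδ', ih h.dx hδ', ih h.dy hδ', ih h.dy.dx hδ'] with ε h₀ hx hy hxy k
    have hw := weight_pos k
    have hstep := mul_le_mul_of_nonneg_left ((h.periodic ε).weight_mul_norm_torusCoeff_le k)
      (pow_nonneg hw.le N)
    rw [pow_succ]
    linarith [h₀ k, hx k, hy k, hxy k]

end VanishingFamily

namespace SmoothPeriodic

variable {g : ℝ × ℝ → ℂ}

lemma vanishingFamily_smul (hg : SmoothPeriodic g) :
    VanishingFamily fun ε p => (ε : ℂ) * g p where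
  contDiff := (Complex.ofRealCLM.contDiff.comp contDiff_fst).mul (hg.contDiff.comp contDiff_snd)
  periodic ε :=
    ⟨contDiff_const.mul hg.contDiff, fun x y => by rw [hg.periodic_fst],
      fun x y => by rw [hg.periodic_snd]⟩
  zero p := by simp

lemma rapidDecay (hg : SmoothPeriodic g) : RapidDecay (torusCoeff g) := by
  intro N
  have hsmall := hg.vanishingFamily_smul.eventually_weight_pow_mul_le N one_pos
  obtain ⟨ε, hε, hpos⟩ := ((hsmall.filter_mono nhdsWithin_le_nhds).and
    (self_mem_nhdsWithin (s := Ioi (0 : ℝ)))).exists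
  refine ⟨ε⁻¹, fun k => ?_⟩
  have hk := hε k
  have hcoeff : torusCoeff (fun p => (ε : ℂ) * g p) k = ε * torusCoeff g k := by
    simp only [torusCoeff, circleCoeff_const_mul]
  rw [hcoeff, norm_mul, Complex.norm_real, Real.norm_of_nonneg (le_of_lt hpos),
    mul_left_comm] at hk
  rwa [← one_div, le_div_iff₀' hpos]

lemma hasSum_circleCoeff_fst (hg : SmoothPeriodic g) (k : ℤ) (y : ℝ) :
    HasSum (fun l => torusCoeff g (k, l) * character l y) (circleCoeff (fun x => g (x, y)) k) := by
  refine hasSum_circleCoeff (φ := fun y => circleCoeff (fun x => g (x, y)) k) ?_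
    (fun y => by simp only [hg.periodic_snd]) (hg.rapidDecay.summable.prod_factor k).of_norm y
  have hcont := hg.contDiff.continuous
  exact intervalIntegral.continuous_parametric_intervalIntegral_of_continuous' (by fun_prop) _ _

lemma fourierSeries_torusCoeff (hg : SmoothPeriodic g) : fourierSeries (torusCoeff g) = g := by
  ext ⟨x, y⟩
  have hs := hg.rapidDecay.summable
  have hle : ∀ k, ‖circleCoeff (fun x => g (x, y)) k‖ ≤ ∑' l, ‖torusCoeff g (k, l)‖ := by
    intro k
    rw [← (hg.hasSum_circleCoeff_fst k y).tsum_eq]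
    refine tsum_of_norm_bounded (hs.prod_factor k).hasSum fun l => ?_
    rw [norm_mul, norm_character, mul_one]
  have hsum := hasSum_circleCoeff (hg.contDiff.continuous.comp (Continuous.prodMk_left y))
    (fun x => hg.periodic_fst x y) (Summable.of_norm_bounded hs.prod hle) x
  rw [fourierSeries, (summable_fourierSeries hs (x, y)).tsum_prod]
  refine Eq.trans (tsum_congr fun k => ?_) hsum.tsum_eq
  refine Eq.trans (tsum_congr fun l => ?_)
    ((hg.hasSum_circleCoeff_fst k y).mul_right (character k x)).tsum_eq
  exact mul_right_comm _ _ _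

end SmoothPeriodic

lemma exists_periodic_eventuallyEq_id :
    ∃ ψ : ℝ → ℝ, ContDiff ℝ ∞ ψ ∧ (∀ t, ψ (t + 1) = ψ t) ∧ ∀ᶠ t in 𝓝 0, ψ t = t := by
  have harcsin : ∀ᶠ t in 𝓝 (0 : ℝ), ContDiffAt ℝ ∞ Real.arcsin t := by
    filter_upwards [Ioo_mem_nhds neg_one_lt_zero one_pos] with t ht
    exact Real.contDiffAt_arcsin ht.1.ne' ht.2.ne
  obtain ⟨E, hE, hEq⟩ := exists_contDiff_eventuallyEq harcsin
  refine ⟨fun t => E (Real.sin (2 * Real.pi * t)) / (2 * Real.pi), ?_, fun t => ?_, ?_⟩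
  · exact (hE.comp (Real.contDiff_sin.comp (contDiff_const.mul contDiff_id))).div_const _
  · simp only [mul_add, mul_one, Real.sin_add_two_pi]
  · have hsin : Tendsto (fun t : ℝ => Real.sin (2 * Real.pi * t)) (𝓝 0) (𝓝 0) := by
      have hcont : Continuous fun t : ℝ => Real.sin (2 * Real.pi * t) := by fun_prop
      simpa using hcont.tendsto 0
    have hquarter : Ioo (-(1 / 4) : ℝ) (1 / 4) ∈ 𝓝 (0 : ℝ) :=
      Ioo_mem_nhds (by norm_num) (by norm_num)
    have hpi := Real.pi_pos
    filter_upwards [hsin.eventually hEq, hquarter] with t ht hI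
    rw [ht, Real.arcsin_sin (by nlinarith [hI.1]) (by nlinarith [hI.2])]
    field_simp

/-- A smooth function of period `1` on the line that is the identity near `0`. -/
def periodicId : ℝ → ℝ := exists_periodic_eventuallyEq_id.choose

@[fun_prop]
lemma contDiff_periodicId : ContDiff ℝ ∞ periodicId :=
  exists_periodic_eventuallyEq_id.choose_spec.1

lemma periodicId_add_one (t : ℝ) : periodicId (t + 1) = periodicId t :=
  exists_periodic_eventuallyEq_id.choose_spec.2.1 t

/-- The periodization of the rescaled function `p ↦ ν (ε p)`, equal to it near the origin. -/
def periodize (ε : ℝ) (ν : ℝ × ℝ → ℂ) (p : ℝ × ℝ) : ℂ := ν (ε * periodicId p.1, ε * periodicId p.2)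

variable {ν : ℝ × ℝ → ℂ}

lemma eventually_periodize_eq (ε : ℝ) (ν : ℝ × ℝ → ℂ) :
    ∀ᶠ p in 𝓝 (0 : ℝ × ℝ), periodize ε ν p = ν (ε • p) := by
  have hid := exists_periodic_eventuallyEq_id.choose_spec.2.2
  filter_upwards [(continuous_fst.tendsto (0 : ℝ × ℝ)).eventually hid,
    (continuous_snd.tendsto (0 : ℝ × ℝ)).eventually hid] with p hp₁ hp₂
  simp only [periodize, periodicId, hp₁, hp₂]
  rfl

lemma smoothPeriodic_periodize (hν : ContDiff ℝ ∞ ν) (ε : ℝ) : SmoothPeriodic (periodize ε ν) where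
  contDiff := by unfold periodize; fun_prop
  periodic_fst x y := by simp only [periodize, periodicId_add_one]
  periodic_snd x y := by simp only [periodize, periodicId_add_one]

lemma exists_tsum_norm_torusCoeff_periodize_le (hν : ContDiff ℝ ∞ ν) (h0 : ν 0 = 0) {δ : ℝ}
    (hδ : 0 < δ) : ∃ ε : ℝ, 0 < ε ∧ ∑' k, ‖torusCoeff (periodize ε ν) k‖ ≤ δ := by
  have hfamily : VanishingFamily fun ε => periodize ε ν :=
    ⟨by unfold periodize Function.uncurry; fun_prop, smoothPeriodic_periodize hν,
      fun p => by simp only [periodize, zero_mul]; exact h0⟩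
  set S := ∑' k, (weight k ^ 2)⁻¹
  have hS : 0 ≤ S := tsum_nonneg fun k => by have := weight_pos k; positivity
  have hS' : 0 < S + 1 := by linarith
  have hsmall := hfamily.eventually_weight_pow_mul_le 2 (div_pos hδ hS')
  obtain ⟨ε, hε, hpos⟩ := ((hsmall.filter_mono nhdsWithin_le_nhds).and
    (self_mem_nhdsWithin (s := Ioi (0 : ℝ)))).exists
  refine ⟨ε, hpos, (tsum_norm_le_of_weight_sq_mul_le hε).trans ?_⟩
  rw [div_mul_eq_mul_div, div_le_iff₀ hS']
  nlinarith

end Coefficients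

/-! ### Smooth division by the fold `(x, y) ↦ (x², y)` -/

section Fold

/-- The Taylor coefficients of `t ↦ cos √t`. -/
def cosSqrtCoeff (n : ℕ) : ℝ := (-1) ^ n / ((2 * n).factorial : ℝ)

lemma norm_cosSqrtCoeff_succ_div_le (n : ℕ) :
    ‖cosSqrtCoeff n.succ‖ / ‖cosSqrtCoeff n‖ ≤ 1 / ((n : ℝ) + 1) := by
  have hsucc : ((2 * n.succ).factorial : ℝ) = (2 * n + 2) * ((2 * n + 1) * (2 * n).factorial) := by
    rw [show 2 * n.succ = 2 * n + 1 + 1 by lia, Nat.factorial_succ, Nat.factorial_succ]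
    push_cast
    ring
  have hpos : (0 : ℝ) < (2 * n).factorial := by positivity
  have hratio : ‖cosSqrtCoeff n.succ‖ / ‖cosSqrtCoeff n‖ = 1 / ((2 * n + 2) * (2 * n + 1)) := by
    simp only [cosSqrtCoeff, norm_div, norm_pow, norm_neg, norm_one, one_pow, hsucc]
    rw [Real.norm_of_nonneg (by positivity), Real.norm_of_nonneg hpos.le]
    field_simp
  rw [hratio]
  gcongr
  nlinarith [n.cast_nonneg (α := ℝ)]

lemma exists_contDiff_comp_sq_eq_cos :
    ∃ f : ℝ → ℝ, ContDiff ℝ ∞ f ∧ ∀ s, f (s ^ 2) = Real.cos s := by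
  let P := FormalMultilinearSeries.ofScalars ℝ cosSqrtCoeff
  have hradius : P.radius = ⊤ := by
    refine FormalMultilinearSeries.ofScalars_radius_eq_top_of_tendsto ℝ cosSqrtCoeff
      (Eventually.of_forall fun n => by unfold cosSqrtCoeff; positivity) ?_
    exact squeeze_zero (fun n => by positivity) norm_cosSqrtCoeff_succ_div_le
      tendsto_one_div_add_atTop_nhds_zero_nat
  have hball := P.hasFPowerSeriesOnBall (by rw [hradius]; simp)
  rw [hradius] at hball
  refine ⟨P.sum, contDiff_iff_contDiffAt.2 fun x =>
    (hball.analyticAt_of_mem (by simp)).contDiffAt, fun s => ?_⟩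
  change FormalMultilinearSeries.ofScalarsSum cosSqrtCoeff (s ^ 2) = _
  rw [FormalMultilinearSeries.ofScalarsSum_eq_tsum, ← (Real.hasSum_cos s).tsum_eq]
  refine tsum_congr fun n => ?_
  rw [cosSqrtCoeff, smul_eq_mul, ← pow_mul]
  ring

variable {f : ℝ → ℝ}

lemma hasDerivAt_iteratedDeriv (hf : ContDiff ℝ ∞ f) (n : ℕ) (t : ℝ) :
    HasDerivAt (iteratedDeriv n f) (iteratedDeriv (n + 1) f t) t := by
  rw [iteratedDeriv_succ]
  exact (hf.differentiable_iteratedDeriv n (by exact_mod_cast WithTop.coe_lt_top n) t).hasDerivAt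

lemma deriv_sq_mul_eq_neg_sin (hf : ContDiff ℝ ∞ f) (hcos : ∀ s, f (s ^ 2) = Real.cos s) (s : ℝ) :
    deriv f (s ^ 2) * (2 * s) = -Real.sin s := by
  have hcomp : HasDerivAt (fun s => f (s ^ 2)) (deriv f (s ^ 2) * (2 * s)) s := by
    simpa [Function.comp_def] using
      ((hf.differentiable (by simp) (s ^ 2)).hasDerivAt).comp s (hasDerivAt_pow 2 s)
  rw [funext hcos] at hcomp
  exact hcomp.unique (Real.hasDerivAt_cos s)

/-- Differentiating `f (s²) = cos s` twice gives `4t f'' + 2 f' + f = 0`; differentiating this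
equation `n` more times gives a recursion that controls the derivatives at infinity. -/
lemma iteratedDeriv_recursion (hf : ContDiff ℝ ∞ f) (hcos : ∀ s, f (s ^ 2) = Real.cos s) (n : ℕ) :
    ∀ t > 0, 4 * t * iteratedDeriv (n + 2) f t + (4 * n + 2) * iteratedDeriv (n + 1) f t +
      iteratedDeriv n f t = 0 := by
  induction n with
  | zero =>
    intro t ht
    have hcomp := (((hasDerivAt_iteratedDeriv hf 1 (√t ^ 2)).comp √t (hasDerivAt_pow 2 √t))).mul
      ((hasDerivAt_id √t).const_mul 2)
    have heq := hcomp.unique ((Real.hasDerivAt_sin √t).neg.congr_of_eventuallyEq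
      (Eventually.of_forall fun s => by
        simpa [iteratedDeriv_one] using deriv_sq_mul_eq_neg_sin hf hcos s))
    simp only [id, Function.comp_apply, ← hcos, Real.sq_sqrt ht.le] at heq
    simp only [iteratedDeriv_zero, iteratedDeriv_one, zero_add, Nat.cast_zero, mul_zero]
    norm_num at heq
    linear_combination heq - 4 * iteratedDeriv 2 f t * Real.sq_sqrt ht.le
  | succ n ih =>
    intro t ht
    have hsum := ((((hasDerivAt_id t).const_mul 4).mul (hasDerivAt_iteratedDeriv hf (n + 2) t)).add
      ((hasDerivAt_iteratedDeriv hf (n + 1) t).const_mul (4 * n + 2 : ℝ))).add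
      (hasDerivAt_iteratedDeriv hf n t)
    have heq := hsum.unique ((hasDerivAt_const t (0 : ℝ)).congr_of_eventuallyEq
      (by filter_upwards [Ioi_mem_nhds ht] with u hu using ih u hu))
    simp only [id, mul_one] at heq
    push_cast
    linarith

lemma abs_iteratedDeriv_add_two_le (hf : ContDiff ℝ ∞ f) (hcos : ∀ s, f (s ^ 2) = Real.cos s)
    {n : ℕ} {t : ℝ} (ht : 1 ≤ t) :
    |iteratedDeriv (n + 2) f t| ≤ (4 * n + 2) * |iteratedDeriv (n + 1) f t| +
      |iteratedDeriv n f t| := by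
  have hrec := iteratedDeriv_recursion hf hcos n t (by linarith)
  have hn : (0 : ℝ) ≤ 4 * n + 2 := by positivity
  calc |iteratedDeriv (n + 2) f t| ≤ 4 * t * |iteratedDeriv (n + 2) f t| :=
        le_mul_of_one_le_left (abs_nonneg _) (by linarith)
    _ = |(4 * n + 2) * iteratedDeriv (n + 1) f t + iteratedDeriv n f t| := by
        rw [← abs_of_nonneg (by linarith : 0 ≤ 4 * t), ← abs_mul, ← abs_neg]
        congr 1
        linarith
    _ ≤ |(4 * n + 2) * iteratedDeriv (n + 1) f t| + |iteratedDeriv n f t| := abs_add_le _ _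
    _ = _ := by rw [abs_mul, abs_of_nonneg hn]

lemma exists_abs_iteratedDeriv_le_Ici (hf : ContDiff ℝ ∞ f) (hcos : ∀ s, f (s ^ 2) = Real.cos s)
    (n : ℕ) : ∃ C, ∀ t ≥ 1, |iteratedDeriv n f t| ≤ C := by
  induction n using Nat.twoStepInduction with
  | zero =>
    refine ⟨1, fun t ht => ?_⟩
    rw [iteratedDeriv_zero, ← Real.sq_sqrt (zero_le_one.trans ht), hcos]
    exact Real.abs_cos_le_one _
  | one =>
    refine ⟨1, fun t ht => ?_⟩
    have hsin := congrArg (fun z : ℝ => |z|) (deriv_sq_mul_eq_neg_sin hf hcos √t)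
    rw [Real.sq_sqrt (zero_le_one.trans ht), abs_mul, abs_neg,
      abs_of_nonneg (by positivity : 0 ≤ 2 * √t)] at hsin
    rw [iteratedDeriv_one]
    nlinarith [abs_nonneg (deriv f t), Real.abs_sin_le_one √t, Real.one_le_sqrt.mpr ht]
  | more n ih₀ ih₁ =>
    obtain ⟨C₀, h₀⟩ := ih₀
    obtain ⟨C₁, h₁⟩ := ih₁
    refine ⟨(4 * n + 2) * C₁ + C₀, fun t ht => (abs_iteratedDeriv_add_two_le hf hcos ht).trans ?_⟩
    gcongr
    exacts [h₁ t ht, h₀ t ht]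

lemma exists_bounded_iteratedDeriv_comp_sq_eq_cos :
    ∃ f : ℝ → ℝ, ContDiff ℝ ∞ f ∧ (∀ s, f (s ^ 2) = Real.cos s) ∧
      ∀ n, ∃ C, ∀ t, |iteratedDeriv n f t| ≤ C := by
  obtain ⟨c, hc, hcos⟩ := exists_contDiff_comp_sq_eq_cos
  let f : ℝ → ℝ := fun t => Real.smoothTransition (t + 1) * c t
  have hf : ContDiff ℝ ∞ f :=
    (Real.smoothTransition.contDiff.comp (contDiff_id.add contDiff_const)).mul hc
  have hfcos : ∀ s, f (s ^ 2) = Real.cos s := fun s => by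
    simp only [f, Real.smoothTransition.one_of_one_le (by nlinarith [sq_nonneg s] :
      1 ≤ s ^ 2 + 1), one_mul, hcos]
  refine ⟨f, hf, hfcos, fun n => ?_⟩
  have hneg : ∀ t < -1, iteratedDeriv n f t = 0 := by
    intro t ht
    have hzero : f =ᶠ[𝓝 t] fun _ => 0 := by
      filter_upwards [Iio_mem_nhds ht] with u hu
      simp only [f, Real.smoothTransition.zero_of_nonpos (by linarith [mem_Iio.1 hu] : u + 1 ≤ 0),
        zero_mul]
    rw [hzero.iteratedDeriv_eq, iteratedDeriv_const]
    simp
  obtain ⟨C, hC⟩ := exists_abs_iteratedDeriv_le_Ici hf hfcos n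
  obtain ⟨K, hK⟩ := isCompact_Icc.exists_bound_of_continuousOn (s := Icc (-1 : ℝ) 1)
    (hf.continuous_iteratedDeriv n (by exact_mod_cast le_top)).continuousOn
  refine ⟨max C K, fun t => ?_⟩
  rcases le_total 1 t with h1 | h1
  · exact (hC t h1).trans (le_max_left _ _)
  · rcases lt_or_ge t (-1) with h2 | h2
    · rw [hneg t h2, abs_zero]
      exact ((abs_nonneg _).trans (hC 1 le_rfl)).trans (le_max_left _ _)
    · exact (hK t ⟨h2, h1⟩).trans (le_max_right _ _)

lemma character_eq_cos_add_sin_of_comp_sq (hf : ContDiff ℝ ∞ f)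
    (hcos : ∀ s, f (s ^ 2) = Real.cos s) (k : ℤ) (x : ℝ) :
    character k x = f ((2 * Real.pi * k) ^ 2 * x ^ 2) +
      x * (-(4 * Real.pi * Complex.I) * k * deriv f ((2 * Real.pi * k) ^ 2 * x ^ 2)) := by
  have hsin := deriv_sq_mul_eq_neg_sin hf hcos (2 * Real.pi * k * x)
  rw [← mul_pow, hcos, character_eq, Complex.exp_mul_I, ← Complex.ofReal_cos, ← Complex.ofReal_sin,
    ← neg_neg (Real.sin _), ← hsin]
  push_cast
  ring

lemma exists_eq_add_mul_comp_sq_complex {g : ℝ × ℝ → ℂ} (hg : ContDiff ℝ ∞ g) :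
    ∃ G₀ G₁ : ℝ × ℝ → ℂ, ContDiff ℝ ∞ G₀ ∧ ContDiff ℝ ∞ G₁ ∧
      ∀ᶠ p in 𝓝 (0 : ℝ × ℝ), g p = G₀ (p.1 ^ 2, p.2) + p.1 * G₁ (p.1 ^ 2, p.2) := by
  obtain ⟨f, hf, hcos, hbdd⟩ := exists_bounded_iteratedDeriv_comp_sq_eq_cos
  let D : ℕ → ℝ → ℂ := fun n t => ((iteratedDeriv n f t : ℝ) : ℂ)
  have hD : BoundedDerivTower D :=
    ⟨fun n => (hbdd n).imp fun C hC t => by simpa [D] using hC t,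
      fun n t => (hasDerivAt_iteratedDeriv hf n t).ofReal_comp⟩
  have hs := polynomialGrowth_const_mul_pow (2 * Real.pi) 2
  have hper := smoothPeriodic_periodize hg 1
  have ha₀ := hper.rapidDecay
  have ha₁ := ha₀.const_mul_fst (-(4 * Real.pi * Complex.I))
  refine ⟨_, _, contDiff_waveSeries hD hs ha₀ 0, contDiff_waveSeries hD hs ha₁ 1, ?_⟩
  filter_upwards [eventually_periodize_eq 1 g] with p hp
  rw [one_smul, ← hper.fourierSeries_torusCoeff] at hp
  rw [← hp, waveSeries, waveSeries, ← tsum_mul_left, ← (summable_waveTerm hD _ ha₀ 0 _).tsum_add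
    ((summable_waveTerm hD _ ha₁ 1 _).mul_left _), fourierSeries]
  refine tsum_congr fun k => ?_
  rw [character_eq_cos_add_sin_of_comp_sq hf hcos k.1 p.1]
  simp only [waveTerm, D, iteratedDeriv_zero, iteratedDeriv_one]
  ring

lemma exists_eq_add_mul_comp_sq {g : ℝ × ℝ → ℝ} (hg : ContDiff ℝ ∞ g) :
    ∃ G₀ G₁ : ℝ × ℝ → ℝ, ContDiff ℝ ∞ G₀ ∧ ContDiff ℝ ∞ G₁ ∧
      ∀ᶠ p in 𝓝 (0 : ℝ × ℝ), g p = G₀ (p.1 ^ 2, p.2) + p.1 * G₁ (p.1 ^ 2, p.2) := by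
  obtain ⟨G₀, G₁, hG₀, hG₁, hdecomp⟩ :=
    exists_eq_add_mul_comp_sq_complex (Complex.ofRealCLM.contDiff.comp hg)
  refine ⟨fun p => (G₀ p).re, fun p => (G₁ p).re, Complex.reCLM.contDiff.comp hG₀,
    Complex.reCLM.contDiff.comp hG₁, ?_⟩
  filter_upwards [hdecomp] with p hp
  simpa using congrArg Complex.re hp

end Fold

/-! ### The hyperbolic side -/

section Hyperbolic

lemma eventually_eq_of_fst_nonpos {A B : ℝ × ℝ → ℝ} (hA : Continuous A) (hB : Continuous B)
    (h : ∀ᶠ p in 𝓝 (0 : ℝ × ℝ), p.1 < 0 → A p = B p) :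
    ∀ᶠ p in 𝓝 (0 : ℝ × ℝ), p.1 ≤ 0 → A p = B p := by
  filter_upwards [h.eventually_nhds] with p hp hle
  rcases hle.lt_or_eq with hneg | hzero
  · exact hp.self_of_nhds hneg
  · have hline : Tendsto (fun t : ℝ => ((t, p.2) : ℝ × ℝ)) (𝓝[<] 0) (𝓝 p) :=
      ((Continuous.prodMk_left p.2).tendsto' 0 p (Prod.ext hzero.symm rfl)).mono_left
        nhdsWithin_le_nhds
    refine tendsto_nhds_unique_of_eventuallyEq ((hA.tendsto p).comp hline)
      ((hB.tendsto p).comp hline) ?_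
    filter_upwards [hline.eventually hp, self_mem_nhdsWithin] with t ht hneg using ht hneg

lemma hasFDerivAt_comp_fst {F : Type*} [NormedAddCommGroup F] [NormedSpace ℝ F] {G : ℝ × ℝ → F}
    (hG : ContDiff ℝ ∞ G) {φ : ℝ → ℝ} {φ' : ℝ} {p : ℝ × ℝ} (hφ : HasDerivAt φ φ' p.1) :
    HasFDerivAt (fun q : ℝ × ℝ => G (φ q.1, q.2))
      (dxdy (φ' • Dx G (φ p.1, p.2)) (Dy G (φ p.1, p.2))) p := by
  have hinner : HasFDerivAt (fun q : ℝ × ℝ => (φ q.1, q.2)) ((dxdy φ' 0).prod (dxdy 0 1)) p := by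
    refine HasFDerivAt.prodMk ?_ (hasFDerivAt_snd.congr_fderiv (by ext <;> simp))
    exact (hφ.comp_hasFDerivAt p hasFDerivAt_fst).congr_fderiv (by ext <;> simp)
  refine ((hasFDerivAt_dxdy hG (φ p.1, p.2)).comp p hinner).congr_fderiv ?_
  ext <;> simp

variable {b m G₀ G₁ : ℝ × ℝ → ℝ}

lemma hasFDerivAt_add_mul_comp_sq (hG₀ : ContDiff ℝ ∞ G₀) (hG₁ : ContDiff ℝ ∞ G₁) (p : ℝ × ℝ) :
    HasFDerivAt (fun p : ℝ × ℝ => G₀ (p.1 ^ 2, p.2) + p.1 * G₁ (p.1 ^ 2, p.2))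
      (dxdy (2 * p.1 * Dx G₀ (p.1 ^ 2, p.2) + G₁ (p.1 ^ 2, p.2) +
          2 * p.1 ^ 2 * Dx G₁ (p.1 ^ 2, p.2))
        (Dy G₀ (p.1 ^ 2, p.2) + p.1 * Dy G₁ (p.1 ^ 2, p.2))) p := by
  have hsq : HasDerivAt (fun x : ℝ => x ^ 2) (2 * p.1) p.1 := by simpa using hasDerivAt_pow 2 p.1
  refine ((hasFDerivAt_comp_fst hG₀ hsq).add
    (hasFDerivAt_fst.mul (hasFDerivAt_comp_fst hG₁ hsq))).congr_fderiv ?_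
  ext
  · simp
    ring
  · simp

/-- On `x < 0` the transport equation, pulled back by the fold `x = -s²`, holds at both `s = √(-x)`
and `s = -√(-x)`; these are its even and odd parts in `s`. -/
lemma even_odd_parts_of_transport {I : ℝ × ℝ → ℝ} (hG₀ : ContDiff ℝ ∞ G₀) (hG₁ : ContDiff ℝ ∞ G₁)
    (hI : ∀ᶠ q in 𝓝 (0 : ℝ × ℝ), I q = G₀ (q.1 ^ 2, q.2) + q.1 * G₁ (q.1 ^ 2, q.2))
    (htransport : ∀ᶠ q in 𝓝 (0 : ℝ × ℝ),
      Dx I q + 2 * q.1 * (b (-q.1 ^ 2, q.2) + q.1 * m (-q.1 ^ 2, q.2)) * Dy I q = 0) :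
    ∀ᶠ p in 𝓝 (0 : ℝ × ℝ), p.1 < 0 →
      G₁ (-p.1, p.2) = 2 * p.1 * (m p * Dy G₀ (-p.1, p.2) + b p * Dy G₁ (-p.1, p.2) +
        Dx G₁ (-p.1, p.2)) ∧
      Dx G₀ (-p.1, p.2) + b p * Dy G₀ (-p.1, p.2) - p.1 * m p * Dy G₁ (-p.1, p.2) = 0 := by
  have hpulled : ∀ᶠ q in 𝓝 (0 : ℝ × ℝ),
      2 * q.1 * Dx G₀ (q.1 ^ 2, q.2) + G₁ (q.1 ^ 2, q.2) + 2 * q.1 ^ 2 * Dx G₁ (q.1 ^ 2, q.2) +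
        2 * q.1 * (b (-q.1 ^ 2, q.2) + q.1 * m (-q.1 ^ 2, q.2)) *
          (Dy G₀ (q.1 ^ 2, q.2) + q.1 * Dy G₁ (q.1 ^ 2, q.2)) = 0 := by
    filter_upwards [hI.eventually_nhds, htransport] with q hIq hq
    have hderiv := (hasFDerivAt_add_mul_comp_sq hG₀ hG₁ q).congr_of_eventuallyEq hIq
    rwa [Dx_eq_of_hasFDerivAt hderiv, Dy_eq_of_hasFDerivAt hderiv] at hq
  have hroot (ε : ℝ) : Tendsto (fun p : ℝ × ℝ => (ε * √(-p.1), p.2)) (𝓝 0) (𝓝 0) :=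
    Continuous.tendsto' (by fun_prop) 0 0 (by simp)
  filter_upwards [(hroot 1).eventually hpulled, (hroot (-1)).eventually hpulled]
    with p hplus hminus hp
  have hsqrt_pos : 0 < √(-p.1) := Real.sqrt_pos.mpr (by linarith)
  have hsq : √(-p.1) ^ 2 = -p.1 := Real.sq_sqrt (by linarith)
  simp only [one_mul, neg_mul, neg_sq, hsq, neg_neg, Prod.mk.eta] at hplus hminus
  refine ⟨?_, (mul_eq_zero.mp (?_ : √(-p.1) * _ = 0)).resolve_left hsqrt_pos.ne'⟩
  · linear_combination (1 / 2) * hplus + (1 / 2) * hminus -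
      (2 * m p * Dy G₀ (-p.1, p.2) + 2 * b p * Dy G₁ (-p.1, p.2)) * hsq
  · linear_combination (1 / 4) * hplus - (1 / 4) * hminus -
      √(-p.1) * m p * Dy G₁ (-p.1, p.2) * hsq

lemma normalizingSystem_of_even_odd_parts (hb : ContDiff ℝ ∞ b) (hm : ContDiff ℝ ∞ m)
    (hG₀ : ContDiff ℝ ∞ G₀) (hG₁ : ContDiff ℝ ∞ G₁)
    (h : ∀ᶠ p in 𝓝 (0 : ℝ × ℝ), p.1 < 0 →
      G₁ (-p.1, p.2) = 2 * p.1 * (m p * Dy G₀ (-p.1, p.2) + b p * Dy G₁ (-p.1, p.2) +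
        Dx G₁ (-p.1, p.2)) ∧
      Dx G₀ (-p.1, p.2) + b p * Dy G₀ (-p.1, p.2) - p.1 * m p * Dy G₁ (-p.1, p.2) = 0) :
    ∀ᶠ p in 𝓝 (0 : ℝ × ℝ), p.1 < 0 → NormalizingSystem b m (fun p => G₀ (-p.1, p.2))
      (fun p => 3 * (m p * Dy G₀ (-p.1, p.2) + b p * Dy G₁ (-p.1, p.2) + Dx G₁ (-p.1, p.2))) p := by
  set Z : ℝ × ℝ → ℝ :=
    fun p => 3 * (m p * Dy G₀ (-p.1, p.2) + b p * Dy G₁ (-p.1, p.2) + Dx G₁ (-p.1, p.2)) with hZdef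
  have hZ : ContDiff ℝ ∞ Z := by fun_prop
  filter_upwards [h.eventually_nhds] with p hp hneg
  have hflip : HasDerivAt (fun x : ℝ => -x) (-1) p.1 := hasDerivAt_neg p.1
  have hG₁Z : (fun q : ℝ × ℝ => 2 / 3 * q.1 * Z q) =ᶠ[𝓝 p] fun q => G₁ (-q.1, q.2) := by
    filter_upwards [hp, continuousAt_fst.eventually (gt_mem_nhds hneg)] with q hq hqneg
    rw [(hq hqneg).1, hZdef]
    ring
  have hderivZ : HasFDerivAt (fun q : ℝ × ℝ => 2 / 3 * q.1 * Z q)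
      (dxdy (2 / 3 * Z p + 2 / 3 * p.1 * Dx Z p) (2 / 3 * p.1 * Dy Z p)) p := by
    refine ((hasFDerivAt_fst.const_mul (2 / 3 : ℝ)).mul (hasFDerivAt_dxdy hZ p)).congr_fderiv ?_
    ext
    · simp
      ring
    · simp
  have hderivG₁ := (hasFDerivAt_comp_fst hG₁ hflip).congr_of_eventuallyEq hG₁Z
  have hDx := (Dx_eq_of_hasFDerivAt hderivZ).symm.trans (Dx_eq_of_hasFDerivAt hderivG₁)
  have hDy := (Dy_eq_of_hasFDerivAt hderivZ).symm.trans (Dy_eq_of_hasFDerivAt hderivG₁)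
  rw [neg_one_smul] at hDx
  rw [NormalizingSystem, hDy, Dx_eq_of_hasFDerivAt (hasFDerivAt_comp_fst hG₀ hflip),
    Dy_eq_of_hasFDerivAt (hasFDerivAt_comp_fst hG₀ hflip), neg_one_smul]
  exact ⟨by linarith [(hp.self_of_nhds hneg).2], by linarith⟩

lemma exists_normalizingSystem_of_fst_neg (hb : ContDiff ℝ ∞ b) (hm : ContDiff ℝ ∞ m)
    (hm0 : 0 < m 0) :
    ∃ Y Z : ℝ × ℝ → ℝ, ContDiff ℝ ∞ Y ∧ ContDiff ℝ ∞ Z ∧ Y 0 = 0 ∧ Dy Y 0 ≠ 0 ∧ 0 < Z 0 ∧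
      ∀ᶠ p in 𝓝 (0 : ℝ × ℝ), p.1 < 0 → NormalizingSystem b m Y Z p := by
  obtain ⟨I, hI, hI0, htransport⟩ := exists_first_integral
    (B := fun q : ℝ × ℝ => 2 * q.1 * (b (-q.1 ^ 2, q.2) + q.1 * m (-q.1 ^ 2, q.2))) (by fun_prop)
  obtain ⟨G₀, G₁, hG₀, hG₁, hfold⟩ := exists_eq_add_mul_comp_sq hI
  have hsys := normalizingSystem_of_even_odd_parts hb hm hG₀ hG₁
    (even_odd_parts_of_transport hG₀ hG₁ hfold htransport)
  set Y : ℝ × ℝ → ℝ := fun p => G₀ (-p.1, p.2)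
  set Z : ℝ × ℝ → ℝ :=
    fun p => 3 * (m p * Dy G₀ (-p.1, p.2) + b p * Dy G₁ (-p.1, p.2) + Dx G₁ (-p.1, p.2))
  have hY : ContDiff ℝ ∞ Y := by fun_prop
  have hZ : ContDiff ℝ ∞ Z := by fun_prop
  have hYaxis : ∀ᶠ y in 𝓝 (0 : ℝ), Y (0, y) = y := by
    filter_upwards [hI0, ((Continuous.prodMk_right (0 : ℝ)).tendsto' 0 0 rfl).eventually hfold]
      with y hIy hy
    simp only [hIy, ne_eq, OfNat.ofNat_ne_zero, not_false_eq_true, zero_pow, zero_mul,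
      add_zero] at hy
    simp only [Y, neg_zero, ← hy]
  have hDyY : Dy Y 0 = 1 :=
    (hasDerivAt_Dy hY 0 0).unique ((hasDerivAt_id (0 : ℝ)).congr_of_eventuallyEq hYaxis)
  have hZ0 : Z 0 = m 0 := by
    have hclosed := eventually_eq_of_fst_nonpos (A := fun p => Z p + 2 / 3 * p.1 * Dx Z p)
      (B := fun p => m p * Dy Y p + b p * (2 / 3 * p.1 * Dy Z p))
      (ContDiff.continuous (𝕜 := ℝ) (n := ∞) (by fun_prop))
      (ContDiff.continuous (𝕜 := ℝ) (n := ∞) (by fun_prop)) (hsys.mono fun p hp hneg => (hp hneg).2)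
    simpa [hDyY] using hclosed.self_of_nhds le_rfl
  exact ⟨Y, Z, hY, hZ, hYaxis.self_of_nhds, by simp [hDyY], hZ0 ▸ hm0, hsys⟩

lemma exists_pullsBackAt_normalizingMap_reducedForm {u Y : ℝ × ℝ → ℝ} (hb : ContDiff ℝ ∞ b)
    (hm : ContDiff ℝ ∞ m) (hm0 : 0 < m 0) (hu : ContDiff ℝ ∞ u) (hu0 : 0 < u 0)
    (hh : IsLocalDiffeo (normalizingMap u Y)) (hY : ContDiff ℝ ∞ Y) :
    ∃ b' m' ρ : ℝ × ℝ → ℝ, ContDiff ℝ ∞ b' ∧ ContDiff ℝ ∞ m' ∧ ContDiff ℝ ∞ ρ ∧ 0 < m' 0 ∧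
      ρ 0 ≠ 0 ∧
      ∀ᶠ p in 𝓝 0, PullsBackAt (normalizingMap u Y) ρ (reducedForm b m) (reducedForm b' m') p := by
  have hune : ∀ᶠ p in 𝓝 (0 : ℝ × ℝ), u p ≠ 0 := hu.continuous.continuousAt.eventually_ne hu0.ne'
  obtain ⟨k, hk, hkeq⟩ := exists_contDiff_eventuallyEq (f := fun p => m p / u p) (a := (0 : ℝ × ℝ))
    (hune.mono fun p hp => hm.contDiffAt.div hu.contDiffAt hp)
  have hk0 : k 0 ≠ 0 := hkeq.self_of_nhds ▸ (div_pos hm0 hu0).ne'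
  rw [reducedForm_eq_BDE b m]
  refine exists_pullsBackAt_reducedForm contDiff_const hb (by fun_prop) hk hh hk0 ?_ ?_
  · filter_upwards [hkeq, hune] with p hkp hup
    rw [hkp, normalizingMap]
    field_simp
    ring
  · intro v hv hv1
    have hv10 : v.1 = 0 := by
      simpa [(hasFDerivAt_normalizingMap hu hY 0).fderiv, hu0.ne'] using hv1
    have hv2 : v.2 ≠ 0 := fun h => hv (Prod.ext hv10 h)
    simp [BDE, hv10, hv2, sq_pos_of_ne_zero]

/-- The normalizing map exists as a smooth germ on both sides of the axis, but it normalizes the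
form only where the system was solved. -/
theorem exists_germEquiv_standard_of_fst_neg (hb : ContDiff ℝ ∞ b) (hm : ContDiff ℝ ∞ m)
    (hm0 : 0 < m 0) :
    ∃ b' m' : ℝ × ℝ → ℝ, ContDiff ℝ ∞ b' ∧ ContDiff ℝ ∞ m' ∧
      GermEquiv (reducedForm b m) (reducedForm b' m') ∧
      ∀ᶠ p in 𝓝 (0 : ℝ × ℝ), p.1 < 0 → b' p = 0 ∧ m' p = 1 := by
  obtain ⟨Y, Z, hY, hZ, hY0, hDyY, hZ0, hsys⟩ := exists_normalizingSystem_of_fst_neg hb hm hm0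
  obtain ⟨u, hu, hu0, huZ⟩ := exists_cube_root hZ hZ0
  have hh := isLocalDiffeo_normalizingMap hu hY hu0.ne' hY0 hDyY
  obtain ⟨b', m', ρ', hb', hm', hρ', hm'0, hρ'0, hpull'⟩ :=
    exists_pullsBackAt_normalizingMap_reducedForm hb hm hm0 hu hu0 hh hY
  refine ⟨b', m', hb', hm', ⟨_, ρ', hh, hρ', hρ'0, hpull'⟩, ?_⟩
  set h := normalizingMap u Y
  let ρ : ℝ × ℝ → ℝ := fun p => Dy Y p ^ 2 + p.1 * (2 / 3 * p.1 * Dy Z p) ^ 2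
  have hρ : ContDiff ℝ ∞ ρ := by fun_prop
  have hρne : ∀ᶠ p in 𝓝 0, ρ p ≠ 0 :=
    hρ.continuous.continuousAt.eventually_ne (by simpa [ρ] using hDyY)
  have hpull : ∀ᶠ p in 𝓝 (0 : ℝ × ℝ), p.1 < 0 →
      PullsBackAt h ρ (reducedForm b m) (reducedForm (fun _ => 0) (fun _ => 1)) p := by
    filter_upwards [hsys, huZ.eventually_nhds] with p hp huZp hneg
      using pullsBackAt_normalizingMap hu hY huZp (hp hneg)
  obtain ⟨g, hg, -, hhg⟩ := hh.exists_inverse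
  filter_upwards [hhg.eventually_nhds, hg.tendsto_zero.eventually (hpull.and (hpull'.and hρne)),
    hm'.continuous.continuousAt.eventually (lt_mem_nhds hm'0)]
    with q hhgq ⟨hpullq, hpullq', hρq⟩ hm'q hneg
  have hgq : (g q).1 < 0 := by
    have hfst : q.1 = (g q).1 * u (g q) ^ 2 := congrArg Prod.fst hhgq.self_of_nhds.symm
    nlinarith [sq_nonneg (u (g q))]
  have hinv := IsLocalDiffeo.fderiv_comp_eq_id_of_leftInverse hh.contDiff hg.contDiff hhgq
  refine eq_of_reducedForm_proportional (b := fun _ => 0) (m := fun _ => 1) (r := ρ (g q))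
    (r' := ρ' (g q)) hneg.ne one_pos hm'q hρq
    fun w => ?_
  have hstd := hpullq hgq (fderiv ℝ g q w)
  have hred := hpullq' (fderiv ℝ g q w)
  have hw : fderiv ℝ h (g q) (fderiv ℝ g q w) = w := DFunLike.congr_fun hinv w
  rw [hhgq.self_of_nhds, hw] at hstd hred
  rw [hstd, hred]
  ring

end Hyperbolic

/-! ### Gluing along the axis `x = 0` -/

section Glue

variable {F : Type*} {a c f g : ℝ × ℝ → F} {p : ℝ × ℝ}

/-- The function equal to `a` on the right half plane `x > 0` and to `c` on its complement. -/
def glue (a c : ℝ × ℝ → F) (p : ℝ × ℝ) : F := if 0 < p.1 then a p else c p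

lemma glue_of_pos (hp : 0 < p.1) : glue a c p = a p := if_pos hp

lemma glue_of_nonpos (hp : p.1 ≤ 0) : glue a c p = c p := if_neg hp.not_gt

lemma glue_eventuallyEq_of_pos (hp : 0 < p.1) : glue a c =ᶠ[𝓝 p] a := by
  filter_upwards [continuousAt_fst.eventually (lt_mem_nhds hp)] with q hq using glue_of_pos hq

lemma glue_eventuallyEq_of_neg (hp : p.1 < 0) : glue a c =ᶠ[𝓝 p] c := by
  filter_upwards [continuousAt_fst.eventually (gt_mem_nhds hp)] with q hq using glue_of_nonpos hq.le

variable [NormedAddCommGroup F] [NormedSpace ℝ F]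

lemma hasFDerivAt_glue {L : ℝ × ℝ →L[ℝ] F} (ha : HasFDerivAt a L p) (hc : HasFDerivAt c L p)
    (h : a p = c p) : HasFDerivAt (glue a c) L p := by
  have hp : glue a c p = a p := by unfold glue; split_ifs <;> simp [h]
  have hright : HasFDerivWithinAt (glue a c) L {q | 0 < q.1} p :=
    ha.hasFDerivWithinAt.congr (fun q hq => glue_of_pos hq) hp
  have hleft : HasFDerivWithinAt (glue a c) L {q | q.1 ≤ 0} p :=
    hc.hasFDerivWithinAt.congr (fun q hq => glue_of_nonpos hq) (hp.trans h)
  rw [← hasFDerivWithinAt_univ]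
  convert hright.union hleft
  ext q
  simp [lt_or_ge]

lemma contDiff_iterate_Dx (hf : ContDiff ℝ ∞ f) (j : ℕ) : ContDiff ℝ ∞ (Dx^[j] f) := by
  induction j with
  | zero => exact hf
  | succ n ih =>
    rw [Function.iterate_succ_apply']
    exact contDiff_Dx ih

lemma iterate_Dx_Dy (hf : ContDiff ℝ ∞ f) (j : ℕ) : Dx^[j] (Dy f) = Dy (Dx^[j] f) := by
  induction j with
  | zero => rfl
  | succ n ih =>
    rw [Function.iterate_succ_apply', Function.iterate_succ_apply', ih]
    exact funext fun p => Dx_Dy_comm (contDiff_iterate_Dx hf n) p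

lemma iterate_Dx_eq_iteratedDeriv (hf : ContDiff ℝ ∞ f) (j : ℕ) (x y : ℝ) :
    (Dx^[j] f) (x, y) = iteratedDeriv j (fun s => f (s, y)) x := by
  induction j generalizing x with
  | zero => simp
  | succ n ih =>
    rw [Function.iterate_succ_apply', iteratedDeriv_succ,
      ← (hasDerivAt_Dx (contDiff_iterate_Dx hf n) x y).deriv]
    exact congrArg (fun φ : ℝ → F => deriv φ x) (funext ih)

lemma iterate_Dx_add (hf : ContDiff ℝ ∞ f) (hg : ContDiff ℝ ∞ g) (j : ℕ) :
    Dx^[j] (fun p => f p + g p) = fun p => (Dx^[j] f) p + (Dx^[j] g) p := by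
  ext ⟨x, y⟩
  have hslice {φ : ℝ × ℝ → F} (hφ : ContDiff ℝ ∞ φ) : ContDiffAt ℝ j (fun s => φ (s, y)) x :=
    (hφ.of_le (mod_cast le_top)).contDiffAt.comp x (by fun_prop)
  rw [iterate_Dx_eq_iteratedDeriv (hf.add hg), iterate_Dx_eq_iteratedDeriv hf,
    iterate_Dx_eq_iteratedDeriv hg, iteratedDeriv_fun_add (hslice hf) (hslice hg)]

lemma iterate_Dx_snd_smul {χ : ℝ → ℝ} (hχ : ContDiff ℝ ∞ χ) (hf : ContDiff ℝ ∞ f) (j : ℕ) :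
    Dx^[j] (fun p => χ p.2 • f p) = fun p => χ p.2 • (Dx^[j] f) p := by
  ext ⟨x, y⟩
  rw [iterate_Dx_eq_iteratedDeriv (by fun_prop), iterate_Dx_eq_iteratedDeriv hf]
  exact iteratedDeriv_fun_const_smul_field (χ y) fun s => f (s, y)

/-- Agreement of all `x`-derivatives along the axis `x = 0`. -/
def AxisJetEq (a c : ℝ × ℝ → F) : Prop := ∀ (j : ℕ) (y : ℝ), (Dx^[j] a) (0, y) = (Dx^[j] c) (0, y)

lemma AxisJetEq.dx (h : AxisJetEq a c) : AxisJetEq (Dx a) (Dx c) := fun j => h (j + 1)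

lemma Dy_eq_of_eventually_axis_eq (hf : ContDiff ℝ ∞ f) (hg : ContDiff ℝ ∞ g) {x y : ℝ}
    (h : ∀ᶠ z in 𝓝 y, f (x, z) = g (x, z)) : Dy f (x, y) = Dy g (x, y) :=
  (hasDerivAt_Dy hf x y).unique ((hasDerivAt_Dy hg x y).congr_of_eventuallyEq h)

lemma AxisJetEq.dy (h : AxisJetEq a c) (ha : ContDiff ℝ ∞ a) (hc : ContDiff ℝ ∞ c) :
    AxisJetEq (Dy a) (Dy c) := fun j y => by
  rw [iterate_Dx_Dy ha, iterate_Dx_Dy hc]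
  exact Dy_eq_of_eventually_axis_eq (contDiff_iterate_Dx ha j) (contDiff_iterate_Dx hc j)
    (Eventually.of_forall (h j))

lemma AxisJetEq.hasFDerivAt_glue (h : AxisJetEq a c) (ha : ContDiff ℝ ∞ a) (hc : ContDiff ℝ ∞ c)
    (p : ℝ × ℝ) :
    HasFDerivAt (glue a c) (dxdy (glue (Dx a) (Dx c) p) (glue (Dy a) (Dy c) p)) p := by
  rcases lt_trichotomy p.1 0 with hp | hp | hp
  · rw [glue_of_nonpos hp.le, glue_of_nonpos hp.le]
    exact (hasFDerivAt_dxdy hc p).congr_of_eventuallyEq (glue_eventuallyEq_of_neg hp)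
  · obtain ⟨x, y⟩ := p
    obtain rfl : x = 0 := hp
    rw [glue_of_nonpos le_rfl, glue_of_nonpos le_rfl]
    refine Cibrario.hasFDerivAt_glue ?_ (hasFDerivAt_dxdy hc _) (h 0 y)
    have hdx : Dx a (0, y) = Dx c (0, y) := h 1 y
    have hdy : Dy a (0, y) = Dy c (0, y) := h.dy ha hc 0 y
    rw [← hdx, ← hdy]
    exact hasFDerivAt_dxdy ha _
  · rw [glue_of_pos hp, glue_of_pos hp]
    exact (hasFDerivAt_dxdy ha p).congr_of_eventuallyEq (glue_eventuallyEq_of_pos hp)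

lemma AxisJetEq.contDiff_glue (h : AxisJetEq a c) (ha : ContDiff ℝ ∞ a) (hc : ContDiff ℝ ∞ c) :
    ContDiff ℝ ∞ (glue a c) := by
  refine contDiff_of_closed_under_partials (fun f => ∃ a c, AxisJetEq a c ∧ ContDiff ℝ ∞ a ∧
    ContDiff ℝ ∞ c ∧ f = glue a c) ?_ ⟨a, c, h, ha, hc, rfl⟩
  rintro _ ⟨a, c, h, ha, hc, rfl⟩
  exact ⟨_, _, ⟨_, _, h.dx, contDiff_Dx ha, contDiff_Dx hc, rfl⟩,
    ⟨_, _, h.dy ha hc, contDiff_Dy ha, contDiff_Dy hc, rfl⟩, h.hasFDerivAt_glue ha hc⟩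

lemma exists_contDiff_eventuallyEq_glue (ha : ContDiff ℝ ∞ a) (hc : ContDiff ℝ ∞ c)
    (h : ∀ᶠ y in 𝓝 (0 : ℝ), ∀ j, (Dx^[j] a) (0, y) = (Dx^[j] c) (0, y)) :
    ∃ g : ℝ × ℝ → F, ContDiff ℝ ∞ g ∧ g =ᶠ[𝓝 0] glue a c := by
  obtain ⟨δ, hδ, hball⟩ := Metric.eventually_nhds_iff_ball.1 h
  let χ : ContDiffBump (0 : ℝ) := ⟨δ / 2, δ, by positivity, by linarith⟩
  have hχ : ContDiff ℝ ∞ χ := χ.contDiff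
  have hd : ContDiff ℝ ∞ (fun p => a p - c p) := ha.sub hc
  let a' : ℝ × ℝ → F := fun p => χ p.2 • (a p - c p) + c p
  have ha' : ContDiff ℝ ∞ a' := by fun_prop
  have hdiff (j : ℕ) (p : ℝ × ℝ) : (Dx^[j] a) p = (Dx^[j] fun p => a p - c p) p + (Dx^[j] c) p := by
    rw [← congrFun (iterate_Dx_add hd hc j) p]
    simp
  have hjet : AxisJetEq a' c := fun j y => by
    rw [iterate_Dx_add (by fun_prop) hc, iterate_Dx_snd_smul hχ hd]
    by_cases hy : y ∈ Metric.ball 0 δ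
    · have hzero : (Dx^[j] fun p => a p - c p) (0, y) = 0 := by
        simpa [hball y hy j] using hdiff j (0, y)
      simp [hzero]
    · simp [χ.zero_of_le_dist (not_lt.1 hy)]
  refine ⟨glue a' c, hjet.contDiff_glue ha' hc, ?_⟩
  filter_upwards [continuousAt_snd.eventually χ.eventuallyEq_one] with p hp
  simp only [glue, a', hp, Pi.one_apply, one_smul, sub_add_cancel]

end Glue

/-! ### Smooth functions supported in `x ≥ 0` -/

section VanishesLeft

variable {F : Type*} [NormedAddCommGroup F] [NormedSpace ℝ F] {D E : ℝ × ℝ → F}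

/-- Smooth functions vanishing on the left half plane; they are flat along the axis `x = 0`, which
makes them stable under the singular substitution `rootSubst`. -/
structure VanishesLeft (D : ℝ × ℝ → F) : Prop where
  contDiff : ContDiff ℝ ∞ D
  eq_zero : ∀ p : ℝ × ℝ, p.1 ≤ 0 → D p = 0

namespace VanishesLeft

lemma dx (h : VanishesLeft D) : VanishesLeft (Dx D) := by
  refine ⟨contDiff_Dx h.contDiff, fun ⟨x, y⟩ hx => ?_⟩
  have hzero : HasDerivWithinAt (fun s => D (s, y)) 0 (Iic x) x :=
    (hasDerivWithinAt_const x (Iic x) (0 : F)).congr (fun s hs => h.eq_zero _ (le_trans hs hx))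
      (h.eq_zero _ hx)
  exact (uniqueDiffOn_Iic x x (mem_Iic.mpr le_rfl)).eq_deriv _
    (hasDerivAt_Dx h.contDiff x y).hasDerivWithinAt hzero

lemma dy (h : VanishesLeft D) : VanishesLeft (Dy D) := by
  refine ⟨contDiff_Dy h.contDiff, fun ⟨x, y⟩ hx => ?_⟩
  exact (hasDerivAt_Dy h.contDiff x y).unique ((hasDerivAt_const y (0 : F)).congr_of_eventuallyEq
    (Eventually.of_forall fun s => h.eq_zero _ hx))

lemma iterate_dx (h : VanishesLeft D) (j : ℕ) : VanishesLeft (Dx^[j] D) := by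
  induction j with
  | zero => exact h
  | succ n ih =>
    rw [Function.iterate_succ_apply']
    exact ih.dx

lemma smul (h : VanishesLeft D) {φ : ℝ × ℝ → ℝ} (hφ : ContDiff ℝ ∞ φ) :
    VanishesLeft (fun p => φ p • D p) :=
  ⟨hφ.smul h.contDiff, fun p hp => by simp [h.eq_zero p hp]⟩

lemma add (hD : VanishesLeft D) (hE : VanishesLeft E) : VanishesLeft (fun p => D p + E p) :=
  ⟨hD.contDiff.add hE.contDiff, fun p hp => by simp [hD.eq_zero p hp, hE.eq_zero p hp]⟩

lemma exists_norm_le_mul_pow (h : VanishesLeft D) (R : ℝ) (N : ℕ) :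
    ∃ C, 0 ≤ C ∧ ∀ x y, 0 ≤ x → x ≤ R → |y| ≤ R → ‖D (x, y)‖ ≤ C * x ^ N := by
  induction N generalizing D with
  | zero =>
    obtain ⟨C, hC⟩ := (isCompact_Icc.prod isCompact_Icc).exists_bound_of_continuousOn
      (s := Icc 0 R ×ˢ Icc (-R) R) h.contDiff.continuous.continuousOn
    refine ⟨max C 0, le_max_right _ _, fun x y hx hxR hy => ?_⟩
    rw [pow_zero, mul_one]
    exact (hC (x, y) ⟨⟨hx, hxR⟩, abs_le.mp hy⟩).trans (le_max_left _ _)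
  | succ n ih =>
    obtain ⟨C, hC0, hC⟩ := ih h.dx
    refine ⟨C, hC0, fun x y hx hxR hy => ?_⟩
    have hderiv : ∀ s ∈ Icc 0 x, ‖Dx D (s, y)‖ ≤ C * x ^ n := fun s hs =>
      (hC s y hs.1 (hs.2.trans hxR) hy).trans (by gcongr; exacts [hs.1, hs.2])
    have hmvt := (convex_Icc 0 x).norm_image_sub_le_of_norm_hasDerivWithin_le
      (fun s _ => (hasDerivAt_Dx h.contDiff s y).hasDerivWithinAt) hderiv ⟨le_rfl, hx⟩ ⟨hx, le_rfl⟩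
    rwa [h.eq_zero (0, y) le_rfl, sub_zero, sub_zero, Real.norm_of_nonneg hx, mul_assoc,
      ← pow_succ] at hmvt

end VanishesLeft

/-- The substitution `x ↦ κ x ^ θ` weighted by `x ^ a`, for `x > 0`, extended by zero. -/
def rootSubst (κ θ a : ℝ) (D : ℝ × ℝ → F) : ℝ × ℝ → F :=
  glue (fun p => p.1 ^ a • D (κ * p.1 ^ θ, p.2)) 0

variable {κ θ : ℝ}

lemma hasFDerivAt_rootSubst_of_pos (a : ℝ) (hD : ContDiff ℝ ∞ D) {p : ℝ × ℝ} (hp : 0 < p.1) :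
    HasFDerivAt (rootSubst κ θ a D)
      (dxdy (rootSubst κ θ (a - 1) (fun q => a • D q + (θ * q.1) • Dx D q) p)
        (rootSubst κ θ a (Dy D) p)) p := by
  have hweight : HasFDerivAt (fun q : ℝ × ℝ => q.1 ^ a) (dxdy (a * p.1 ^ (a - 1)) 0) p :=
    (hasFDerivAt_fst.rpow_const (Or.inl hp.ne')).congr_fderiv (by ext <;> simp)
  have hinner : HasDerivAt (fun x : ℝ => κ * x ^ θ) (κ * (θ * p.1 ^ (θ - 1))) p.1 :=
    (Real.hasDerivAt_rpow_const (Or.inl hp.ne')).const_mul κ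
  refine ((hweight.smul (hasFDerivAt_comp_fst hD hinner)).congr_of_eventuallyEq
    (glue_eventuallyEq_of_pos hp)).congr_fderiv ?_
  have hpow (s : ℝ) : p.1 ^ s = p.1 ^ (s - 1) * p.1 := by
    rw [← Real.rpow_add_one hp.ne', sub_add_cancel]
  simp only [rootSubst, glue_of_pos hp]
  ext
  · simp only [ContinuousLinearMap.comp_apply, ContinuousLinearMap.inl_apply,
      add_apply, smul_apply, dxdy_apply,
      ContinuousLinearMap.smulRight_apply]
    rw [hpow a, hpow θ]
    module
  · simp

lemma exists_norm_rootSubst_le_sq (hκ : 0 < κ) (hθ : 0 < θ) (a : ℝ) (hD : VanishesLeft D) (R : ℝ) :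
    ∃ C, 0 ≤ C ∧ ∀ x y, x ≤ 1 → |y| ≤ R → ‖rootSubst κ θ a D (x, y)‖ ≤ C * x ^ 2 := by
  obtain ⟨N, hN⟩ := exists_nat_gt ((2 - a) / θ)
  rw [div_lt_iff₀ hθ] at hN
  obtain ⟨C, hC0, hC⟩ := hD.exists_norm_le_mul_pow (max κ R) N
  refine ⟨C * κ ^ N, by positivity, fun x y hx hy => ?_⟩
  rcases le_or_gt x 0 with hx0 | hx0
  · rw [rootSubst, glue_of_nonpos hx0, Pi.zero_apply, norm_zero]
    positivity
  have hroot : κ * x ^ θ ≤ max κ R :=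
    (mul_le_of_le_one_right hκ.le (Real.rpow_le_one hx0.le hx hθ.le)).trans (le_max_left _ _)
  rw [rootSubst, glue_of_pos hx0, norm_smul, Real.norm_of_nonneg (Real.rpow_nonneg hx0.le a)]
  calc x ^ a * ‖D (κ * x ^ θ, y)‖ ≤ x ^ a * (C * (κ * x ^ θ) ^ N) := by
        gcongr
        exact hC _ _ (by positivity) hroot (hy.trans (le_max_right _ _))
    _ = C * κ ^ N * x ^ (a + θ * N) := by
        rw [mul_pow, Real.rpow_add hx0, Real.rpow_mul hx0.le, Real.rpow_natCast]
        ring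
    _ ≤ C * κ ^ N * x ^ (2 : ℝ) :=
        mul_le_mul_of_nonneg_left (Real.rpow_le_rpow_of_exponent_ge hx0 hx (by linarith))
          (by positivity)
    _ = C * κ ^ N * x ^ 2 := by rw [Real.rpow_two]

lemma hasFDerivAt_rootSubst_of_eq_zero (hκ : 0 < κ) (hθ : 0 < θ) (a : ℝ) (hD : VanishesLeft D)
    (y : ℝ) : HasFDerivAt (rootSubst κ θ a D) (0 : ℝ × ℝ →L[ℝ] F) (0, y) := by
  obtain ⟨C, hC0, hC⟩ := exists_norm_rootSubst_le_sq hκ hθ a hD (|y| + 1)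
  have hzero : rootSubst κ θ a D (0, y) = 0 := glue_of_nonpos le_rfl
  rw [hasFDerivAt_iff_isLittleO_nhds_zero]
  have hO : (fun v : ℝ × ℝ => rootSubst κ θ a D ((0, y) + v) - rootSubst κ θ a D (0, y) -
      (0 : ℝ × ℝ →L[ℝ] F) v) =O[𝓝 0] fun v : ℝ × ℝ => ‖v‖ ^ 2 := by
    refine IsBigO.of_bound C ?_
    filter_upwards [Metric.ball_mem_nhds (0 : ℝ × ℝ) one_pos] with v hv
    rw [mem_ball_zero_iff] at hv
    have hv1 : |v.1| ≤ ‖v‖ := norm_fst_le v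
    have hv2 : |v.2| ≤ ‖v‖ := norm_snd_le v
    rw [hzero, sub_zero, zero_apply, sub_zero, norm_pow, norm_norm, ← sq_abs]
    calc ‖rootSubst κ θ a D ((0, y) + v)‖ = ‖rootSubst κ θ a D (v.1, y + v.2)‖ := by
          rw [← Prod.mk.eta (p := v), Prod.mk_add_mk, zero_add]
      _ ≤ C * v.1 ^ 2 :=
          hC _ _ (by linarith [le_abs_self v.1]) ((abs_add_le _ _).trans (by linarith))
      _ ≤ C * |‖v‖| ^ 2 := by
          rw [← sq_abs, abs_norm]
          gcongr
  refine hO.trans_isLittleO (IsLittleO.of_norm_right ?_)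
  simpa [Function.comp_def] using
    (isLittleO_pow_pow (𝕜 := ℝ) one_lt_two).comp_tendsto (tendsto_norm_zero (E := ℝ × ℝ))

lemma hasFDerivAt_rootSubst (hκ : 0 < κ) (hθ : 0 < θ) (a : ℝ) (hD : VanishesLeft D) (p : ℝ × ℝ) :
    HasFDerivAt (rootSubst κ θ a D)
      (dxdy (rootSubst κ θ (a - 1) (fun q => a • D q + (θ * q.1) • Dx D q) p)
        (rootSubst κ θ a (Dy D) p)) p := by
  rcases lt_or_ge 0 p.1 with hp | hp
  · exact hasFDerivAt_rootSubst_of_pos a hD.contDiff hp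
  have hzero : dxdy (rootSubst κ θ (a - 1) (fun q => a • D q + (θ * q.1) • Dx D q) p)
      (rootSubst κ θ a (Dy D) p) = 0 := by
    rw [rootSubst, rootSubst, glue_of_nonpos hp, glue_of_nonpos hp]
    ext <;> simp
  rw [hzero]
  rcases hp.lt_or_eq with hneg | heq
  · exact (hasFDerivAt_const 0 p).congr_of_eventuallyEq (glue_eventuallyEq_of_neg hneg)
  · rw [show p = (0, p.2) from Prod.ext heq rfl]
    exact hasFDerivAt_rootSubst_of_eq_zero hκ hθ a hD p.2

lemma vanishesLeft_rootSubst (hκ : 0 < κ) (hθ : 0 < θ) (a : ℝ) (hD : VanishesLeft D) :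
    VanishesLeft (rootSubst κ θ a D) := by
  refine ⟨?_, fun p hp => glue_of_nonpos hp⟩
  refine contDiff_of_closed_under_partials (fun f => ∃ a D, VanishesLeft D ∧ f = rootSubst κ θ a D)
    ?_ ⟨a, D, hD, rfl⟩
  rintro _ ⟨a, D, hD, rfl⟩
  exact ⟨_, _, ⟨_, _, (hD.smul contDiff_const).add (hD.dx.smul (by fun_prop)), rfl⟩,
    ⟨_, _, hD.dy, rfl⟩, hasFDerivAt_rootSubst hκ hθ a hD⟩

/-- On `x > 0` the function `E` is `c ^ (k / n) r ^ (-k / n) D ((r / c) ^ (1 / n), y)`. -/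
lemma VanishesLeft.exists_eq_pow_smul_comp_pow (hD : VanishesLeft D) {c : ℝ} (hc : 0 < c) (k : ℕ)
    {n : ℕ} (hn : Odd n) :
    ∃ E : ℝ × ℝ → F, VanishesLeft E ∧ ∀ p : ℝ × ℝ, D p = p.1 ^ k • E (c * p.1 ^ n, p.2) := by
  have hn0 : (0 : ℝ) < n := by exact_mod_cast hn.pos
  refine ⟨fun p => c ^ (k / n : ℝ) • rootSubst ((c ^ (1 / n : ℝ))⁻¹) (1 / n) (-(k / n)) D p,
    (vanishesLeft_rootSubst (by positivity) (by positivity) _ hD).smul contDiff_const, fun p => ?_⟩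
  rcases le_or_gt p.1 0 with hp | hp
  · have hpow : c * p.1 ^ n ≤ 0 := mul_nonpos_of_nonneg_of_nonpos hc.le (hn.pow_nonpos hp)
    simp only [rootSubst, glue_of_nonpos (p := (c * p.1 ^ n, p.2)) hpow, hD.eq_zero p hp,
      Pi.zero_apply, smul_zero]
  · have hroot (s : ℝ) : (c * p.1 ^ n) ^ (s / n) = c ^ (s / n) * p.1 ^ s := by
      rw [Real.mul_rpow hc.le (by positivity), ← Real.rpow_natCast, ← Real.rpow_mul hp.le,
        mul_div_cancel₀ _ hn0.ne']
    have hpow : 0 < c * p.1 ^ n := by positivity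
    have hone : (c ^ (1 / n : ℝ))⁻¹ * (c * p.1 ^ n) ^ (1 / n : ℝ) = p.1 := by
      rw [hroot, Real.rpow_one, inv_mul_cancel_left₀ (by positivity)]
    simp only [rootSubst, glue_of_pos (p := (c * p.1 ^ n, p.2)) hpow]
    rw [hone, Real.rpow_neg hpow.le, hroot, Real.rpow_natCast, smul_smul, smul_smul,
      show p.1 ^ k * c ^ (k / n : ℝ) * (c ^ (k / n : ℝ) * p.1 ^ k)⁻¹ = 1 by field_simp, one_smul]

end VanishesLeft

/-! ### Weighted `ℓ¹` algebras and Neumann series -/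

section Neumann

variable {G : Type*} [AddCommGroup G] {w : G → ENNReal} {a b σ : G → ℂ}

/-- The `ℓ¹` norm with weight `w`. -/
def weightedNorm {G : Type*} (w : G → ENNReal) (a : G → ℂ) : ENNReal := ∑' k, w k * ‖a k‖ₑ

/-- Convolution of families on a discrete abelian group. -/
def convolution (a b : G → ℂ) (k : G) : ℂ := ∑' j, a j * b (k - j)

/-- The `n`-th term of the Neumann series for `g = a + a * σg`, where `*` is convolution. -/
def neumannTerm (σ a : G → ℂ) : ℕ → G → ℂ
  | 0 => a
  | n + 1 => convolution a fun k => σ k * neumannTerm σ a n k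

/-- The Neumann series solving `g = a + a * σg`, where `*` is convolution. -/
def neumannSeries (σ a : G → ℂ) (k : G) : ℂ := ∑' n, neumannTerm σ a n k

lemma weightedNorm_convolution_le (hw : ∀ j l, w (j + l) ≤ w j * w l) (a b : G → ℂ) :
    weightedNorm w (convolution a b) ≤ weightedNorm w a * weightedNorm w b := by
  have hterm (k j : G) :
      w k * ‖a j * b (k - j)‖ₑ ≤ (w j * ‖a j‖ₑ) * (w (k - j) * ‖b (k - j)‖ₑ) := by
    calc w k * ‖a j * b (k - j)‖ₑ ≤ w j * w (k - j) * ‖a j * b (k - j)‖ₑ := by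
          gcongr
          simpa using hw j (k - j)
      _ = (w j * ‖a j‖ₑ) * (w (k - j) * ‖b (k - j)‖ₑ) := by rw [enorm_mul]; ring
  calc weightedNorm w (convolution a b) ≤ ∑' k, ∑' j, w k * ‖a j * b (k - j)‖ₑ := by
        refine ENNReal.tsum_le_tsum fun k => ?_
        rw [ENNReal.tsum_mul_left]
        gcongr
        exact enorm_tsum_le_tsum_enorm
    _ ≤ ∑' k, ∑' j, (w j * ‖a j‖ₑ) * (w (k - j) * ‖b (k - j)‖ₑ) :=
        ENNReal.tsum_le_tsum fun k => ENNReal.tsum_le_tsum (hterm k)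
    _ = ∑' j, (w j * ‖a j‖ₑ) * ∑' k, w (k - j) * ‖b (k - j)‖ₑ := by
        rw [ENNReal.tsum_comm]
        simp only [ENNReal.tsum_mul_left]
    _ = weightedNorm w a * weightedNorm w b := by
        rw [weightedNorm, ← ENNReal.tsum_mul_right]
        refine tsum_congr fun j => ?_
        rw [weightedNorm, ← (Equiv.subRight j).tsum_eq fun k => w k * ‖b k‖ₑ]
        rfl

lemma weightedNorm_mul_le {G : Type*} {σ : G → ℂ} (hσ : ∀ k, ‖σ k‖ ≤ 1) (w : G → ENNReal)
    (a : G → ℂ) : weightedNorm w (fun k => σ k * a k) ≤ weightedNorm w a := by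
  refine ENNReal.tsum_le_tsum fun k => ?_
  gcongr
  rw [enorm_le_iff_norm_le, norm_mul]
  exact mul_le_of_le_one_left (norm_nonneg _) (hσ k)

lemma weightedNorm_one {G : Type*} (a : G → ℂ) : weightedNorm 1 a = ∑' k, ‖a k‖ₑ := by
  simp [weightedNorm]

lemma weightedNorm_neumannTerm_le (hw : ∀ j l, w (j + l) ≤ w j * w l) (hσ : ∀ k, ‖σ k‖ ≤ 1)
    (ha : weightedNorm w a ≤ 2⁻¹) (n : ℕ) :
    weightedNorm w (neumannTerm σ a n) ≤ weightedNorm w a * 2⁻¹ ^ n := by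
  induction n with
  | zero => simp [neumannTerm]
  | succ n ih =>
    calc weightedNorm w (neumannTerm σ a (n + 1))
        ≤ weightedNorm w a * weightedNorm w (fun k => σ k * neumannTerm σ a n k) :=
          weightedNorm_convolution_le hw _ _
      _ ≤ 2⁻¹ * (weightedNorm w a * 2⁻¹ ^ n) := by
          gcongr
          exact (weightedNorm_mul_le hσ w _).trans ih
      _ = weightedNorm w a * 2⁻¹ ^ (n + 1) := by ring

lemma tsum_weightedNorm_neumannTerm_le (hw : ∀ j l, w (j + l) ≤ w j * w l)
    (hσ : ∀ k, ‖σ k‖ ≤ 1) (ha : weightedNorm w a ≤ 2⁻¹) :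
    ∑' n, weightedNorm w (neumannTerm σ a n) ≤ 2 * weightedNorm w a := by
  refine (ENNReal.tsum_le_tsum (weightedNorm_neumannTerm_le hw hσ ha)).trans_eq ?_
  rw [ENNReal.tsum_mul_left, ENNReal.tsum_geometric, ENNReal.one_sub_inv_two, inv_inv, mul_comm]

lemma weightedNorm_neumannSeries_le (hw : ∀ j l, w (j + l) ≤ w j * w l)
    (hσ : ∀ k, ‖σ k‖ ≤ 1) (ha : weightedNorm w a ≤ 2⁻¹) :
    weightedNorm w (neumannSeries σ a) ≤ 2 * weightedNorm w a := by
  refine le_trans ?_ (tsum_weightedNorm_neumannTerm_le hw hσ ha)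
  unfold weightedNorm
  rw [ENNReal.tsum_comm]
  refine ENNReal.tsum_le_tsum fun k => ?_
  rw [ENNReal.tsum_mul_left]
  gcongr
  exact enorm_tsum_le_tsum_enorm

lemma tsum_convolution (ha : Summable fun k => ‖a k‖) (hb : Summable fun k => ‖b k‖) :
    ∑' k, convolution a b k = (∑' k, a k) * ∑' k, b k := by
  let shear : G × G ≃ G × G :=
    (Equiv.prodComm G G).trans (Equiv.prodShear (Equiv.refl G) Equiv.subRight)
  have hsum : Summable fun z : G × G => a z.1 * b z.2 := summable_mul_of_summable_norm ha hb
  have hshear : Summable fun z : G × G => a z.2 * b (z.1 - z.2) := shear.summable_iff.mpr hsum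
  rw [tsum_mul_tsum_of_summable_norm ha hb, ← shear.tsum_eq]
  exact hshear.tsum_prod.symm

end Neumann

/-! ### Fourier series and convolution -/

section FourierConvolution

variable {a b σ : ℤ × ℤ → ℂ}

lemma fourierSeries_convolution (ha : Summable fun k => ‖a k‖) (hb : Summable fun k => ‖b k‖)
    (p : ℝ × ℝ) :
    fourierSeries (convolution a b) p = fourierSeries a p * fourierSeries b p := by
  unfold fourierSeries
  rw [← tsum_convolution (by simpa only [norm_fourierSeries_term] using ha)
    (by simpa only [norm_fourierSeries_term] using hb)]
  refine tsum_congr fun k => ?_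
  rw [convolution, convolution, mul_assoc, ← tsum_mul_right]
  refine tsum_congr fun j => ?_
  have h₁ := character_add j.1 (k - j).1 p.1
  have h₂ := character_add j.2 (k - j).2 p.2
  rw [← Prod.fst_add, add_sub_cancel] at h₁
  rw [← Prod.snd_add, add_sub_cancel] at h₂
  rw [h₁, h₂]
  ring

lemma fourierSeries_add_const_mul (ha : Summable fun k => ‖a k‖) (hb : Summable fun k => ‖b k‖)
    (c : ℂ) (p : ℝ × ℝ) :
    fourierSeries (fun k => a k + c * b k) p = fourierSeries a p + c * fourierSeries b p := by
  unfold fourierSeries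
  rw [← tsum_mul_left,
    ← (summable_fourierSeries ha p).tsum_add ((summable_fourierSeries hb p).mul_left c)]
  exact tsum_congr fun k => by ring

lemma fourierSeries_update_zero (ha : Summable fun k => ‖a k‖) (p : ℝ × ℝ) :
    fourierSeries (Function.update a 0 0) p = fourierSeries a p - a 0 := by
  have hupdate : (fun k => Function.update a 0 0 k * character k.1 p.1 * character k.2 p.2) =
      Function.update (fun k => a k * character k.1 p.1 * character k.2 p.2) 0 0 := by
    ext k
    rcases eq_or_ne k 0 with rfl | hk <;> simp [*]
  have h := (summable_fourierSeries ha p).hasSum.update 0 0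
  rw [fourierSeries, hupdate, h.tsum_eq, fourierSeries]
  simp [character]
  ring

lemma enorm_fourierSeries_le (a : ℤ × ℤ → ℂ) (p : ℝ × ℝ) :
    ‖fourierSeries a p‖ₑ ≤ ∑' k, ‖a k‖ₑ := by
  refine enorm_tsum_le_tsum_enorm.trans_eq (tsum_congr fun k => ?_)
  rw [← ofReal_norm, norm_fourierSeries_term, ofReal_norm]

lemma hasSum_fourierSeries_tsum {A : ℕ → ℤ × ℤ → ℂ} (hA : ∑' n, ∑' k, ‖A n k‖ₑ ≠ ⊤) (p : ℝ × ℝ) :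
    HasSum (fun n => fourierSeries (A n) p) (fourierSeries (fun k => ∑' n, A n k) p) := by
  have hnorm : Summable fun z : ℕ × (ℤ × ℤ) => ‖A z.1 z.2‖ := by
    rwa [← tsum_enorm_ne_top_iff_summable_norm, ENNReal.tsum_prod (f := fun n k => ‖A n k‖ₑ)]
  have hsum : Summable fun z : ℕ × (ℤ × ℤ) =>
      A z.1 z.2 * character z.2.1 p.1 * character z.2.2 p.2 :=
    Summable.of_norm (hnorm.congr fun z => (norm_fourierSeries_term (A z.1) p z.2).symm)
  refine (Summable.hasSum_iff hsum.prod).mpr ?_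
  refine (Summable.tsum_comm (f := fun n k => A n k * character k.1 p.1 * character k.2 p.2)
    hsum).symm.trans (tsum_congr fun k => ?_)
  rw [tsum_mul_right, tsum_mul_right]

lemma fourierSeries_neumannSeries (hσ : ∀ k, ‖σ k‖ ≤ 1) (ha : ∑' k, ‖a k‖ₑ ≤ 2⁻¹) (p : ℝ × ℝ) :
    fourierSeries (neumannSeries σ a) p =
      fourierSeries a p +
        fourierSeries a p * fourierSeries (fun k => σ k * neumannSeries σ a k) p := by
  have hle : ∑' n, ∑' k, ‖neumannTerm σ a n k‖ₑ ≤ 2 * ∑' k, ‖a k‖ₑ := by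
    simpa only [weightedNorm_one] using
      tsum_weightedNorm_neumannTerm_le (w := 1) (by simp) hσ (by rwa [weightedNorm_one])
  have hfin : ∑' n, ∑' k, ‖neumannTerm σ a n k‖ₑ ≠ ⊤ :=
    ne_top_of_le_ne_top (ENNReal.mul_ne_top (by simp) (ne_top_of_le_ne_top (by simp) ha)) hle
  have hfin' : ∑' n, ∑' k, ‖σ k * neumannTerm σ a n k‖ₑ ≠ ⊤ :=
    ne_top_of_le_ne_top hfin (ENNReal.tsum_le_tsum fun n => by
      simpa only [weightedNorm_one] using weightedNorm_mul_le hσ 1 (neumannTerm σ a n))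
  have hsum : HasSum _ (fourierSeries (neumannSeries σ a) p) := hasSum_fourierSeries_tsum hfin p
  have hsum' := hasSum_fourierSeries_tsum hfin' p
  have hstep (n : ℕ) : fourierSeries (neumannTerm σ a (n + 1)) p =
      fourierSeries a p * fourierSeries (fun k => σ k * neumannTerm σ a n k) p :=
    fourierSeries_convolution
      (tsum_enorm_ne_top_iff_summable_norm.mp (ne_top_of_le_ne_top (by simp) ha))
      (tsum_enorm_ne_top_iff_summable_norm.mp (ENNReal.ne_top_of_tsum_ne_top hfin' n)) p
  calc fourierSeries (neumannSeries σ a) p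
      = fourierSeries a p + ∑' n, fourierSeries (neumannTerm σ a (n + 1)) p := by
        rw [← hsum.tsum_eq, hsum.summable.tsum_eq_zero_add, neumannTerm]
    _ = fourierSeries a p +
          fourierSeries a p * fourierSeries (fun k => σ k * neumannSeries σ a k) p := by
        simp only [hstep, tsum_mul_left, hsum'.tsum_eq, neumannSeries]

/-- A submultiplicative weight on `ℤ²`, equivalent to `weight` for each `δ ∈ (0, 1]` and tending
to `1` with `δ`: a family with small `ℓ¹` norm keeps a small norm with respect to every power of
it, once `δ` is small enough. -/
def dilatedWeight (δ : ℝ) (k : ℤ × ℤ) : ℝ := (1 + δ * |(k.1 : ℝ)|) * (1 + δ * |(k.2 : ℝ)|)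

variable {δ : ℝ}

lemma dilatedWeight_nonneg (hδ : 0 ≤ δ) (k : ℤ × ℤ) : 0 ≤ dilatedWeight δ k := by
  unfold dilatedWeight
  positivity

lemma dilatedWeight_add_le (hδ : 0 ≤ δ) (j l : ℤ × ℤ) :
    dilatedWeight δ (j + l) ≤ dilatedWeight δ j * dilatedWeight δ l := by
  have hfactor (m n : ℤ) :
      1 + δ * |((m + n : ℤ) : ℝ)| ≤ (1 + δ * |(m : ℝ)|) * (1 + δ * |(n : ℝ)|) := by
    have hcross : 0 ≤ δ * |(m : ℝ)| * (δ * |(n : ℝ)|) := by positivity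
    push_cast
    nlinarith [mul_le_mul_of_nonneg_left (abs_add_le (m : ℝ) n) hδ]
  calc dilatedWeight δ (j + l) ≤ (1 + δ * |(j.1 : ℝ)|) * (1 + δ * |(l.1 : ℝ)|) *
        ((1 + δ * |(j.2 : ℝ)|) * (1 + δ * |(l.2 : ℝ)|)) := by
        unfold dilatedWeight
        gcongr
        exacts [hfactor j.1 l.1, hfactor j.2 l.2]
    _ = dilatedWeight δ j * dilatedWeight δ l := by unfold dilatedWeight; ring

lemma dilatedWeight_le_weight (hδ0 : 0 ≤ δ) (hδ1 : δ ≤ 1) (k : ℤ × ℤ) :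
    dilatedWeight δ k ≤ weight k := by
  unfold dilatedWeight weight
  gcongr <;> exact mul_le_of_le_one_left (abs_nonneg _) hδ1

lemma weight_le_inv_sq_mul_dilatedWeight (hδ0 : 0 < δ) (hδ1 : δ ≤ 1) (k : ℤ × ℤ) :
    weight k ≤ (δ⁻¹) ^ 2 * dilatedWeight δ k := by
  have hfactor (n : ℤ) : 1 + |(n : ℝ)| ≤ δ⁻¹ * (1 + δ * |(n : ℝ)|) := by
    rw [mul_add, mul_one, inv_mul_cancel_left₀ hδ0.ne']
    gcongr
    exact one_le_inv_iff₀.mpr ⟨hδ0, hδ1⟩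
  calc weight k ≤ (δ⁻¹ * (1 + δ * |(k.1 : ℝ)|)) * (δ⁻¹ * (1 + δ * |(k.2 : ℝ)|)) := by
        unfold weight
        gcongr <;> exact hfactor _
    _ = (δ⁻¹) ^ 2 * dilatedWeight δ k := by unfold dilatedWeight; ring

lemma RapidDecay.summable_weight_pow_mul (ha : RapidDecay a) (s : ℕ) :
    Summable fun k => weight k ^ s * ‖a k‖ := by
  have h : RapidDecay fun k => ((weight k ^ s : ℝ) : ℂ) * a k := ha.of_le 1 s fun k => by
    rw [norm_mul, Complex.norm_real, Real.norm_of_nonneg (pow_nonneg (weight_pos k).le s), one_mul]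
  refine h.summable.congr fun k => ?_
  rw [norm_mul, Complex.norm_real, Real.norm_of_nonneg (pow_nonneg (weight_pos k).le s)]

lemma RapidDecay.exists_weightedNorm_le (ha : RapidDecay a) {c : ℝ} (hc : ∑' k, ‖a k‖ < c)
    (s : ℕ) : ∃ δ : ℝ, 0 < δ ∧ δ ≤ 1 ∧
      weightedNorm (fun k => ENNReal.ofReal (dilatedWeight δ k ^ s)) a ≤ ENNReal.ofReal c := by
  have hbound {δ : ℝ} (hδ : δ ∈ Ioo (0 : ℝ) 1) (k : ℤ × ℤ) :
      ‖dilatedWeight δ k ^ s * ‖a k‖‖ ≤ weight k ^ s * ‖a k‖ := by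
    have hnonneg := dilatedWeight_nonneg hδ.1.le k
    rw [Real.norm_of_nonneg (by positivity)]
    gcongr
    exact dilatedWeight_le_weight hδ.1.le hδ.2.le k
  have hunit : Ioo (0 : ℝ) 1 ∈ 𝓝[>] (0 : ℝ) := Ioo_mem_nhdsGT one_pos
  have hlim : Tendsto (fun δ => ∑' k, dilatedWeight δ k ^ s * ‖a k‖) (𝓝[>] 0)
      (𝓝 (∑' k, ‖a k‖)) := by
    refine tendsto_tsum_of_dominated_convergence (ha.summable_weight_pow_mul s) (fun k => ?_)
      (eventually_of_mem hunit fun δ => hbound)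
    have hcont : Continuous fun δ => dilatedWeight δ k ^ s * ‖a k‖ := by
      unfold dilatedWeight
      fun_prop
    simpa [dilatedWeight] using (hcont.tendsto 0).mono_left nhdsWithin_le_nhds
  obtain ⟨δ, hδc, hδ⟩ := ((hlim.eventually_lt_const hc).and hunit).exists
  have hnonneg (k : ℤ × ℤ) : 0 ≤ dilatedWeight δ k ^ s :=
    pow_nonneg (dilatedWeight_nonneg hδ.1.le k) s
  refine ⟨δ, hδ.1, hδ.2.le, le_trans (le_of_eq ?_) (ENNReal.ofReal_le_ofReal hδc.le)⟩
  rw [ENNReal.ofReal_tsum_of_nonneg (fun k => mul_nonneg (hnonneg k) (norm_nonneg _))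
    (.of_norm_bounded (ha.summable_weight_pow_mul s) (hbound hδ))]
  simp only [weightedNorm, ENNReal.ofReal_mul (hnonneg _), ofReal_norm]

lemma rapidDecay_neumannSeries (ha : RapidDecay a) (hsmall : ∑' k, ‖a k‖ < 2⁻¹)
    (hσ : ∀ k, ‖σ k‖ ≤ 1) : RapidDecay (neumannSeries σ a) := by
  intro s
  obtain ⟨δ, hδ0, hδ1, hδ⟩ := ha.exists_weightedNorm_le hsmall s
  have hhalf : ENNReal.ofReal 2⁻¹ = 2⁻¹ := by simp [ENNReal.ofReal_inv_of_pos]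
  rw [hhalf] at hδ
  have hsub (j l : ℤ × ℤ) : ENNReal.ofReal (dilatedWeight δ (j + l) ^ s) ≤
      ENNReal.ofReal (dilatedWeight δ j ^ s) * ENNReal.ofReal (dilatedWeight δ l ^ s) := by
    have hj := dilatedWeight_nonneg hδ0.le j
    have hjl := dilatedWeight_nonneg hδ0.le (j + l)
    rw [← ENNReal.ofReal_mul (by positivity), ← mul_pow]
    gcongr
    exact dilatedWeight_add_le hδ0.le j l
  have hnorm : weightedNorm (fun k => ENNReal.ofReal (dilatedWeight δ k ^ s))
      (neumannSeries σ a) ≤ 1 := by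
    refine (weightedNorm_neumannSeries_le hsub hσ hδ).trans ?_
    calc 2 * _ ≤ 2 * (2⁻¹ : ENNReal) := by gcongr
      _ = 1 := ENNReal.mul_inv_cancel (by simp) (by simp)
  refine ⟨((δ⁻¹) ^ 2) ^ s, fun k => ?_⟩
  have hk := (ENNReal.le_tsum k).trans hnorm
  have hnonneg := dilatedWeight_nonneg hδ0.le k
  have hweight := weight_pos k
  rw [← ofReal_norm, ← ENNReal.ofReal_mul (by positivity), ENNReal.ofReal_le_one] at hk
  calc weight k ^ s * ‖neumannSeries σ a k‖
      ≤ ((δ⁻¹) ^ 2 * dilatedWeight δ k) ^ s * ‖neumannSeries σ a k‖ := by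
        gcongr
        exact weight_le_inv_sq_mul_dilatedWeight hδ0 hδ1 k
    _ = ((δ⁻¹) ^ 2) ^ s * (dilatedWeight δ k ^ s * ‖neumannSeries σ a k‖) := by ring
    _ ≤ ((δ⁻¹) ^ 2) ^ s := mul_le_of_le_one_right (by positivity) hk

end FourierConvolution

/-! ### The Beltrami equation -/

section Beltrami

/-- The symbol of `∂_x - i ∂_y`, up to the factor `2πi`. -/
def dbarSymbol (k : ℤ × ℤ) : ℂ := k.1 - Complex.I * k.2

/-- The symbol of `∂_y (∂_x - i ∂_y)⁻¹`; its value at `0` is `0`, by the convention `x / 0 = 0`. -/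
def beurlingSymbol (k : ℤ × ℤ) : ℂ := k.2 / dbarSymbol k

/-- The Fourier coefficients of the solution `u` of mean zero of `u_x - i u_y = g - g₀`, where `g`
has Fourier coefficients `a` and mean value `g₀`; here again `x / 0 = 0` is used at `k = 0`. -/
def dbarPrimitive (a : ℤ × ℤ → ℂ) (k : ℤ × ℤ) : ℂ :=
  a k / (2 * Real.pi * Complex.I * dbarSymbol k)

variable {a : ℤ × ℤ → ℂ}

lemma abs_fst_le_norm_dbarSymbol (k : ℤ × ℤ) : |(k.1 : ℝ)| ≤ ‖dbarSymbol k‖ := by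
  simpa [dbarSymbol] using Complex.abs_re_le_norm (dbarSymbol k)

lemma abs_snd_le_norm_dbarSymbol (k : ℤ × ℤ) : |(k.2 : ℝ)| ≤ ‖dbarSymbol k‖ := by
  simpa [dbarSymbol] using Complex.abs_im_le_norm (dbarSymbol k)

lemma norm_beurlingSymbol_le_one (k : ℤ × ℤ) : ‖beurlingSymbol k‖ ≤ 1 := by
  rw [beurlingSymbol, norm_div]
  exact div_le_one_of_le₀ (by simpa using abs_snd_le_norm_dbarSymbol k) (norm_nonneg _)

lemma one_le_norm_dbarSymbol {k : ℤ × ℤ} (hk : k ≠ 0) : 1 ≤ ‖dbarSymbol k‖ := by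
  by_cases hfst : k.1 = 0
  · have hsnd : k.2 ≠ 0 := fun h => hk (Prod.ext hfst h)
    exact le_trans (by exact_mod_cast Int.one_le_abs hsnd) (abs_snd_le_norm_dbarSymbol k)
  · exact le_trans (by exact_mod_cast Int.one_le_abs hfst) (abs_fst_le_norm_dbarSymbol k)

lemma RapidDecay.dbarPrimitive (ha : RapidDecay a) : RapidDecay (dbarPrimitive a) := by
  refine ha.of_le 1 0 fun k => ?_
  rw [pow_zero, mul_one, one_mul, Cibrario.dbarPrimitive, norm_div]
  rcases eq_or_ne k 0 with rfl | hk
  · simp [dbarSymbol]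
  · refine div_le_self (norm_nonneg _) ?_
    have hpi : ‖(2 * Real.pi * Complex.I : ℂ)‖ = 2 * Real.pi := by simp [Real.pi_pos.le]
    rw [norm_mul, hpi]
    nlinarith [one_le_norm_dbarSymbol hk, Real.pi_gt_three]

lemma mul_snd_mul_dbarPrimitive (a : ℤ × ℤ → ℂ) (k : ℤ × ℤ) :
    2 * Real.pi * Complex.I * k.2 * dbarPrimitive a k = beurlingSymbol k * a k := by
  rw [dbarPrimitive, beurlingSymbol, mul_div_assoc', mul_assoc,
    mul_div_mul_left _ _ Complex.two_pi_I_ne_zero]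
  ring

lemma mul_fst_mul_dbarPrimitive (a : ℤ × ℤ → ℂ) (k : ℤ × ℤ) :
    2 * Real.pi * Complex.I * k.1 * dbarPrimitive a k =
      Function.update a 0 0 k + Complex.I * (beurlingSymbol k * a k) := by
  rcases eq_or_ne k 0 with rfl | hk
  · simp [beurlingSymbol]
  · have hsymbol : dbarSymbol k ≠ 0 :=
      norm_pos_iff.mp (one_pos.trans_le (one_le_norm_dbarSymbol hk))
    rw [Function.update_of_ne hk, dbarPrimitive, beurlingSymbol, mul_div_assoc', mul_assoc,
      mul_div_mul_left _ _ Complex.two_pi_I_ne_zero]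
    field_simp
    rw [dbarSymbol]
    ring

/-- The primitive of `a` under `∂_x - i ∂_y`, normalized as a perturbation of `y + ix`. -/
def dbarSolution (a : ℤ × ℤ → ℂ) (p : ℝ × ℝ) : ℂ :=
  p.2 + Complex.I * p.1 + (a 0 * p.1 + fourierSeries (dbarPrimitive a) p)

lemma contDiff_dbarSolution (ha : RapidDecay a) : ContDiff ℝ ∞ (dbarSolution a) := by
  have hseries := contDiff_fourierSeries ha.dbarPrimitive
  have hfst : ContDiff ℝ ∞ fun p : ℝ × ℝ => (p.1 : ℂ) :=
    Complex.ofRealCLM.contDiff.comp contDiff_fst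
  have hsnd : ContDiff ℝ ∞ fun p : ℝ × ℝ => (p.2 : ℂ) :=
    Complex.ofRealCLM.contDiff.comp contDiff_snd
  unfold dbarSolution
  fun_prop

lemma hasFDerivAt_dbarSolution (ha : RapidDecay a) (p : ℝ × ℝ) :
    HasFDerivAt (dbarSolution a)
      (dxdy (Complex.I + fourierSeries a p +
          Complex.I * fourierSeries (fun k => beurlingSymbol k * a k) p)
        (1 + fourierSeries (fun k => beurlingSymbol k * a k) p)) p := by
  have hfst : HasFDerivAt (fun p : ℝ × ℝ => (p.1 : ℂ)) (dxdy 1 0) p :=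
    (Complex.ofRealCLM.comp (ContinuousLinearMap.fst ℝ ℝ ℝ)).hasFDerivAt.congr_fderiv
      (by ext <;> simp)
  have hsnd : HasFDerivAt (fun p : ℝ × ℝ => (p.2 : ℂ)) (dxdy 0 1) p :=
    (Complex.ofRealCLM.comp (ContinuousLinearMap.snd ℝ ℝ ℝ)).hasFDerivAt.congr_fderiv
      (by ext <;> simp)
  have hbeurling : RapidDecay fun k => beurlingSymbol k * a k :=
    ha.mul_of_norm_le_one norm_beurlingSymbol_le_one
  have hupdate : RapidDecay (Function.update a 0 0) := ha.of_le 1 0 fun k => by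
    rcases eq_or_ne k 0 with rfl | hk <;> simp [*]
  refine ((hsnd.add (hfst.const_mul Complex.I)).add ((hfst.const_mul (a 0)).add
    (hasFDerivAt_fourierSeries ha.dbarPrimitive p))).congr_fderiv ?_
  simp only [mul_fst_mul_dbarPrimitive, mul_snd_mul_dbarPrimitive]
  rw [fourierSeries_add_const_mul hupdate.summable hbeurling.summable,
    fourierSeries_update_zero ha.summable]
  ext
  · simp
    ring
  · simp

/-- Writing `u_x - i u_y = g` for the unknown `w = y + ix + u` turns the equation into
`g = ν + ν u_y`, which is solved by a Neumann series because `g ↦ u_y` does not increase the `ℓ¹`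
norm of the coefficients. -/
lemma exists_beltrami_of_tsum_lt (ha : RapidDecay a) (hsmall : ∑' k, ‖a k‖ < 2⁻¹) :
    ∃ w : ℝ × ℝ → ℂ, ContDiff ℝ ∞ w ∧
      (∀ p, Dx w p = (Complex.I + fourierSeries a p) * Dy w p) ∧ 0 < (Dy w 0).re := by
  have htsum : ∑' k, ‖a k‖ₑ < 2⁻¹ := by
    have hhalf : ENNReal.ofReal 2⁻¹ = 2⁻¹ := by simp [ENNReal.ofReal_inv_of_pos]
    simp only [← ofReal_norm]
    rwa [← ENNReal.ofReal_tsum_of_nonneg (fun _ => norm_nonneg _) ha.summable, ← hhalf,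
      ENNReal.ofReal_lt_ofReal_iff (by norm_num)]
  set g := neumannSeries beurlingSymbol a
  have hg : RapidDecay g := rapidDecay_neumannSeries ha hsmall norm_beurlingSymbol_le_one
  have hderiv (p : ℝ × ℝ) := hasFDerivAt_dbarSolution hg p
  refine ⟨dbarSolution g, contDiff_dbarSolution hg, fun p => ?_, ?_⟩
  · rw [Dx_eq_of_hasFDerivAt (hderiv p), Dy_eq_of_hasFDerivAt (hderiv p),
      fourierSeries_neumannSeries norm_beurlingSymbol_le_one htsum.le]
    ring
  · set s := fourierSeries (fun k => beurlingSymbol k * g k) 0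
    have hs : ‖s‖ₑ < 1 := by
      calc ‖s‖ₑ ≤ ∑' k, ‖beurlingSymbol k * g k‖ₑ := enorm_fourierSeries_le _ 0
        _ ≤ ∑' k, ‖g k‖ₑ := by
            simpa only [weightedNorm_one] using weightedNorm_mul_le norm_beurlingSymbol_le_one 1 g
        _ ≤ 2 * ∑' k, ‖a k‖ₑ := by
            simpa only [weightedNorm_one] using weightedNorm_neumannSeries_le (w := 1) (by simp)
              norm_beurlingSymbol_le_one (by rw [weightedNorm_one]; exact htsum.le)
        _ < 1 := by
            rw [← ENNReal.mul_inv_cancel two_ne_zero ENNReal.ofNat_ne_top]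
            exact ENNReal.mul_lt_mul_right two_ne_zero ENNReal.ofNat_ne_top htsum
    rw [← ofReal_norm, ENNReal.ofReal_lt_one] at hs
    rw [Dy_eq_of_hasFDerivAt (hderiv 0), Complex.add_re, Complex.one_re]
    linarith [(abs_lt.mp ((Complex.abs_re_le_norm s).trans_lt hs)).1]

theorem exists_beltrami {ν : ℝ × ℝ → ℂ} (hν : ContDiff ℝ ∞ ν) (h0 : ν 0 = 0) :
    ∃ w : ℝ × ℝ → ℂ, ContDiff ℝ ∞ w ∧ (∀ᶠ p in 𝓝 0, Dx w p = (Complex.I + ν p) * Dy w p) ∧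
      0 < (Dy w 0).re := by
  obtain ⟨ε, hε, hsmall⟩ :=
    exists_tsum_norm_torusCoeff_periodize_le hν h0 (δ := 1 / 4) (by norm_num)
  have hper := smoothPeriodic_periodize hν ε
  obtain ⟨w, hw, heq, hpos⟩ := exists_beltrami_of_tsum_lt hper.rapidDecay
    (hsmall.trans_lt (by norm_num))
  rw [hper.fourierSeries_torusCoeff] at heq
  have hderiv (p : ℝ × ℝ) : HasFDerivAt (fun p : ℝ × ℝ => w (ε⁻¹ • p))
      (dxdy (ε⁻¹ • Dx w (ε⁻¹ • p)) (ε⁻¹ • Dy w (ε⁻¹ • p))) p :=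
    ((hasFDerivAt_dxdy hw (ε⁻¹ • p)).comp p ((hasFDerivAt_id p).const_smul ε⁻¹)).congr_fderiv
      (by ext <;> simp)
  refine ⟨fun p => w (ε⁻¹ • p), by fun_prop, ?_, ?_⟩
  · have hscale : Tendsto (fun p : ℝ × ℝ => ε⁻¹ • p) (𝓝 0) (𝓝 0) := by
      simpa using (continuous_const_smul (T := ℝ × ℝ) ε⁻¹).tendsto 0
    filter_upwards [hscale.eventually (eventually_periodize_eq ε ν)] with p hp
    rw [Dx_eq_of_hasFDerivAt (hderiv p), Dy_eq_of_hasFDerivAt (hderiv p), heq, hp,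
      smul_inv_smul₀ hε.ne', mul_smul_comm]
  · rw [Dy_eq_of_hasFDerivAt (hderiv 0), smul_zero, Complex.smul_re, smul_eq_mul]
    positivity

end Beltrami

/-! ### The elliptic side -/

section Elliptic

/-- The normalizing system for `b = (2 / 3) x² B(r, y)` and `m = 1 + N(r, y)`, written in the
variable `r = (4 / 9) x³`; here `p = (r, y)`. In the double cover `r = s²` it becomes a Beltrami
equation. -/
def FoldSystem (B N Y Z : ℝ × ℝ → ℝ) (p : ℝ × ℝ) : Prop :=
  2 * Dx Y p = B p * Dy Y p - (1 + N p) * Dy Z p ∧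
    Z p + 2 * p.1 * Dx Z p = (1 + N p) * Dy Y p + p.1 * B p * Dy Z p

variable {B N Y Z G₀ G₁ : ℝ × ℝ → ℝ}

lemma FoldSystem.congr {Y' Z' : ℝ × ℝ → ℝ} {p : ℝ × ℝ} (h : FoldSystem B N Y Z p)
    (hY : Y' =ᶠ[𝓝 p] Y) (hZ : Z' =ᶠ[𝓝 p] Z) : FoldSystem B N Y' Z' p := by
  rwa [FoldSystem, Dx_congr hY, Dy_congr hY, Dx_congr hZ, Dy_congr hZ, hZ.self_of_nhds]

lemma eventually_partials_of_eq_add_mul_comp_sq {g : ℝ × ℝ → ℝ} (hG₀ : ContDiff ℝ ∞ G₀)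
    (hG₁ : ContDiff ℝ ∞ G₁)
    (hg : ∀ᶠ p in 𝓝 (0 : ℝ × ℝ), g p = G₀ (p.1 ^ 2, p.2) + p.1 * G₁ (p.1 ^ 2, p.2)) :
    ∀ᶠ p in 𝓝 (0 : ℝ × ℝ),
      Dx g p = 2 * p.1 * Dx G₀ (p.1 ^ 2, p.2) + G₁ (p.1 ^ 2, p.2) +
        2 * p.1 ^ 2 * Dx G₁ (p.1 ^ 2, p.2) ∧
      Dy g p = Dy G₀ (p.1 ^ 2, p.2) + p.1 * Dy G₁ (p.1 ^ 2, p.2) := by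
  filter_upwards [hg.eventually_nhds] with p hp
  have hderiv := (hasFDerivAt_add_mul_comp_sq hG₀ hG₁ p).congr_of_eventuallyEq hp
  exact ⟨Dx_eq_of_hasFDerivAt hderiv, Dy_eq_of_hasFDerivAt hderiv⟩

lemma hasFDerivAt_re {w : ℝ × ℝ → ℂ} (hw : ContDiff ℝ ∞ w) (p : ℝ × ℝ) :
    HasFDerivAt (fun q => (w q).re) (dxdy (Dx w p).re (Dy w p).re) p :=
  (Complex.reCLM.hasFDerivAt.comp p (hasFDerivAt_dxdy hw p)).congr_fderiv (by ext <;> simp)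

lemma hasFDerivAt_im {w : ℝ × ℝ → ℂ} (hw : ContDiff ℝ ∞ w) (p : ℝ × ℝ) :
    HasFDerivAt (fun q => (w q).im) (dxdy (Dx w p).im (Dy w p).im) p :=
  (Complex.imCLM.hasFDerivAt.comp p (hasFDerivAt_dxdy hw p)).congr_fderiv (by ext <;> simp)

/-- On `r > 0` the Beltrami equation holds at both `s = √r` and `s = -√r`: the fold system is the
odd part of its real part and the even part of its imaginary part. -/
lemma foldSystem_of_beltrami {w : ℝ × ℝ → ℂ} {P₀ P₁ R₀ R₁ : ℝ × ℝ → ℝ} (hw : ContDiff ℝ ∞ w)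
    (hbeltrami : ∀ᶠ p in 𝓝 (0 : ℝ × ℝ), Dx w p = (Complex.I +
      ((p.1 * B (p.1 ^ 2, p.2) : ℝ) + Complex.I * (N (p.1 ^ 2, p.2) : ℝ))) * Dy w p)
    (hP₀ : ContDiff ℝ ∞ P₀) (hP₁ : ContDiff ℝ ∞ P₁) (hR₀ : ContDiff ℝ ∞ R₀)
    (hR₁ : ContDiff ℝ ∞ R₁)
    (hre : ∀ᶠ p in 𝓝 (0 : ℝ × ℝ), (w p).re = P₀ (p.1 ^ 2, p.2) + p.1 * P₁ (p.1 ^ 2, p.2))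
    (him : ∀ᶠ p in 𝓝 (0 : ℝ × ℝ), (w p).im = R₀ (p.1 ^ 2, p.2) + p.1 * R₁ (p.1 ^ 2, p.2)) :
    ∀ᶠ p in 𝓝 (0 : ℝ × ℝ), 0 < p.1 → FoldSystem B N P₀ R₁ p := by
  have hpulled : ∀ᶠ q in 𝓝 (0 : ℝ × ℝ),
      2 * q.1 * Dx P₀ (q.1 ^ 2, q.2) + P₁ (q.1 ^ 2, q.2) + 2 * q.1 ^ 2 * Dx P₁ (q.1 ^ 2, q.2) =
        q.1 * B (q.1 ^ 2, q.2) * (Dy P₀ (q.1 ^ 2, q.2) + q.1 * Dy P₁ (q.1 ^ 2, q.2)) -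
          (1 + N (q.1 ^ 2, q.2)) * (Dy R₀ (q.1 ^ 2, q.2) + q.1 * Dy R₁ (q.1 ^ 2, q.2)) ∧
      2 * q.1 * Dx R₀ (q.1 ^ 2, q.2) + R₁ (q.1 ^ 2, q.2) + 2 * q.1 ^ 2 * Dx R₁ (q.1 ^ 2, q.2) =
        q.1 * B (q.1 ^ 2, q.2) * (Dy R₀ (q.1 ^ 2, q.2) + q.1 * Dy R₁ (q.1 ^ 2, q.2)) +
          (1 + N (q.1 ^ 2, q.2)) * (Dy P₀ (q.1 ^ 2, q.2) + q.1 * Dy P₁ (q.1 ^ 2, q.2)) := by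
    filter_upwards [hbeltrami, eventually_partials_of_eq_add_mul_comp_sq hP₀ hP₁ hre,
      eventually_partials_of_eq_add_mul_comp_sq hR₀ hR₁ him] with q hq hPq hRq
    rw [Dx_eq_of_hasFDerivAt (hasFDerivAt_re hw q), Dy_eq_of_hasFDerivAt (hasFDerivAt_re hw q)]
      at hPq
    rw [Dx_eq_of_hasFDerivAt (hasFDerivAt_im hw q), Dy_eq_of_hasFDerivAt (hasFDerivAt_im hw q)]
      at hRq
    rw [← hPq.1, ← hPq.2, ← hRq.1, ← hRq.2, hq]
    constructor <;> simp
  have hroot (ε : ℝ) : Tendsto (fun p : ℝ × ℝ => (ε * √p.1, p.2)) (𝓝 0) (𝓝 0) :=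
    Continuous.tendsto' (by fun_prop) 0 0 (by simp)
  filter_upwards [(hroot 1).eventually hpulled, (hroot (-1)).eventually hpulled]
    with p hplus hminus hp
  have hsqrt_pos : 0 < √p.1 := Real.sqrt_pos.mpr hp
  have hsq : √p.1 ^ 2 = p.1 := Real.sq_sqrt hp.le
  simp only [one_mul, neg_mul, neg_sq, hsq, Prod.mk.eta] at hplus hminus
  refine ⟨mul_left_cancel₀ (mul_pos two_pos hsqrt_pos).ne' ?_, ?_⟩
  · linear_combination hplus.1 - hminus.1
  · linear_combination (1 / 2) * hplus.2 + (1 / 2) * hminus.2 + B p * Dy R₁ p * hsq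

lemma exists_foldSystem_of_fst_pos (hB : ContDiff ℝ ∞ B) (hN : ContDiff ℝ ∞ N) (hN0 : N 0 = 0) :
    ∃ Y Z : ℝ × ℝ → ℝ, ContDiff ℝ ∞ Y ∧ ContDiff ℝ ∞ Z ∧ 0 < Dy Y 0 ∧
      ∀ᶠ p in 𝓝 (0 : ℝ × ℝ), 0 < p.1 → FoldSystem B N Y Z p := by
  have hνre : ContDiff ℝ ∞ fun p : ℝ × ℝ => p.1 * B (p.1 ^ 2, p.2) := by fun_prop
  have hνim : ContDiff ℝ ∞ fun p : ℝ × ℝ => N (p.1 ^ 2, p.2) := by fun_prop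
  obtain ⟨w, hw, hbeltrami, hpos⟩ := exists_beltrami
    (ν := fun p => (p.1 * B (p.1 ^ 2, p.2) : ℝ) + Complex.I * (N (p.1 ^ 2, p.2) : ℝ))
    ((Complex.ofRealCLM.contDiff.comp hνre).add
      (contDiff_const.mul (Complex.ofRealCLM.contDiff.comp hνim)))
    (by simp [Prod.mk_zero_zero, hN0])
  obtain ⟨P₀, P₁, hP₀, hP₁, hre⟩ := exists_eq_add_mul_comp_sq (Complex.reCLM.contDiff.comp hw)
  obtain ⟨R₀, R₁, hR₀, hR₁, him⟩ := exists_eq_add_mul_comp_sq (Complex.imCLM.contDiff.comp hw)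
  refine ⟨P₀, R₁, hP₀, hR₁, ?_, foldSystem_of_beltrami hw hbeltrami hP₀ hP₁ hR₀ hR₁ hre him⟩
  have hDy : (Dy w 0).re = Dy P₀ 0 := by
    simpa [Dy_eq_of_hasFDerivAt (hasFDerivAt_re hw 0), Prod.mk_zero_zero] using
      (eventually_partials_of_eq_add_mul_comp_sq hP₀ hP₁
        (g := fun p => (w p).re) hre).self_of_nhds.2
  rwa [← hDy]

lemma Dx_eq_Dy_of_comp_add {φ : ℝ → ℝ} (hφ : ContDiff ℝ ∞ φ) (p : ℝ × ℝ) :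
    Dx (fun q : ℝ × ℝ => φ (q.2 + q.1)) p = Dy (fun q : ℝ × ℝ => φ (q.2 + q.1)) p := by
  have hφ' : HasDerivAt φ (deriv φ (p.2 + p.1)) (p.2 + p.1) :=
    (hφ.differentiable (by simp)).differentiableAt.hasDerivAt
  have hderiv : HasFDerivAt (fun q : ℝ × ℝ => φ (q.2 + q.1))
      (dxdy (deriv φ (p.2 + p.1)) (deriv φ (p.2 + p.1))) p :=
    (hφ'.comp_hasFDerivAt p (hasFDerivAt_snd.add hasFDerivAt_fst)).congr_fderiv (by ext <;> simp)
  rw [Dx_eq_of_hasFDerivAt hderiv, Dy_eq_of_hasFDerivAt hderiv]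

/-- For `B = N = 0` and `r < 0` the fold `r = -s²` turns the system into the transport equation
`∂g/∂s = ∂g/∂y`, solved by `g = φ(y + s)`. -/
lemma exists_foldSystem_zero_of_fst_neg {φ : ℝ → ℝ} (hφ : ContDiff ℝ ∞ φ) :
    ∃ Y Z : ℝ × ℝ → ℝ, ContDiff ℝ ∞ Y ∧ ContDiff ℝ ∞ Z ∧ (∀ᶠ y in 𝓝 (0 : ℝ), Y (0, y) = φ y) ∧
      ∀ᶠ p in 𝓝 (0 : ℝ × ℝ), p.1 < 0 → FoldSystem (fun _ => 0) (fun _ => 0) Y Z p := by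
  obtain ⟨G₀, G₁, hG₀, hG₁, hfold⟩ :=
    exists_eq_add_mul_comp_sq (g := fun p : ℝ × ℝ => φ (p.2 + p.1)) (by fun_prop)
  refine ⟨fun p => G₀ (-p.1, p.2), fun p => G₁ (-p.1, p.2), by fun_prop, by fun_prop, ?_, ?_⟩
  · filter_upwards [((Continuous.prodMk_right (0 : ℝ)).tendsto' 0 0 rfl).eventually hfold] with y hy
    simpa using hy.symm
  have hpulled := (eventually_partials_of_eq_add_mul_comp_sq hG₀ hG₁ hfold).mono fun q hq =>
    hq.1.symm.trans ((Dx_eq_Dy_of_comp_add hφ q).trans hq.2)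
  have hroot (ε : ℝ) : Tendsto (fun p : ℝ × ℝ => (ε * √(-p.1), p.2)) (𝓝 0) (𝓝 0) :=
    Continuous.tendsto' (by fun_prop) 0 0 (by simp)
  filter_upwards [(hroot 1).eventually hpulled, (hroot (-1)).eventually hpulled]
    with p hplus hminus hp
  have hsqrt_pos : 0 < √(-p.1) := Real.sqrt_pos.mpr (by linarith)
  have hsq : √(-p.1) ^ 2 = -p.1 := Real.sq_sqrt (by linarith)
  have hflip : HasDerivAt (fun x : ℝ => -x) (-1) p.1 := hasDerivAt_neg p.1
  simp only [one_mul, neg_mul, neg_sq, hsq] at hplus hminus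
  simp only [FoldSystem, Dx_eq_of_hasFDerivAt (hasFDerivAt_comp_fst hG₀ hflip),
    Dy_eq_of_hasFDerivAt (hasFDerivAt_comp_fst hG₀ hflip),
    Dx_eq_of_hasFDerivAt (hasFDerivAt_comp_fst hG₁ hflip),
    Dy_eq_of_hasFDerivAt (hasFDerivAt_comp_fst hG₁ hflip), neg_one_smul]
  refine ⟨mul_left_cancel₀ (mul_pos two_pos hsqrt_pos).ne' ?_, ?_⟩
  · linear_combination hminus - hplus
  · linear_combination (1 / 2) * hplus + (1 / 2) * hminus

end Elliptic

section AxisRecursion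

variable {B N Y Z : ℝ × ℝ → ℝ}

lemma iterate_Dx_fst_mul_Dx {f : ℝ × ℝ → ℝ} (hf : ContDiff ℝ ∞ f) (j : ℕ) :
    Dx^[j] (fun p => p.1 * Dx f p) = fun p => p.1 * (Dx^[j + 1] f) p + j * (Dx^[j] f) p := by
  induction j with
  | zero => simp
  | succ n ih =>
    ext ⟨x, y⟩
    have hsucc := contDiff_iterate_Dx hf (n + 1)
    have hn := contDiff_iterate_Dx hf n
    have hderiv := ((hasDerivAt_id x).mul (hasDerivAt_Dx hsucc x y)).add
      ((hasDerivAt_Dx hn x y).const_mul (n : ℝ))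
    rw [Function.iterate_succ_apply', ih]
    refine ((hasDerivAt_Dx (by fun_prop) x y).unique hderiv).trans ?_
    simp only [id_eq, Function.iterate_succ_apply']
    push_cast
    ring

lemma iterate_Dx_const_mul {f : ℝ × ℝ → ℝ} (hf : ContDiff ℝ ∞ f) (c : ℝ) (j : ℕ) :
    Dx^[j] (fun p => c * f p) = fun p => c * (Dx^[j] f) p :=
  iterate_Dx_snd_smul (χ := fun _ => c) contDiff_const hf j

lemma iterate_Dx_eq_zero_of_mem_closure {P : ℝ × ℝ → ℝ} (hP : ContDiff ℝ ∞ P) {S : Set (ℝ × ℝ)}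
    (hS : IsOpen S) {q : ℝ × ℝ} (hq : q ∈ closure S) (h : ∀ᶠ p in 𝓝 q, p ∈ S → P p = 0) (j : ℕ) :
    (Dx^[j] P) q = 0 := by
  induction j generalizing P with
  | zero =>
    have := mem_closure_iff_nhdsWithin_neBot.1 hq
    refine tendsto_nhds_unique_of_eventuallyEq
      (hP.continuous.continuousAt.tendsto.mono_left nhdsWithin_le_nhds)
      (tendsto_const_nhds (x := (0 : ℝ)) (f := 𝓝[S] q)) ?_
    filter_upwards [nhdsWithin_le_nhds h, self_mem_nhdsWithin] with p hp hpS using hp hpS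
  | succ _ ih =>
    refine ih (contDiff_Dx hP) ?_
    filter_upwards [h.eventually_nhds] with p hp hpS
    have hzero : P =ᶠ[𝓝 p] fun _ => 0 := by
      filter_upwards [hp, hS.mem_nhds hpS] with z hz hzS using hz hzS
    rw [Dx_congr hzero]
    simp [Dx]

/-- The recursion that a one-sided solution of a fold system with flat coefficients imposes on its
`x`-jet at `(0, y)`; it determines the whole jet along the axis from `Y(0, ·)`. -/
def AxisRecursion (Y Z : ℝ × ℝ → ℝ) (y : ℝ) : Prop :=
  ∀ j : ℕ, 2 * (Dx^[j + 1] Y) (0, y) + Dy (Dx^[j] Z) (0, y) = 0 ∧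
    (1 + 2 * j) * (Dx^[j] Z) (0, y) = Dy (Dx^[j] Y) (0, y)

lemma axisRecursion_of_foldSystem (hB : VanishesLeft B) (hN : VanishesLeft N)
    (hY : ContDiff ℝ ∞ Y) (hZ : ContDiff ℝ ∞ Z) {S : Set (ℝ × ℝ)} (hS : IsOpen S) {y : ℝ}
    (hy : (0, y) ∈ closure S) (h : ∀ᶠ p in 𝓝 ((0 : ℝ), y), p ∈ S → FoldSystem B N Y Z p) :
    AxisRecursion Y Z y := by
  intro j
  have hV₁ : VanishesLeft fun p => -Dy Y p • B p + Dy Z p • N p :=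
    (hB.smul (by fun_prop)).add (hN.smul (by fun_prop))
  have hV₂ : VanishesLeft fun p => -Dy Y p • N p + (-p.1 * Dy Z p) • B p :=
    (hN.smul (by fun_prop)).add (hB.smul (by fun_prop))
  have hV₁s := hV₁.contDiff
  have hV₂s := hV₂.contDiff
  have hfirst := iterate_Dx_eq_zero_of_mem_closure
    (P := fun p => 2 * Dx Y p + Dy Z p + (-Dy Y p • B p + Dy Z p • N p)) (by fun_prop) hS hy
    (h.mono fun p hp hpS => by simp only [smul_eq_mul]; linarith [(hp hpS).1]) j
  have hsecond := iterate_Dx_eq_zero_of_mem_closure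
    (P := fun p => Z p + 2 * (p.1 * Dx Z p) + -1 * Dy Y p +
      (-Dy Y p • N p + (-p.1 * Dy Z p) • B p)) (by fun_prop) hS hy
    (h.mono fun p hp hpS => by simp only [smul_eq_mul]; linarith [(hp hpS).2]) j
  rw [iterate_Dx_add (by fun_prop) hV₁s, iterate_Dx_add (by fun_prop) (by fun_prop),
    iterate_Dx_const_mul (by fun_prop), iterate_Dx_Dy hZ] at hfirst
  rw [iterate_Dx_add (by fun_prop) hV₂s, iterate_Dx_add (by fun_prop) (by fun_prop),
    iterate_Dx_add hZ (by fun_prop), iterate_Dx_const_mul (by fun_prop),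
    iterate_Dx_const_mul (by fun_prop), iterate_Dx_fst_mul_Dx hZ, iterate_Dx_Dy hY] at hsecond
  simp only [(hV₁.iterate_dx j).eq_zero (0, y) le_rfl, ← Function.iterate_succ_apply] at hfirst
  simp only [(hV₂.iterate_dx j).eq_zero (0, y) le_rfl] at hsecond
  exact ⟨by linarith, by linarith⟩

lemma iterate_Dx_eq_of_axisRecursion {a₀ a₁ c₀ c₁ : ℝ × ℝ → ℝ} (ha₀ : ContDiff ℝ ∞ a₀)
    (ha₁ : ContDiff ℝ ∞ a₁) (hc₀ : ContDiff ℝ ∞ c₀) (hc₁ : ContDiff ℝ ∞ c₁) {U : Set ℝ}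
    (hU : IsOpen U) (haxis : ∀ y ∈ U, a₀ (0, y) = c₀ (0, y))
    (ha : ∀ y ∈ U, AxisRecursion a₀ a₁ y) (hc : ∀ y ∈ U, AxisRecursion c₀ c₁ y) (j : ℕ) :
    ∀ y ∈ U, (Dx^[j] a₀) (0, y) = (Dx^[j] c₀) (0, y) ∧
      (Dx^[j] a₁) (0, y) = (Dx^[j] c₁) (0, y) := by
  have hsecond (j : ℕ) (h : ∀ y ∈ U, (Dx^[j] a₀) (0, y) = (Dx^[j] c₀) (0, y)) (y : ℝ) (hy : y ∈ U) :
      (Dx^[j] a₁) (0, y) = (Dx^[j] c₁) (0, y) := by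
    have hDy := Dy_eq_of_eventually_axis_eq (contDiff_iterate_Dx ha₀ j) (contDiff_iterate_Dx hc₀ j)
      (mem_of_superset (hU.mem_nhds hy) h)
    exact mul_left_cancel₀ (show (1 + 2 * j : ℝ) ≠ 0 by positivity)
      ((ha y hy j).2.trans (hDy.trans (hc y hy j).2.symm))
  have hfirst : ∀ y ∈ U, (Dx^[j] a₀) (0, y) = (Dx^[j] c₀) (0, y) := by
    induction j with
    | zero => exact haxis
    | succ n ih =>
      intro y hy
      have hDy := Dy_eq_of_eventually_axis_eq (contDiff_iterate_Dx ha₁ n)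
        (contDiff_iterate_Dx hc₁ n) (mem_of_superset (hU.mem_nhds hy) (hsecond n ih))
      linarith [(ha y hy n).1, (hc y hy n).1]
  exact fun y hy => ⟨hfirst y hy, hsecond j hfirst y hy⟩

lemma eventually_iterate_Dx_eq_of_foldSystem {a₀ a₁ c₀ c₁ : ℝ × ℝ → ℝ} (hB : VanishesLeft B)
    (hN : VanishesLeft N) (ha₀ : ContDiff ℝ ∞ a₀) (ha₁ : ContDiff ℝ ∞ a₁) (hc₀ : ContDiff ℝ ∞ c₀)
    (hc₁ : ContDiff ℝ ∞ c₁) (haxis : ∀ᶠ y in 𝓝 (0 : ℝ), a₀ (0, y) = c₀ (0, y))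
    (ha : ∀ᶠ p in 𝓝 (0 : ℝ × ℝ), 0 < p.1 → FoldSystem B N a₀ a₁ p)
    (hc : ∀ᶠ p in 𝓝 (0 : ℝ × ℝ), p.1 < 0 → FoldSystem (fun _ => 0) (fun _ => 0) c₀ c₁ p) :
    ∀ᶠ y in 𝓝 (0 : ℝ), ∀ j, (Dx^[j] a₀) (0, y) = (Dx^[j] c₀) (0, y) ∧
      (Dx^[j] a₁) (0, y) = (Dx^[j] c₁) (0, y) := by
  have hzero : VanishesLeft fun _ : ℝ × ℝ => (0 : ℝ) := ⟨contDiff_const, fun _ _ => rfl⟩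
  have hline : Tendsto (fun y : ℝ => ((0 : ℝ), y)) (𝓝 0) (𝓝 0) :=
    (Continuous.prodMk_right (0 : ℝ)).tendsto' 0 0 rfl
  have hright (y : ℝ) : ((0 : ℝ), y) ∈ closure (Ioi (0 : ℝ) ×ˢ univ) := by
    simp [closure_prod_eq]
  have hleft (y : ℝ) : ((0 : ℝ), y) ∈ closure (Iio (0 : ℝ) ×ˢ univ) := by
    simp [closure_prod_eq]
  obtain ⟨U, hgood, hU, hU0⟩ := eventually_nhds_iff.1 (haxis.and
    ((hline.eventually ha.eventually_nhds).and (hline.eventually hc.eventually_nhds)))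
  filter_upwards [hU.mem_nhds hU0] with y hy j
  refine iterate_Dx_eq_of_axisRecursion ha₀ ha₁ hc₀ hc₁ hU (fun z hz => (hgood z hz).1)
    (fun z hz => ?_) (fun z hz => ?_) j y hy
  · exact axisRecursion_of_foldSystem hB hN ha₀ ha₁ (isOpen_Ioi.prod isOpen_univ) (hright z)
      ((hgood z hz).2.1.mono fun p hp hpS => hp hpS.1)
  · exact axisRecursion_of_foldSystem hzero hzero hc₀ hc₁ (isOpen_Iio.prod isOpen_univ) (hleft z)
      ((hgood z hz).2.2.mono fun p hp hpS => hp hpS.1)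

end AxisRecursion

section GlobalNormalization

variable {B N b n m : ℝ × ℝ → ℝ}

lemma eventually_foldSystem_of_fst_ne_zero {Y Z : ℝ × ℝ → ℝ} (hB : ContDiff ℝ ∞ B)
    (hN : ContDiff ℝ ∞ N) (hY : ContDiff ℝ ∞ Y) (hZ : ContDiff ℝ ∞ Z)
    (hpos : ∀ᶠ p in 𝓝 (0 : ℝ × ℝ), 0 < p.1 → FoldSystem B N Y Z p)
    (hneg : ∀ᶠ p in 𝓝 (0 : ℝ × ℝ), p.1 < 0 → FoldSystem B N Y Z p) :
    ∀ᶠ p in 𝓝 (0 : ℝ × ℝ), FoldSystem B N Y Z p := by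
  have hfirst := eventually_eq_of_fst_nonpos (A := fun p => 2 * Dx Y p)
    (B := fun p => B p * Dy Y p - (1 + N p) * Dy Z p)
    (ContDiff.continuous (𝕜 := ℝ) (n := ∞) (by fun_prop))
    (ContDiff.continuous (𝕜 := ℝ) (n := ∞) (by fun_prop)) (hneg.mono fun p h hp => (h hp).1)
  have hsecond := eventually_eq_of_fst_nonpos (A := fun p => Z p + 2 * p.1 * Dx Z p)
    (B := fun p => (1 + N p) * Dy Y p + p.1 * B p * Dy Z p)
    (ContDiff.continuous (𝕜 := ℝ) (n := ∞) (by fun_prop))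
    (ContDiff.continuous (𝕜 := ℝ) (n := ∞) (by fun_prop)) (hneg.mono fun p h hp => (h hp).2)
  filter_upwards [hpos, hfirst, hsecond] with p hp h₁ h₂
  rcases lt_or_ge 0 p.1 with hx | hx
  · exact hp hx
  · exact ⟨h₁ hx, h₂ hx⟩

/-- The solutions on the two sides of the axis obey the same axis recursion, so they glue smoothly
as soon as the left one is started from the boundary values of the right one. -/
theorem exists_foldSystem (hB : VanishesLeft B) (hN : VanishesLeft N) :
    ∃ Y Z : ℝ × ℝ → ℝ, ContDiff ℝ ∞ Y ∧ ContDiff ℝ ∞ Z ∧ 0 < Dy Y 0 ∧ 0 < Z 0 ∧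
      ∀ᶠ p in 𝓝 (0 : ℝ × ℝ), FoldSystem B N Y Z p := by
  have hN0 : N 0 = 0 := hN.eq_zero 0 le_rfl
  obtain ⟨a₀, a₁, ha₀, ha₁, hDy, ha⟩ := exists_foldSystem_of_fst_pos hB.contDiff hN.contDiff hN0
  obtain ⟨c₀, c₁, hc₀, hc₁, haxis, hc⟩ :=
    exists_foldSystem_zero_of_fst_neg (φ := fun y => a₀ (0, y)) (by fun_prop)
  have hjets := eventually_iterate_Dx_eq_of_foldSystem hB hN ha₀ ha₁ hc₀ hc₁
    (haxis.mono fun y hy => hy.symm) ha hc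
  obtain ⟨Y, hY, hYglue⟩ :=
    exists_contDiff_eventuallyEq_glue ha₀ hc₀ (hjets.mono fun y hy j => (hy j).1)
  obtain ⟨Z, hZ, hZglue⟩ :=
    exists_contDiff_eventuallyEq_glue ha₁ hc₁ (hjets.mono fun y hy j => (hy j).2)
  have hpos : ∀ᶠ p in 𝓝 (0 : ℝ × ℝ), 0 < p.1 → FoldSystem B N Y Z p := by
    filter_upwards [ha, eventually_eventuallyEq_nhds.2 hYglue,
      eventually_eventuallyEq_nhds.2 hZglue] with p hap hYp hZp hp
    exact (hap hp).congr (hYp.trans (glue_eventuallyEq_of_pos hp))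
      (hZp.trans (glue_eventuallyEq_of_pos hp))
  have hneg : ∀ᶠ p in 𝓝 (0 : ℝ × ℝ), p.1 < 0 → FoldSystem B N Y Z p := by
    filter_upwards [hc, eventually_eventuallyEq_nhds.2 hYglue,
      eventually_eventuallyEq_nhds.2 hZglue] with p hcp hYp hZp hp
    refine FoldSystem.congr ?_ (hYp.trans (glue_eventuallyEq_of_neg hp))
      (hZp.trans (glue_eventuallyEq_of_neg hp))
    rw [FoldSystem, hB.eq_zero p hp.le, hN.eq_zero p hp.le]
    exact hcp hp
  have hsys := eventually_foldSystem_of_fst_ne_zero hB.contDiff hN.contDiff hY hZ hpos hneg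
  have hline : Tendsto (fun y : ℝ => ((0 : ℝ), y)) (𝓝 0) (𝓝 0) :=
    (Continuous.prodMk_right (0 : ℝ)).tendsto' 0 0 rfl
  have hDyY : Dy Y 0 = Dy a₀ 0 := by
    refine Dy_eq_of_eventually_axis_eq hY ha₀ ?_
    filter_upwards [haxis, hline.eventually hYglue] with y hy hYy
    rw [hYy, glue_of_nonpos le_rfl, hy]
  have hZ0 : Z 0 = Dy Y 0 := by simpa [hN0] using hsys.self_of_nhds.2
  exact ⟨Y, Z, hY, hZ, hDyY ▸ hDy, hZ0 ▸ hDyY ▸ hDy, hsys⟩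

lemma exists_normalizingSystem_of_vanishesLeft (hb : VanishesLeft b) (hn : VanishesLeft n) :
    ∃ Y Z : ℝ × ℝ → ℝ, ContDiff ℝ ∞ Y ∧ ContDiff ℝ ∞ Z ∧ Y 0 = 0 ∧ Dy Y 0 ≠ 0 ∧ 0 < Z 0 ∧
      ∀ᶠ p in 𝓝 (0 : ℝ × ℝ), NormalizingSystem b (fun q => 1 + n q) Y Z p := by
  have h49 : (0 : ℝ) < 4 / 9 := by norm_num
  obtain ⟨E, hE, hbE⟩ := hb.exists_eq_pow_smul_comp_pow h49 2 (n := 3) (by decide)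
  obtain ⟨N, hN, hnN⟩ := hn.exists_eq_pow_smul_comp_pow h49 0 (n := 3) (by decide)
  obtain ⟨Y, Z, hY, hZ, hDyY, hZ0, hsys⟩ :=
    exists_foldSystem (hE.smul (contDiff_const (c := (3 / 2 : ℝ)))) hN
  have hcube (x : ℝ) : HasDerivAt (fun x : ℝ => 4 / 9 * x ^ 3) (4 / 3 * x ^ 2) x :=
    ((hasDerivAt_pow 3 x).const_mul (4 / 9)).congr_deriv (by norm_num; ring)
  have hderivY (p : ℝ × ℝ) := (hasFDerivAt_comp_fst hY (hcube p.1)).sub_const (Y 0)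
  have hderivZ (p : ℝ × ℝ) := hasFDerivAt_comp_fst hZ (hcube p.1)
  refine ⟨fun p => Y (4 / 9 * p.1 ^ 3, p.2) - Y 0, fun p => Z (4 / 9 * p.1 ^ 3, p.2),
    by fun_prop, by fun_prop, by simp [Prod.mk_zero_zero], ?_,
    by simpa [Prod.mk_zero_zero] using hZ0, ?_⟩
  · rw [Dy_eq_of_hasFDerivAt (hderivY 0)]
    simpa [Prod.mk_zero_zero] using hDyY.ne'
  have hsubst : Tendsto (fun p : ℝ × ℝ => (4 / 9 * p.1 ^ 3, p.2)) (𝓝 0) (𝓝 0) :=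
    Continuous.tendsto' (by fun_prop) 0 0 (by simp)
  filter_upwards [hsubst.eventually hsys] with p hp
  simp only [FoldSystem, smul_eq_mul] at hp
  simp only [NormalizingSystem, hbE, hnN, Dx_eq_of_hasFDerivAt (hderivY p),
    Dy_eq_of_hasFDerivAt (hderivY p), Dx_eq_of_hasFDerivAt (hderivZ p),
    Dy_eq_of_hasFDerivAt (hderivZ p), smul_eq_mul, pow_zero, one_mul]
  exact ⟨by linear_combination 2 / 3 * p.1 ^ 2 * hp.1, by linear_combination hp.2⟩

lemma exists_vanishesLeft_eventuallyEq {D : ℝ × ℝ → ℝ} (hD : ContDiff ℝ ∞ D)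
    (h : ∀ᶠ p in 𝓝 (0 : ℝ × ℝ), p.1 < 0 → D p = 0) :
    ∃ E : ℝ × ℝ → ℝ, VanishesLeft E ∧ E =ᶠ[𝓝 0] D := by
  obtain ⟨δ, hδ, hball⟩ := Metric.eventually_nhds_iff_ball.1
    (eventually_eq_of_fst_nonpos hD.continuous continuous_const h)
  let χ : ContDiffBump (0 : ℝ × ℝ) := ⟨δ / 2, δ, by positivity, by linarith⟩
  refine ⟨fun p => χ p * D p, ⟨χ.contDiff.mul hD, fun p hp => ?_⟩, ?_⟩
  · by_cases hpδ : p ∈ Metric.ball (0 : ℝ × ℝ) δ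
    · rw [hball p hpδ hp, mul_zero]
    · rw [χ.zero_of_le_dist (not_lt.mp hpδ), zero_mul]
  · filter_upwards [χ.eventuallyEq_one] with p hp
    rw [hp, Pi.one_apply, one_mul]

theorem germEquiv_standard_of_fst_neg (hb : ContDiff ℝ ∞ b) (hm : ContDiff ℝ ∞ m)
    (h : ∀ᶠ p in 𝓝 (0 : ℝ × ℝ), p.1 < 0 → b p = 0 ∧ m p = 1) :
    GermEquiv (reducedForm b m) (reducedForm (fun _ => 0) (fun _ => 1)) := by
  obtain ⟨b', hb', hbb'⟩ := exists_vanishesLeft_eventuallyEq hb (h.mono fun p hp hx => (hp hx).1)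
  obtain ⟨n, hn, hmn⟩ := exists_vanishesLeft_eventuallyEq (D := fun p => m p - 1) (by fun_prop)
    (h.mono fun p hp hx => sub_eq_zero.mpr (hp hx).2)
  obtain ⟨Y, Z, hY, hZ, hY0, hDyY, hZ0, hsys⟩ := exists_normalizingSystem_of_vanishesLeft hb' hn
  obtain ⟨u, hu, hu0, huZ⟩ := exists_cube_root hZ hZ0
  refine ⟨normalizingMap u Y, fun p => Dy Y p ^ 2 + p.1 * (2 / 3 * p.1 * Dy Z p) ^ 2,
    isLocalDiffeo_normalizingMap hu hY hu0.ne' hY0 hDyY, by fun_prop, by simpa using hDyY, ?_⟩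
  filter_upwards [hsys, hbb', hmn, huZ.eventually_nhds] with p hp hbp hmp huZp
  refine pullsBackAt_normalizingMap hu hY huZp ?_
  simpa only [NormalizingSystem, hbp, hmp, add_sub_cancel] using hp

end GlobalNormalization

/-! ### Jets at the origin -/

lemma eq_zero_of_const_mul_pow_isLittleO {c : ℝ} {k : ℕ}
    (h : (fun t : ℝ => c * t ^ k) =o[𝓝 0] (fun t => t ^ k)) : c = 0 := by
  by_contra hc
  have hne : ∀ᶠ t : ℝ in 𝓝[≠] 0, t ^ k ≠ 0 :=
    eventually_mem_nhdsWithin.mono fun _ ht => pow_ne_zero k ht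
  exact isLittleO_irrefl (hne.frequently.filter_mono nhdsWithin_le_nhds)
    ((isLittleO_const_mul_left_iff hc).1 h)

lemma iteratedDeriv_eq_zero_of_isLittleO {φ : ℝ → ℝ} {n : ℕ} (hφ : ContDiff ℝ n φ)
    (h : φ =o[𝓝 0] (fun t => t ^ n)) {k : ℕ} (hk : k ≤ n) : iteratedDeriv k φ 0 = 0 := by
  induction k using Nat.strong_induction_on with
  | _ k ih =>
    have hpow : (fun t : ℝ => t ^ n) =O[𝓝 0] (fun t => t ^ k) :=
      hk.eq_or_lt.elim (fun hkn => hkn ▸ isBigO_refl _ _) fun hkn => (isLittleO_pow_pow hkn).isBigO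
    have htaylor := taylor_isLittleO_univ (x₀ := 0) (hφ.of_le (m := k) (by exact_mod_cast hk))
    have hsum (t : ℝ) :
        taylorWithinEval φ k univ 0 t = (k.factorial : ℝ)⁻¹ * iteratedDeriv k φ 0 * t ^ k := by
      rw [taylor_within_apply, Finset.sum_range_succ, Finset.sum_eq_zero fun j hj => ?_]
      · simp [iteratedDerivWithin_univ]
        ring
      · have hj := Finset.mem_range.1 hj
        simp [iteratedDerivWithin_univ, ih j hj (hj.le.trans hk)]
    simp only [hsum, sub_zero] at htaylor
    have hlead := (h.trans_isBigO hpow).sub htaylor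
    simp only [sub_sub_cancel] at hlead
    simpa [k.factorial_ne_zero] using eq_zero_of_const_mul_pow_isLittleO hlead

lemma isLittleO_line_of_hasJetAt0 {f P : ℝ × ℝ → ℝ} {n : ℕ} (h : HasJetAt0 f P n) (v : ℝ × ℝ) :
    (fun t : ℝ => f (t • v) - P (t • v)) =o[𝓝 0] (fun t => t ^ n) := by
  have hline : Tendsto (fun t : ℝ => t • v) (𝓝 0) (𝓝 0) := by
    simpa using (by fun_prop : Continuous fun t : ℝ => t • v).tendsto 0
  refine (h.comp_tendsto hline).trans_isBigO
    (.of_bound (‖v‖ ^ n) (.of_forall fun t => ?_))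
  simp [norm_smul, mul_pow, mul_comm]

/-- The derivative of `f` in the direction of `v`, as an operator on functions. -/
def dirDeriv (v : ℝ × ℝ) (f : ℝ × ℝ → ℝ) (p : ℝ × ℝ) : ℝ := fderiv ℝ f p v

lemma contDiff_dirDeriv {f : ℝ × ℝ → ℝ} (hf : ContDiff ℝ ∞ f) (v : ℝ × ℝ) :
    ContDiff ℝ ∞ (dirDeriv v f) :=
  (hf.fderiv_right (by simp)).clm_apply contDiff_const

lemma iteratedDeriv_line_eq_iterate_dirDeriv {f : ℝ × ℝ → ℝ} (hf : ContDiff ℝ ∞ f) (v : ℝ × ℝ)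
    (k : ℕ) : iteratedDeriv k (fun t : ℝ => f (t • v)) = fun t => (dirDeriv v)^[k] f (t • v) := by
  induction k generalizing f with
  | zero => simp
  | succ k ih =>
    have hderiv : deriv (fun t : ℝ => f (t • v)) = fun t => dirDeriv v f (t • v) := by
      funext t
      have hline : HasDerivAt (fun t : ℝ => t • v) v t := by
        simpa using (hasDerivAt_id t).smul_const v
      exact ((hf.differentiable (by simp) _).hasFDerivAt.comp_hasDerivAt t hline).deriv
    rw [iteratedDeriv_succ', hderiv, ih (contDiff_dirDeriv hf v), Function.iterate_succ_apply]

lemma iterate_dirDeriv_zero_eq_of_hasJetAt0 {f P : ℝ × ℝ → ℝ} {n k : ℕ} (hf : ContDiff ℝ ∞ f)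
    (hP : ContDiff ℝ ∞ P) (h : HasJetAt0 f P n) (hk : k ≤ n) (v : ℝ × ℝ) :
    (dirDeriv v)^[k] f 0 = iteratedDeriv k (fun t : ℝ => P (t • v)) 0 := by
  have hline : ContDiff ℝ ∞ (fun t : ℝ => t • v) := by fun_prop
  have hfv := (hf.comp hline).of_le (m := n) (by exact_mod_cast le_top)
  have hPv := (hP.comp hline).of_le (m := n) (by exact_mod_cast le_top)
  have hdiff := iteratedDeriv_eq_zero_of_isLittleO (hfv.sub hPv)
    (isLittleO_line_of_hasJetAt0 h v) hk
  have hkn : (k : WithTop ℕ∞) ≤ n := by exact_mod_cast hk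
  rw [iteratedDeriv_fun_sub (hfv.of_le hkn).contDiffAt (hPv.of_le hkn).contDiffAt,
    sub_eq_zero] at hdiff
  simpa [Function.comp_def, iteratedDeriv_line_eq_iterate_dirDeriv hf] using hdiff

/-! ### Asymptotic equations at an ordinary parabolic point -/

lemma pdx_eq_Dx {f : ℝ × ℝ → ℝ} (hf : ContDiff ℝ ∞ f) : pdx f = Dx f :=
  funext fun p => (hasDerivAt_Dx hf p.1 p.2).deriv

lemma pdy_eq_Dy {f : ℝ × ℝ → ℝ} (hf : ContDiff ℝ ∞ f) : pdy f = Dy f :=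
  funext fun p => (hasDerivAt_Dy hf p.1 p.2).deriv

lemma asymBDE_eq {f : ℝ × ℝ → ℝ} (hf : ContDiff ℝ ∞ f) :
    asymBDE f = BDE (Dy (Dy f)) (Dy (Dx f)) (Dx (Dx f)) := by
  rw [asymBDE, fyy, fxy, fxx, pdx_eq_Dx hf, pdy_eq_Dy hf, pdx_eq_Dx (contDiff_Dx hf),
    pdy_eq_Dy (contDiff_Dx hf), pdy_eq_Dy (contDiff_Dy hf)]

lemma dirDeriv_dirDeriv_one_one {f : ℝ × ℝ → ℝ} (hf : ContDiff ℝ ∞ f) (p : ℝ × ℝ) :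
    dirDeriv (1, 1) (dirDeriv (1, 1) f) p =
      Dx (Dx f) p + 2 * Dy (Dx f) p + Dy (Dy f) p := by
  have hdir : dirDeriv (1, 1) f = Dx f + Dy f := by
    funext q
    simp [dirDeriv, fderiv_apply_eq]
  have hsum := (hasFDerivAt_dxdy (contDiff_Dx hf) p).add (hasFDerivAt_dxdy (contDiff_Dy hf) p)
  rw [hdir, dirDeriv, hsum.fderiv]
  simp [Dx_Dy_comm hf]
  ring

lemma partials_zero_of_hasJetAt0 {f : ℝ × ℝ → ℝ} (hf : ContDiff ℝ ∞ f)
    (hjet : HasJetAt0 f (fun p => p.2 ^ 2 + p.1 ^ 3) 3) :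
    Dy (Dy f) 0 = 2 ∧ Dy (Dx f) 0 = 0 ∧ Dx (Dx f) 0 = 0 ∧ Dx (Dx (Dx f)) 0 = 6 := by
  have hdir {k : ℕ} (hk : k ≤ 3) (v : ℝ × ℝ) :=
    iterate_dirDeriv_zero_eq_of_hasJetAt0 hf (by fun_prop) hjet hk v
  have hxx : Dx (Dx f) 0 = 0 := (hdir (k := 2) (by norm_num) (1, 0)).trans (by simp)
  have hxxx : Dx (Dx (Dx f)) 0 = 6 := (hdir (k := 3) le_rfl (1, 0)).trans (by simp)
  have hyy : Dy (Dy f) 0 = 2 := (hdir (k := 2) (by norm_num) (0, 1)).trans (by simp)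
  have hdiag : Dx (Dx f) 0 + 2 * Dy (Dx f) 0 + Dy (Dy f) 0 = 2 := by
    rw [← dirDeriv_dirDeriv_one_one hf]
    exact (hdir (k := 2) (by norm_num) (1, 1)).trans <| by
      simp only [Prod.smul_mk, smul_eq_mul, mul_one]
      rw [iteratedDeriv_fun_add (by fun_prop) (by fun_prop)]
      simp
  exact ⟨hyy, by linarith, hxx, hxxx⟩

theorem germEquiv_BDE_one_zero_fst {a b c : ℝ × ℝ → ℝ} (ha : ContDiff ℝ ∞ a)
    (hb : ContDiff ℝ ∞ b) (hc : ContDiff ℝ ∞ c) (ha0 : 0 < a 0) (hb0 : b 0 = 0) (hc0 : c 0 = 0)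
    (hcx : Dx c 0 ≠ 0) :
    GermEquiv (BDE a b c) (BDE (fun _ => 1) (fun _ => 0) (fun p => p.1)) := by
  set q : ℝ × ℝ → ℝ := fun p => a p * c p - b p ^ 2
  have hq : ContDiff ℝ ∞ q := by fun_prop
  have hqx : Dx q 0 = a 0 * Dx c 0 := by
    have hline := ((hasDerivAt_Dx ha 0 0).mul (hasDerivAt_Dx hc 0 0)).sub
      ((hasDerivAt_Dx hb 0 0).pow 2)
    refine ((hasDerivAt_Dx hq 0 0).unique hline).trans ?_
    simp [← Prod.zero_eq_mk, hb0, hc0]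
  have hqx0 : Dx q 0 ≠ 0 := hqx ▸ mul_ne_zero ha0.ne' hcx
  let h (p : ℝ × ℝ) : ℝ × ℝ := (q p, p.2)
  have hderiv : HasFDerivAt h ((dxdy (Dx q 0) (Dy q 0)).prod (dxdy 0 1)) 0 :=
    (hasFDerivAt_dxdy hq 0).prodMk (hasFDerivAt_snd.congr_fderiv (by ext <;> simp))
  have hh : IsLocalDiffeo h :=
    { contDiff := by fun_prop
      map_zero := by simp [h, q, hb0, hc0]
      det_ne_zero := by rw [hderiv.fderiv, det_dxdy_prod]; simpa using hqx0 }
  have hpos (v : ℝ × ℝ) (hv : v ≠ 0) (hv1 : (fderiv ℝ h 0 v).1 = 0) : 0 < BDE a b c 0 v := by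
    have hv2 : v.2 ≠ 0 := fun hv2 => hv <| Prod.ext
      (by simpa [hderiv.fderiv, hv2, hqx0] using hv1) hv2
    simp only [BDE, hb0, hc0]
    nlinarith [mul_pos ha0 (sq_pos_of_ne_zero hv2)]
  obtain ⟨b₁, m₁, ρ, hb₁, hm₁, hρ, hm₁0, hρ0, hpull⟩ := exists_pullsBackAt_reducedForm ha hb hc
    (contDiff_const (c := 1)) hh one_ne_zero (.of_forall fun p => by simp [h, q]) hpos
  obtain ⟨b₂, m₂, hb₂, hm₂, hequiv, hneg⟩ := exists_germEquiv_standard_of_fst_neg hb₁ hm₁ hm₁0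
  rw [← reducedForm_zero_one]
  exact GermEquiv.trans ⟨h, ρ, hh, hρ, hρ0, hpull⟩
    (hequiv.trans (germEquiv_standard_of_fst_neg hb₂ hm₂ hneg))

end Cibrario

/-- for smooth `f` with `j³f(0) = y² + x³`, the asymptotic BDE of
`f` is smoothly equivalent at `0` to `dy² + x dx² = 0`. -/
theorem stmt1 (f : ℝ × ℝ → ℝ) (hf : ContDiff ℝ (⊤ : ℕ∞) f)
    (hjet : HasJetAt0 f (fun p => p.2 ^ 2 + p.1 ^ 3) 3) :
    SmoothEquivAt0 (asymBDE f) (BDE (fun _ => 1) (fun _ => 0) (fun p => p.1)) := by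
  obtain ⟨hyy, hxy, hxx, hxxx⟩ := Cibrario.partials_zero_of_hasJetAt0 hf hjet
  rw [Cibrario.asymBDE_eq hf]
  exact (Cibrario.germEquiv_BDE_one_zero_fst (by fun_prop) (by fun_prop) (by fun_prop)
    (by simp [hyy]) hxy hxx (by simp [hxxx])).smoothEquivAt0
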